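/- arXiv:1608.04183 — 2 statements merged into one kernel-verified Lean document; each statement's English description precedes it below -/
import Mathlib

section
/- Fix an algebraic closure Ω of the field ℚ_2 of 2-adic numbers. The set of ℚ_2-isomorphism classes of primitive extensions E ⊆ Ω of ℚ_2 with [E : ℚ_2] = 4 has exactly four elements. -/
section Q16sec
open IntermediateField Polynomial

set_option linter.unusedSectionVars false

namespace Q16

section generic
variable {K Ω : Type*} [Field K] [Field Ω] [Algebra K Ω] [Algebra.IsAlgebraic K Ω]

/-- Elements of a simple extension of degree `n` are polynomials of degree `< n`. -/
lemma repr_adj {x y : Ω} {n : ℕ} (hx : Module.finrank K K⟮x⟯ = n) (hy : y ∈ K⟮x⟯) :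
    ∃ c : Fin n → K, y = ∑ i, algebraMap K Ω (c i) * x ^ (i : ℕ) := by
  have hi : IsIntegral K x := Algebra.IsIntegral.isIntegral x
  have hd : (adjoin.powerBasis hi).dim = n := by
    rw [← hx, (adjoin.powerBasis hi).finrank]
  subst hd
  refine ⟨fun i => (adjoin.powerBasis hi).basis.repr ⟨y, hy⟩ i, ?_⟩
  have h := (adjoin.powerBasis hi).basis.sum_repr ⟨y, hy⟩
  have h2 := congrArg (algebraMap K⟮x⟯ Ω) h
  rw [map_sum] at h2
  have h3 : algebraMap K⟮x⟯ Ω ⟨y, hy⟩ = y := rfl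
  rw [h3] at h2
  refine h2.symm.trans ?_
  refine Finset.sum_congr rfl fun i _ => ?_
  rw [Algebra.smul_def, map_mul, PowerBasis.basis_eq_pow, map_pow]
  rfl

lemma indep_adj {x : Ω} {n : ℕ} (hx : Module.finrank K K⟮x⟯ = n) (c : Fin n → K)
    (h : ∑ i, algebraMap K Ω (c i) * x ^ (i : ℕ) = 0) : c = 0 := by
  have hi : IsIntegral K x := Algebra.IsIntegral.isIntegral x
  have hd : (adjoin.powerBasis hi).dim = n := by
    rw [← hx, (adjoin.powerBasis hi).finrank]
  subst hd
  have hl := (adjoin.powerBasis hi).basis.linearIndependent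
  rw [Fintype.linearIndependent_iff] at hl
  funext i
  refine hl c ?_ i
  apply (algebraMap K⟮x⟯ Ω).injective
  rw [map_sum, map_zero, ← h]
  refine Finset.sum_congr rfl fun i _ => ?_
  rw [Algebra.smul_def, map_mul, PowerBasis.basis_eq_pow, map_pow]
  rfl

lemma repr2 {x y : Ω} (hx : Module.finrank K K⟮x⟯ = 2) (hy : y ∈ K⟮x⟯) :
    ∃ a b : K, y = algebraMap K Ω a + algebraMap K Ω b * x := by
  obtain ⟨c, hc⟩ := repr_adj hx hy
  exact ⟨c 0, c 1, by simpa [Fin.sum_univ_succ] using hc⟩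

lemma repr3 {x y : Ω} (hx : Module.finrank K K⟮x⟯ = 3) (hy : y ∈ K⟮x⟯) :
    ∃ a b c : K, y = algebraMap K Ω a + algebraMap K Ω b * x + algebraMap K Ω c * x ^ 2 := by
  obtain ⟨c, hc⟩ := repr_adj hx hy
  exact ⟨c 0, c 1, c 2, by simpa [Fin.sum_univ_three] using hc⟩

lemma repr4 {x y : Ω} (hx : Module.finrank K K⟮x⟯ = 4) (hy : y ∈ K⟮x⟯) :
    ∃ a b c d : K, y = algebraMap K Ω a + algebraMap K Ω b * x + algebraMap K Ω c * x ^ 2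
      + algebraMap K Ω d * x ^ 3 := by
  obtain ⟨c, hc⟩ := repr_adj hx hy
  exact ⟨c 0, c 1, c 2, c 3, by simpa [Fin.sum_univ_four] using hc⟩

lemma indep2 {x : Ω} (hx : Module.finrank K K⟮x⟯ = 2) {a b : K}
    (h : algebraMap K Ω a + algebraMap K Ω b * x = 0) : a = 0 ∧ b = 0 := by
  have := indep_adj hx ![a, b] (by simpa [Fin.sum_univ_succ] using h)
  exact ⟨congrFun this 0, congrFun this 1⟩

lemma indep3 {x : Ω} (hx : Module.finrank K K⟮x⟯ = 3) {a b c : K}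
    (h : algebraMap K Ω a + algebraMap K Ω b * x + algebraMap K Ω c * x ^ 2 = 0) :
    a = 0 ∧ b = 0 ∧ c = 0 := by
  have := indep_adj hx ![a, b, c] (by simpa [Fin.sum_univ_three] using h)
  exact ⟨congrFun this 0, congrFun this 1, congrFun this 2⟩

lemma indep4 {x : Ω} (hx : Module.finrank K K⟮x⟯ = 4) {a b c d : K}
    (h : algebraMap K Ω a + algebraMap K Ω b * x + algebraMap K Ω c * x ^ 2
      + algebraMap K Ω d * x ^ 3 = 0) :
    a = 0 ∧ b = 0 ∧ c = 0 ∧ d = 0 := by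
  have := indep_adj hx ![a, b, c, d] (by simpa [Fin.sum_univ_four] using h)
  exact ⟨congrFun this 0, congrFun this 1, congrFun this 2, congrFun this 3⟩

lemma deg_one {x : Ω} (hx : Module.finrank K K⟮x⟯ = 1) : ∃ k : K, x = algebraMap K Ω k := by
  obtain ⟨c, hc⟩ := repr_adj hx (mem_adjoin_simple_self K x)
  exact ⟨c 0, by simpa using hc⟩

lemma finrank_adj_pos (x : Ω) : 0 < Module.finrank K K⟮x⟯ := by
  rw [adjoin.finrank (Algebra.IsIntegral.isIntegral x)]
  exact minpoly.natDegree_pos (Algebra.IsIntegral.isIntegral x)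

lemma finrank_adj_le {x : Ω} {f : K[X]} (hf : f ≠ 0) (h : aeval x f = 0) :
    Module.finrank K K⟮x⟯ ≤ f.natDegree := by
  rw [adjoin.finrank (Algebra.IsIntegral.isIntegral x)]
  exact natDegree_le_of_dvd (minpoly.dvd K x h) hf

lemma finrank_le_two {x : Ω} {a b : K}
    (h : x ^ 2 + algebraMap K Ω a * x + algebraMap K Ω b = 0) : Module.finrank K K⟮x⟯ ≤ 2 := by
  have hd : (X ^ 2 + C a * X + C b : K[X]).natDegree = 2 := by compute_degree!
  rw [← hd]
  refine finrank_adj_le (fun h0 => by simp [h0] at hd) (by simpa using h)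

lemma finrank_le_three {x : Ω} {a b c : K}
    (h : x ^ 3 + algebraMap K Ω a * x ^ 2 + algebraMap K Ω b * x + algebraMap K Ω c = 0) :
    Module.finrank K K⟮x⟯ ≤ 3 := by
  have hd : (X ^ 3 + C a * X ^ 2 + C b * X + C c : K[X]).natDegree = 3 := by compute_degree!
  rw [← hd]
  refine finrank_adj_le (fun h0 => by simp [h0] at hd) (by simpa using h)

lemma finrank_le_four {x : Ω} {a b c d : K}
    (h : x ^ 4 + algebraMap K Ω a * x ^ 3 + algebraMap K Ω b * x ^ 2 + algebraMap K Ω c * x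
      + algebraMap K Ω d = 0) :
    Module.finrank K K⟮x⟯ ≤ 4 := by
  have hd : (X ^ 4 + C a * X ^ 3 + C b * X ^ 2 + C c * X + C d : K[X]).natDegree = 4 := by
    compute_degree!
  rw [← hd]
  refine finrank_adj_le (fun h0 => by simp [h0] at hd) (by simpa using h)

lemma self_mem (x : Ω) : x ∈ K⟮x⟯ := mem_adjoin_simple_self K x

lemma fd_adj (x : Ω) : FiniteDimensional K K⟮x⟯ :=
  adjoin.finiteDimensional (Algebra.IsIntegral.isIntegral x)

lemma adj_le {x y : Ω} (h : y ∈ K⟮x⟯) : K⟮y⟯ ≤ K⟮x⟯ := by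
  rw [adjoin_simple_le_iff]; exact h

lemma finrank_dvd {F E : IntermediateField K Ω} (h : F ≤ E) [FiniteDimensional K E] :
    Module.finrank K F ∣ Module.finrank K E := by
  exact finrank_dvd_of_le_right h

/-- In a cubic field, an element is rational or a generator. -/
lemma sub3 {x y : Ω} (hx : Module.finrank K K⟮x⟯ = 3) (hy : y ∈ K⟮x⟯) :
    (∃ k : K, y = algebraMap K Ω k) ∨ (K⟮y⟯ = K⟮x⟯ ∧ Module.finrank K K⟮y⟯ = 3) := by
  have := fd_adj (K := K) x
  have h := finrank_dvd (adj_le hy)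
  rw [hx] at h
  rcases (Nat.dvd_prime Nat.prime_three).1 h with h | h
  · exact Or.inl (deg_one h)
  · exact Or.inr ⟨eq_of_le_of_finrank_eq (adj_le hy) (by rw [h, hx]), h⟩

lemma cubic_noroot {x : Ω} (hx : Module.finrank K K⟮x⟯ = 3) {a b c : K}
    (h : x ^ 3 + algebraMap K Ω a * x ^ 2 + algebraMap K Ω b * x + algebraMap K Ω c = 0) (k : K) :
    k ^ 3 + a * k ^ 2 + b * k + c ≠ 0 := by
  intro hk
  have hk' := congrArg (algebraMap K Ω) hk
  simp only [map_add, map_mul, map_pow, map_zero] at hk'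
  have h2 : (x - algebraMap K Ω k) * (x ^ 2 + (algebraMap K Ω k + algebraMap K Ω a) * x +
    ((algebraMap K Ω k) ^ 2 + algebraMap K Ω a * algebraMap K Ω k + algebraMap K Ω b)) = 0 := by
    linear_combination h - hk'
  rcases mul_eq_zero.1 h2 with h2 | h2
  · have := indep3 (K := K) (a := -k) (b := 1) (c := 0) hx (by simp; linear_combination h2)
    simp at this
  · have := indep3 (K := K) (a := k ^ 2 + a * k + b) (b := k + a) (c := 1) hx
      (by simp; linear_combination h2)
    simp at this

lemma cubic_deg {x : Ω} {a b c : K}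
    (h : x ^ 3 + algebraMap K Ω a * x ^ 2 + algebraMap K Ω b * x + algebraMap K Ω c = 0)
    (hn : ∀ k : K, k ^ 3 + a * k ^ 2 + b * k + c ≠ 0) : Module.finrank K K⟮x⟯ = 3 := by
  have h1 := finrank_le_three h
  have h2 := finrank_adj_pos (K := K) x
  interval_cases hd : Module.finrank K K⟮x⟯
  · obtain ⟨k, rfl⟩ := deg_one hd
    exfalso
    refine hn k ((algebraMap K Ω).injective ?_)
    simpa using h
  · exfalso
    obtain ⟨u, v, huv⟩ := repr2 (y := x ^ 2) hd (pow_mem (self_mem x) 2)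
    have hh := indep2 (K := K) hd (a := v * u + a * u + c) (b := v ^ 2 + u + a * v + b) (by
      simp only [map_add, map_mul, map_pow]
      linear_combination h - (x + algebraMap K Ω v + algebraMap K Ω a) * huv)
    refine hn (-v - a) ?_
    linear_combination hh.1 - (v+a) * hh.2
  · rfl

/-- A quadratic relation for a root of a depressed quartic gives a root of the resolvent. -/
lemma deg2_resolvent {x : Ω} {p q r : K} (hd : Module.finrank K K⟮x⟯ = 2)
    (h : x ^ 4 + algebraMap K Ω p * x ^ 2 + algebraMap K Ω q * x + algebraMap K Ω r = 0) :
    ∃ k : K, (k ^ 2) ^ 3 + (2 * p) * (k ^ 2) ^ 2 + (p ^ 2 - 4 * r) * k ^ 2 + (-q ^ 2) = 0 := by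
  obtain ⟨u, v, huv⟩ := repr2 (y := x ^ 2) hd (pow_mem (self_mem x) 2)
  have hh := indep2 (K := K) hd (a := u * (v ^ 2 + u) + p * u + r)
    (b := v ^ 3 + 2 * u * v + p * v + q) (by
      simp only [map_add, map_mul, map_pow, map_ofNat]
      linear_combination h - (x ^ 2 + algebraMap K Ω v * x + algebraMap K Ω v ^ 2
        + algebraMap K Ω u + algebraMap K Ω p) * huv)
  refine ⟨v, ?_⟩
  linear_combination (-4 * v ^ 2) * hh.1 + (v ^ 3 + 2 * u * v + p * v - q) * hh.2

lemma quartic_deg {x : Ω} {p q r : K}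
    (h : x ^ 4 + algebraMap K Ω p * x ^ 2 + algebraMap K Ω q * x + algebraMap K Ω r = 0)
    (hn : ∀ k : K, k ^ 4 + p * k ^ 2 + q * k + r ≠ 0)
    (hR : ∀ k : K, k ^ 3 + (2 * p) * k ^ 2 + (p ^ 2 - 4 * r) * k + (-q ^ 2) ≠ 0) :
    Module.finrank K K⟮x⟯ = 4 := by
  have h1 := finrank_le_four (K := K) (x := x) (a := 0) (b := p) (c := q) (d := r) (by simpa using h)
  have h2 := finrank_adj_pos (K := K) x
  interval_cases hd : Module.finrank K K⟮x⟯
  · obtain ⟨k, rfl⟩ := deg_one hd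
    exfalso
    refine hn k ((algebraMap K Ω).injective ?_)
    simpa using h
  · obtain ⟨k, hk⟩ := deg2_resolvent hd h
    exact absurd hk (hR _)
  · exfalso
    obtain ⟨u, v, w, huv⟩ := repr3 (y := x ^ 3) hd (pow_mem (self_mem x) 3)
    have hh := indep3 (K := K) hd (a := w * u + r) (b := u + w * v + q) (c := v + w ^ 2 + p) (by
      simp only [map_add, map_mul, map_pow]
      linear_combination h - (x + algebraMap K Ω w) * huv)
    refine hn (-w) ?_
    linear_combination hh.1 - w * hh.2.1 + w ^ 2 * hh.2.2
  · rfl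

/-- Primitivity from the resolvent. -/
lemma primitive_of_resolvent {x : Ω} {p q r : K} (hd : Module.finrank K K⟮x⟯ = 4)
    (h : x ^ 4 + algebraMap K Ω p * x ^ 2 + algebraMap K Ω q * x + algebraMap K Ω r = 0)
    (hR : ∀ k : K, k ^ 3 + (2 * p) * k ^ 2 + (p ^ 2 - 4 * r) * k + (-q ^ 2) ≠ 0)
    (F : IntermediateField K Ω) (hF : F ≤ K⟮x⟯) : F = ⊥ ∨ F = K⟮x⟯ := by
  have := fd_adj (K := K) x
  have h1 := finrank_dvd hF
  rw [hd] at h1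
  have h4 : Module.finrank K F ≤ 4 := Nat.le_of_dvd (by norm_num) h1
  have h5 : Module.finrank K F = 1 ∨ Module.finrank K F = 2 ∨ Module.finrank K F = 4 := by
    interval_cases Module.finrank K F <;> simp_all
  rcases h5 with h5 | h5 | h5
  · left; exact finrank_eq_one_iff.1 h5
  · exfalso
    have : Algebra.IsAlgebraic F Ω := Algebra.IsAlgebraic.tower_top (K := K) F
    have hx2 : Module.finrank F F⟮x⟯ = 2 := by
      have e1 : restrictScalars K F⟮x⟯ = K⟮x⟯ := by
        apply le_antisymm
        · intro y hy
          have : F⟮x⟯ ≤ (extendScalars hF) := by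
            rw [adjoin_simple_le_iff]; exact self_mem x
          exact this hy
        · rw [adjoin_simple_le_iff]; exact mem_adjoin_simple_self F x
      have e2 : Module.finrank K F * Module.finrank F F⟮x⟯ = Module.finrank K F⟮x⟯ :=
        Module.finrank_mul_finrank K F F⟮x⟯
      have e3 : Module.finrank K F⟮x⟯ = 4 := by
        rw [← hd, ← e1]; rfl
      rw [h5, e3] at e2
      omega
    obtain ⟨k, hk⟩ := deg2_resolvent (K := F) (p := algebraMap K F p) (q := algebraMap K F q)
      (r := algebraMap K F r) hx2 (by simpa [← IsScalarTower.algebraMap_apply] using h)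
    have hk' := congrArg (algebraMap F Ω) hk
    simp only [map_add, map_mul, map_pow, map_zero, map_neg, map_sub, map_ofNat,
      ← IsScalarTower.algebraMap_apply] at hk'
    have h3 := cubic_deg (K := K) (x := (algebraMap F Ω k) ^ 2) (a := 2 * p) (b := p ^ 2 - 4 * r)
      (c := -q ^ 2) (by simpa only [map_add, map_mul, map_pow, map_zero, map_neg, map_sub, map_ofNat] using hk') hR
    have : FiniteDimensional K F := FiniteDimensional.of_finrank_pos (by omega)
    have h6 : K⟮(algebraMap F Ω k) ^ 2⟯ ≤ F := by
      rw [adjoin_simple_le_iff]; exact pow_mem k.2 2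
    have h7 := finrank_dvd h6
    rw [h3, h5] at h7
    norm_num at h7
  · right; exact eq_of_le_of_finrank_eq hF (by rw [h5, hd])

end generic
end Q16


namespace Q16

section generic2
variable {K Ω : Type*} [Field K] [Field Ω] [Algebra K Ω] [Algebra.IsAlgebraic K Ω]

lemma exists_sq [IsAlgClosed Ω] (a : Ω) : ∃ u : Ω, u ^ 2 = a := by
  obtain ⟨u, hu⟩ := IsAlgClosed.exists_pow_nat_eq a (n := 2) (by norm_num)
  exact ⟨u, hu⟩

lemma exists_cubic_root [IsAlgClosed Ω] (a b c : Ω) : ∃ u : Ω, u ^ 3 + a * u ^ 2 + b * u + c = 0 := by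
  have hd : (X ^ 3 + C a * X ^ 2 + C b * X + C c : Polynomial Ω).natDegree = 3 := by compute_degree!
  obtain ⟨u, hu⟩ := IsAlgClosed.exists_root (X ^ 3 + C a * X ^ 2 + C b * X + C c : Polynomial Ω)
    (fun h => by
      have := natDegree_eq_zero_iff_degree_le_zero.2 h.le
      omega)
  exact ⟨u, by simpa using hu⟩

lemma exists_quad_root [IsAlgClosed Ω] (a b : Ω) : ∃ u : Ω, u ^ 2 + a * u + b = 0 := by
  have hd : (X ^ 2 + C a * X + C b : Polynomial Ω).natDegree = 2 := by compute_degree!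
  obtain ⟨u, hu⟩ := IsAlgClosed.exists_root (X ^ 2 + C a * X + C b : Polynomial Ω)
    (fun h => by
      have := natDegree_eq_zero_iff_degree_le_zero.2 h.le
      omega)
  exact ⟨u, by simpa using hu⟩

lemma exists_quartic_root [IsAlgClosed Ω] (p q r : Ω) : ∃ u : Ω, u ^ 4 + p * u ^ 2 + q * u + r = 0 := by
  have hd : (X ^ 4 + C p * X ^ 2 + C q * X + C r : Polynomial Ω).natDegree = 4 := by compute_degree!
  obtain ⟨u, hu⟩ := IsAlgClosed.exists_root (X ^ 4 + C p * X ^ 2 + C q * X + C r : Polynomial Ω)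
    (fun h => by
      have := natDegree_eq_zero_iff_degree_le_zero.2 h.le
      omega)
  exact ⟨u, by simpa using hu⟩

/-- The remaining three roots of a depressed quartic. -/
lemma roots4 [IsAlgClosed Ω] {p q r t : Ω} (h : t ^ 4 + p * t ^ 2 + q * t + r = 0) :
    ∃ t2 t3 t4 : Ω, t + t2 + t3 + t4 = 0 ∧
      t * t2 + t * t3 + t * t4 + t2 * t3 + t2 * t4 + t3 * t4 = p ∧
      t * t2 * t3 + t * t2 * t4 + t * t3 * t4 + t2 * t3 * t4 = -q ∧
      t * t2 * t3 * t4 = r := by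
  obtain ⟨t2, h2⟩ := exists_cubic_root t (p + t ^ 2) (q + p * t + t ^ 3)
  obtain ⟨t3, h3⟩ := exists_quad_root (t + t2) (p + t ^ 2 + t * t2 + t2 ^ 2)
  refine ⟨t2, t3, -(t + t2 + t3), by ring, ?_, ?_, ?_⟩
  · linear_combination - h3
  · linear_combination h2 - (t + t2) * h3
  · linear_combination -h + t * h2 -t * t2 * h3

lemma minpoly_quartic {t : Ω} {p q r : K} (hd : Module.finrank K K⟮t⟯ = 4)
    (h : t ^ 4 + algebraMap K Ω p * t ^ 2 + algebraMap K Ω q * t + algebraMap K Ω r = 0) :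
    minpoly K t = X ^ 4 + C p * X ^ 2 + C q * X + C r := by
  have hi : IsIntegral K t := Algebra.IsIntegral.isIntegral t
  have hdeg : (X ^ 4 + C p * X ^ 2 + C q * X + C r : K[X]).natDegree = 4 := by compute_degree!
  have hm : (X ^ 4 + C p * X ^ 2 + C q * X + C r : K[X]).Monic := by monicity!
  have hdvd : minpoly K t ∣ X ^ 4 + C p * X ^ 2 + C q * X + C r := minpoly.dvd K t (by simpa using h)
  refine (eq_of_monic_of_dvd_of_natDegree_le (minpoly.monic hi) hm hdvd ?_).symm
  rw [hdeg, ← hd, adjoin.finrank hi]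

lemma conj_poly {t t' : Ω} {p q r : K} (hd : Module.finrank K K⟮t⟯ = 4)
    (h : t ^ 4 + algebraMap K Ω p * t ^ 2 + algebraMap K Ω q * t + algebraMap K Ω r = 0)
    (h' : t' ^ 4 + algebraMap K Ω p * t' ^ 2 + algebraMap K Ω q * t' + algebraMap K Ω r = 0)
    {P : K[X]} (hP : aeval t P = 0) : aeval t' P = 0 := by
  obtain ⟨Q, rfl⟩ := minpoly.dvd K t hP
  rw [map_mul, minpoly_quartic hd h]
  have : aeval t' (X ^ 4 + C p * X ^ 2 + C q * X + C r : K[X]) = 0 := by simpa using h'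
  rw [this, zero_mul]

lemma conj_deg {t t' : Ω} {p q r : K} (hd : Module.finrank K K⟮t⟯ = 4)
    (h : t ^ 4 + algebraMap K Ω p * t ^ 2 + algebraMap K Ω q * t + algebraMap K Ω r = 0)
    (h' : t' ^ 4 + algebraMap K Ω p * t' ^ 2 + algebraMap K Ω q * t' + algebraMap K Ω r = 0) :
    Module.finrank K K⟮t'⟯ = 4 := by
  have hi : IsIntegral K t := Algebra.IsIntegral.isIntegral t
  have h1 : minpoly K t' = minpoly K t := by
    refine minpoly.eq_of_root hi.isAlgebraic ?_
    exact conj_poly hd h h' (minpoly.aeval K t)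
  rw [← hd, adjoin.finrank hi, adjoin.finrank (Algebra.IsIntegral.isIntegral t'), h1]

lemma root_simple [CharZero K] {t t2 t3 t4 : Ω} {p q : K} (hd : Module.finrank K K⟮t⟯ = 4)
    (h1 : t + t2 + t3 + t4 = 0)
    (h2 : t * t2 + t * t3 + t * t4 + t2 * t3 + t2 * t4 + t3 * t4 = algebraMap K Ω p)
    (h3 : t * t2 * t3 + t * t2 * t4 + t * t3 * t4 + t2 * t3 * t4 = -algebraMap K Ω q) :
    t ≠ t2 := by
  intro h
  have h4 : (t - t2) * (t - t3) * (t - t4) = 4 * t ^ 3 + 2 * algebraMap K Ω p * t + algebraMap K Ω q := by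
    have e4 : t4 = -(t + t2 + t3) := by linear_combination h1
    have eq : algebraMap K Ω q = -(t * t2 * t3 + t * t2 * t4 + t * t3 * t4 + t2 * t3 * t4) := by
      linear_combination h3
    rw [eq, ← h2, e4]
    ring
  rw [h, sub_self, zero_mul, zero_mul] at h4
  rw [← h] at h4
  have := indep4 hd (a := q) (b := 2 * p) (c := 0) (d := 4) (by
    simp only [map_mul, map_ofNat, map_zero]; linear_combination - h4)
  simp at this

/-- Four distinct roots of a quartic: Vieta. -/
lemma vieta4 {x1 x2 x3 x4 a p q r : Ω} (n12 : x1 ≠ x2) (n13 : x1 ≠ x3) (n14 : x1 ≠ x4)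
    (n23 : x2 ≠ x3) (n24 : x2 ≠ x4) (n34 : x3 ≠ x4)
    (h1 : x1 ^ 4 + a * x1 ^ 3 + p * x1 ^ 2 + q * x1 + r = 0)
    (h2 : x2 ^ 4 + a * x2 ^ 3 + p * x2 ^ 2 + q * x2 + r = 0)
    (h3 : x3 ^ 4 + a * x3 ^ 3 + p * x3 ^ 2 + q * x3 + r = 0)
    (h4 : x4 ^ 4 + a * x4 ^ 3 + p * x4 ^ 2 + q * x4 + r = 0) :
    x1 + x2 + x3 + x4 = -a ∧ (a = 0 → ((x1 + x2) ^ 2) ^ 3 + (2 * p) * ((x1 + x2) ^ 2) ^ 2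
      + (p ^ 2 - 4 * r) * (x1 + x2) ^ 2 + (- q ^ 2) = 0) := by
  have D : ∀ {y z : Ω}, y ≠ z → y ^ 4 + a * y ^ 3 + p * y ^ 2 + q * y + r = 0 →
      z ^ 4 + a * z ^ 3 + p * z ^ 2 + q * z + r = 0 →
      y ^ 3 + y ^ 2 * z + y * z ^ 2 + z ^ 3 + a * (y ^ 2 + y * z + z ^ 2) + p * (y + z) + q = 0 := by
    intro y z hyz hy hz
    refine mul_left_cancel₀ (sub_ne_zero.2 hyz) ?_
    linear_combination hy - hz
  have d12 := D n12 h1 h2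
  have d13 := D n13 h1 h3
  have d14 := D n14 h1 h4
  have d123 : x1 ^ 2 + x2 ^ 2 + x3 ^ 2 + x1 * x2 + x1 * x3 + x2 * x3 + a * (x1 + x2 + x3) + p = 0 := by
    refine mul_left_cancel₀ (sub_ne_zero.2 n23) ?_
    linear_combination d12 - d13
  have d124 : x1 ^ 2 + x2 ^ 2 + x4 ^ 2 + x1 * x2 + x1 * x4 + x2 * x4 + a * (x1 + x2 + x4) + p = 0 := by
    refine mul_left_cancel₀ (sub_ne_zero.2 n24) ?_
    linear_combination d12 - d14
  have d : x1 + x2 + x3 + x4 + a = 0 := by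
    refine mul_left_cancel₀ (sub_ne_zero.2 n34) ?_
    linear_combination d123 - d124
  refine ⟨by linear_combination d, ?_⟩
  rintro rfl
  have e4 : x4 = -(x1 + x2 + x3) := by linear_combination d
  have ep : p = -(x1 ^ 2 + x2 ^ 2 + x3 ^ 2 + x1 * x2 + x1 * x3 + x2 * x3) := by
    linear_combination d123
  have eq : q = -(x1 ^ 3 + x1 ^ 2 * x2 + x1 * x2 ^ 2 + x2 ^ 3 + p * (x1 + x2)) := by
    linear_combination d12
  have er : r = -(x1 ^ 4 + p * x1 ^ 2 + q * x1) := by linear_combination h1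
  rw [er, eq, ep]
  ring

/-- The values of a polynomial generator at the conjugates. -/
lemma transform [CharZero K] {t t2 t3 t4 x : Ω} {p q r c0 c1 c2 c3 a' p' q' r' : K}
    (hd : Module.finrank K K⟮t⟯ = 4)
    (h1 : t + t2 + t3 + t4 = 0)
    (h2 : t * t2 + t * t3 + t * t4 + t2 * t3 + t2 * t4 + t3 * t4 = algebraMap K Ω p)
    (h3 : t * t2 * t3 + t * t2 * t4 + t * t3 * t4 + t2 * t3 * t4 = -algebraMap K Ω q)
    (h4 : t * t2 * t3 * t4 = algebraMap K Ω r)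
    {f : Ω → Ω} (hf : ∀ y, f y = algebraMap K Ω c0 + algebraMap K Ω c1 * y
      + algebraMap K Ω c2 * y ^ 2 + algebraMap K Ω c3 * y ^ 3)
    (hx : x = f t)
    (hxd : Module.finrank K K⟮x⟯ = 4)
    (hx4 : x ^ 4 + algebraMap K Ω a' * x ^ 3 + algebraMap K Ω p' * x ^ 2 + algebraMap K Ω q' * x
      + algebraMap K Ω r' = 0) :
    f t + f t2 + f t3 + f t4 = - algebraMap K Ω a' ∧ (a' = 0 →
      ((f t + f t2) ^ 2) ^ 3 + (2 * algebraMap K Ω p') * ((f t + f t2) ^ 2) ^ 2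
      + (algebraMap K Ω p' ^ 2 - 4 * algebraMap K Ω r') * (f t + f t2) ^ 2
      + (- algebraMap K Ω q' ^ 2) = 0) := by
  have root : ∀ y, y = t ∨ y = t2 ∨ y = t3 ∨ y = t4 →
      y ^ 4 + algebraMap K Ω p * y ^ 2 + algebraMap K Ω q * y + algebraMap K Ω r = 0 := by
    intro y hy
    have : (y - t) * (y - t2) * (y - t3) * (y - t4) = 0 := by
      rcases hy with rfl | rfl | rfl | rfl <;> simp
    linear_combination this + y ^ 3 * h1 - y ^ 2 * h2 + y * h3 - h4
  have r1 := root t (by simp)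
  have r2 := root t2 (by simp)
  have r3 := root t3 (by simp)
  have r4 := root t4 (by simp)
  -- distinctness
  have n12 : t ≠ t2 := root_simple hd h1 h2 h3
  have n13 : t ≠ t3 := root_simple (t2 := t3) (t3 := t2) (t4 := t4) hd
    (by linear_combination h1) (by linear_combination h2) (by linear_combination h3)
  have n14 : t ≠ t4 := root_simple (t2 := t4) (t3 := t2) (t4 := t3) hd
    (by linear_combination h1) (by linear_combination h2) (by linear_combination h3)
  have n23 : t2 ≠ t3 := root_simple (t2 := t3) (t3 := t) (t4 := t4) (conj_deg hd r1 r2)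
    (by linear_combination h1) (by linear_combination h2) (by linear_combination h3)
  have n24 : t2 ≠ t4 := root_simple (t2 := t4) (t3 := t) (t4 := t3) (conj_deg hd r1 r2)
    (by linear_combination h1) (by linear_combination h2) (by linear_combination h3)
  have n34 : t3 ≠ t4 := root_simple (t2 := t4) (t3 := t) (t4 := t2) (conj_deg hd r1 r3)
    (by linear_combination h1) (by linear_combination h2) (by linear_combination h3)
  let P : K[X] := C c0 + C c1 * X + C c2 * X ^ 2 + C c3 * X ^ 3
  have hP : ∀ y : Ω, aeval y P = f y := by
    intro y; rw [hf]; simp [P]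
  -- inverse polynomial
  have hxm : x ∈ K⟮t⟯ := by
    rw [hx, hf]
    have ht := self_mem (K := K) t
    exact add_mem (add_mem (add_mem (IntermediateField.algebraMap_mem _ _) (mul_mem (IntermediateField.algebraMap_mem _ _) ht))
      (mul_mem (IntermediateField.algebraMap_mem _ _) (pow_mem ht 2))) (mul_mem (IntermediateField.algebraMap_mem _ _) (pow_mem ht 3))
  have heq : K⟮x⟯ = K⟮t⟯ := by
    have := fd_adj (K := K) t
    exact eq_of_le_of_finrank_eq (adj_le hxm) (by rw [hxd, hd])
  obtain ⟨d0, d1, d2, d3, hQ⟩ := repr4 (K := K) (y := t) hxd (by rw [heq]; exact self_mem t)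
  let Q : K[X] := C d0 + C d1 * X + C d2 * X ^ 2 + C d3 * X ^ 3
  have hQP : aeval t (Q.comp P - X) = 0 := by
    rw [map_sub, aeval_comp, hP, aeval_X, ← hx]
    simp [Q]
    linear_combination - hQ
  have inv : ∀ y, y ^ 4 + algebraMap K Ω p * y ^ 2 + algebraMap K Ω q * y + algebraMap K Ω r = 0 →
      aeval (f y) Q = y := by
    intro y hy
    have := conj_poly hd r1 hy hQP
    rw [map_sub, aeval_comp, hP, aeval_X] at this
    exact sub_eq_zero.1 this
  let G : K[X] := X ^ 4 + C a' * X ^ 3 + C p' * X ^ 2 + C q' * X + C r'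
  have hG : ∀ y, y ^ 4 + algebraMap K Ω p * y ^ 2 + algebraMap K Ω q * y + algebraMap K Ω r = 0 →
      (f y) ^ 4 + algebraMap K Ω a' * (f y) ^ 3 + algebraMap K Ω p' * (f y) ^ 2
        + algebraMap K Ω q' * (f y) + algebraMap K Ω r' = 0 := by
    intro y hy
    have h0 : aeval t (G.comp P) = 0 := by
      rw [aeval_comp, hP, ← hx]; simpa [G] using hx4
    have := conj_poly hd r1 hy h0
    rw [aeval_comp, hP] at this
    simpa [G] using this
  have ne : ∀ {y z}, y ^ 4 + algebraMap K Ω p * y ^ 2 + algebraMap K Ω q * y + algebraMap K Ω r = 0 →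
      z ^ 4 + algebraMap K Ω p * z ^ 2 + algebraMap K Ω q * z + algebraMap K Ω r = 0 → y ≠ z →
      f y ≠ f z := by
    intro y z hy hz hyz h
    apply hyz
    rw [← inv y hy, ← inv z hz, h]
  have := vieta4 (ne r1 r2 n12) (ne r1 r3 n13) (ne r1 r4 n14) (ne r2 r3 n23) (ne r2 r4 n24)
    (ne r3 r4 n34) (hG _ r1) (hG _ r2) (hG _ r3) (hG _ r4)
  refine ⟨this.1, fun h => this.2 (by rw [h, map_zero])⟩

/-- The basic identities expressing `f t + f t2`. -/
lemma transform_sum {t t2 t3 t4 p q c0 c1 c2 c3 : Ω}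
    (h1 : t + t2 + t3 + t4 = 0)
    (h2 : t * t2 + t * t3 + t * t4 + t2 * t3 + t2 * t4 + t3 * t4 = p)
    (h3 : t * t2 * t3 + t * t2 * t4 + t * t3 * t4 + t2 * t3 * t4 = -q)
    {f : Ω → Ω} (hf : ∀ y, f y = c0 + c1 * y + c2 * y ^ 2 + c3 * y ^ 3) :
    f t + f t2 + f t3 + f t4 = 4 * c0 - 2 * p * c2 - 3 * q * c3 ∧
    2 * (t + t2) * (f t + f t2) = (t + t2) * (4 * c0 - 2 * p * c2 - 3 * q * c3) +
      2 * (t + t2) ^ 2 * c1 - 2 * q * c2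
      - c3 * (t + t2) ^ 2 * ((t + t2) ^ 2 + 3 * p) := by
  have e4 : t4 = -(t + t2 + t3) := by linear_combination h1
  have eq : q = -(t * t2 * t3 + t * t2 * t4 + t * t3 * t4 + t2 * t3 * t4) := by
    linear_combination h3
  simp only [hf, eq, ← h2, e4]
  constructor <;> ring

lemma resolvent_root {t t2 t3 t4 p q r : Ω}
    (h1 : t + t2 + t3 + t4 = 0)
    (h2 : t * t2 + t * t3 + t * t4 + t2 * t3 + t2 * t4 + t3 * t4 = p)
    (h3 : t * t2 * t3 + t * t2 * t4 + t * t3 * t4 + t2 * t3 * t4 = -q)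
    (h4 : t * t2 * t3 * t4 = r) :
    ((t + t2) ^ 2) ^ 3 + (2 * p) * ((t + t2) ^ 2) ^ 2
      + (p ^ 2 - 4 * r) * (t + t2) ^ 2 + (- q ^ 2) = 0 := by
  have e4 : t4 = -(t + t2 + t3) := by linear_combination h1
  have eq : q = -(t * t2 * t3 + t * t2 * t4 + t * t3 * t4 + t2 * t3 * t4) := by
    linear_combination h3
  rw [eq, ← h2, ← h4, e4]
  ring

/-- Necessary condition for two depressed quartics to generate the same field. -/
lemma trans_nec [CharZero K] [IsAlgClosed Ω] {t x : Ω} {p q r p' q' r' : K}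
    (hd : Module.finrank K K⟮t⟯ = 4)
    (h : t ^ 4 + algebraMap K Ω p * t ^ 2 + algebraMap K Ω q * t + algebraMap K Ω r = 0)
    (hR : ∀ k : K, k ^ 3 + (2 * p) * k ^ 2 + (p ^ 2 - 4 * r) * k + (-q ^ 2) ≠ 0)
    (hxd : Module.finrank K K⟮x⟯ = 4) (hxm : x ∈ K⟮t⟯)
    (hx : x ^ 4 + algebraMap K Ω p' * x ^ 2 + algebraMap K Ω q' * x + algebraMap K Ω r' = 0) :
    ∃ z s : Ω, z ^ 3 + algebraMap K Ω (2 * p) * z ^ 2 + algebraMap K Ω (p ^ 2 - 4 * r) * z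
        + algebraMap K Ω (- q ^ 2) = 0 ∧ Module.finrank K K⟮z⟯ = 3 ∧ s ∈ K⟮z⟯ ∧
      (z * s ^ 2) ^ 3 + algebraMap K Ω (2 * p') * (z * s ^ 2) ^ 2
        + algebraMap K Ω (p' ^ 2 - 4 * r') * (z * s ^ 2) + algebraMap K Ω (- q' ^ 2) = 0 := by
  obtain ⟨t2, t3, t4, h1, h2, h3, h4⟩ := roots4 h
  obtain ⟨c0, c1, c2, c3, hc⟩ := repr4 hd hxm
  obtain ⟨f, hf⟩ : ∃ f : Ω → Ω, ∀ y, f y = algebraMap K Ω c0 + algebraMap K Ω c1 * y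
      + algebraMap K Ω c2 * y ^ 2 + algebraMap K Ω c3 * y ^ 3 := ⟨_, fun _ => rfl⟩
  rw [← hf] at hc
  obtain ⟨T1, T2⟩ := transform (r := r) (a' := 0) hd h1 h2 h3 h4 hf hc hxd (by simpa using hx)
  have T3 := T2 rfl
  obtain ⟨S1, S2⟩ := transform_sum h1 h2 h3 hf
  rw [map_zero, neg_zero] at T1
  rw [← S1, T1] at S2
  have hz := resolvent_root h1 h2 h3 h4
  have hz' : ((t + t2) ^ 2) ^ 3 + algebraMap K Ω (2 * p) * ((t + t2) ^ 2) ^ 2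
      + algebraMap K Ω (p ^ 2 - 4 * r) * (t + t2) ^ 2 + algebraMap K Ω (- q ^ 2) = 0 := by
    simpa only [map_add, map_mul, map_pow, map_zero, map_neg, map_sub, map_ofNat] using hz
  have hz3 := cubic_deg hz' hR
  have hz0 : t + t2 ≠ 0 := by
    intro h0
    have := indep3 hz3 (a := 0) (b := 1) (c := 0) (by simp [h0])
    simp at this
  have h20 : (2 : Ω) ≠ 0 := by
    have : CharZero Ω := charZero_of_injective_algebraMap (algebraMap K Ω).injective
    exact two_ne_zero
  have hm := self_mem (K := K) ((t + t2) ^ 2)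
  refine ⟨(t + t2) ^ 2, ((t + t2) ^ 2 * algebraMap K Ω c1 - algebraMap K Ω q * algebraMap K Ω c2
      - algebraMap K Ω c3 * algebraMap K Ω (2⁻¹) * (t + t2) ^ 2 * ((t + t2) ^ 2
      + algebraMap K Ω 3 * algebraMap K Ω p)) / (t + t2) ^ 2, hz', hz3, ?_, ?_⟩
  · refine div_mem (sub_mem (sub_mem (mul_mem hm (IntermediateField.algebraMap_mem _ _)) (mul_mem (IntermediateField.algebraMap_mem _ _)
      (IntermediateField.algebraMap_mem _ _))) (mul_mem (mul_mem (mul_mem (IntermediateField.algebraMap_mem _ _) (IntermediateField.algebraMap_mem _ _))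
      hm) (add_mem hm (mul_mem (IntermediateField.algebraMap_mem _ _) (IntermediateField.algebraMap_mem _ _))))) hm
  · have e : (t + t2) ^ 2 * (((t + t2) ^ 2 * algebraMap K Ω c1 - algebraMap K Ω q * algebraMap K Ω c2
      - algebraMap K Ω c3 * algebraMap K Ω (2⁻¹) * (t + t2) ^ 2 * ((t + t2) ^ 2
      + algebraMap K Ω 3 * algebraMap K Ω p)) / (t + t2) ^ 2) ^ 2 = (f t + f t2) ^ 2 := by
      have e1 : f t + f t2 = ((t + t2) ^ 2 * algebraMap K Ω c1 - algebraMap K Ω q * algebraMap K Ω c2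
        - algebraMap K Ω c3 * algebraMap K Ω (2⁻¹) * (t + t2) ^ 2 * ((t + t2) ^ 2
        + algebraMap K Ω 3 * algebraMap K Ω p)) / (t + t2) := by
        rw [eq_div_iff hz0]
        refine mul_left_cancel₀ h20 ?_
        simp only [map_inv₀, map_ofNat]
        field_simp
        linear_combination S2
      rw [e1]
      field_simp
    rw [e]
    simpa only [map_add, map_mul, map_pow, map_zero, map_neg, map_sub, map_ofNat] using T3

end generic2
end Q16


namespace Q16

section generic3
variable {K Ω : Type*} [Field K] [Field Ω] [Algebra K Ω] [Algebra.IsAlgebraic K Ω]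

lemma prim_elt {F : IntermediateField K Ω}
    (hprim : ∀ F' : IntermediateField K Ω, F' ≤ F → F' = ⊥ ∨ F' = F) {y : Ω} (hy : y ∈ F) :
    (∃ k : K, y = algebraMap K Ω k) ∨ K⟮y⟯ = F := by
  rcases hprim K⟮y⟯ (by rw [adjoin_simple_le_iff]; exact hy) with h | h
  · left
    rw [adjoin_simple_eq_bot_iff, mem_bot] at h
    obtain ⟨k, hk⟩ := h
    exact ⟨k, hk.symm⟩
  · exact Or.inr h

lemma prim_quad {F : IntermediateField K Ω} (hF : Module.finrank K F = 4)
    (hprim : ∀ F' : IntermediateField K Ω, F' ≤ F → F' = ⊥ ∨ F' = F) {y : Ω} (hy : y ∈ F)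
    {a b : K} (h : y ^ 2 + algebraMap K Ω a * y + algebraMap K Ω b = 0) :
    ∃ k : K, y = algebraMap K Ω k := by
  rcases prim_elt hprim hy with h1 | h1
  · exact h1
  · have := finrank_le_two h
    rw [h1, hF] at this
    omega

lemma resolvent_noroot [CharZero K] [IsAlgClosed Ω] {t : Ω} {p q r : K}
    (hd : Module.finrank K K⟮t⟯ = 4)
    (h : t ^ 4 + algebraMap K Ω p * t ^ 2 + algebraMap K Ω q * t + algebraMap K Ω r = 0)
    (hprim : ∀ F' : IntermediateField K Ω, F' ≤ K⟮t⟯ → F' = ⊥ ∨ F' = K⟮t⟯) (k : K) :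
    k ^ 3 + (2 * p) * k ^ 2 + (p ^ 2 - 4 * r) * k + (-q ^ 2) ≠ 0 := by
  intro hk
  have ht := self_mem (K := K) t
  by_cases hk0 : k = 0
  · subst hk0
    have hq : q = 0 := by
      have : q ^ 2 = 0 := by linear_combination -hk
      exact pow_eq_zero_iff (two_ne_zero) |>.1 this
    subst hq
    obtain ⟨m, hm⟩ := prim_quad hd hprim (pow_mem ht 2) (a := p) (b := r) (by
      rw [map_zero] at h; linear_combination h)
    have := indep4 hd (a := -m) (b := 0) (c := 1) (d := 0) (by
      simp only [map_neg, map_zero, map_one]; linear_combination hm)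
    simp at this
  · obtain ⟨u, hu⟩ := exists_sq (algebraMap K Ω k)
    have hk' : algebraMap K Ω k ≠ 0 := by simpa using hk0
    have hu0 : u ≠ 0 := by rintro rfl; apply hk'; rw [← hu]; simp
    have h2 : (2 : Ω) ≠ 0 := by
      have : CharZero Ω := charZero_of_injective_algebraMap (algebraMap K Ω).injective
      exact two_ne_zero
    have hkΩ := congrArg (algebraMap K Ω) hk
    simp only [map_add, map_mul, map_sub, map_neg, map_pow, map_zero, map_ofNat] at hkΩ
    have key : (u * (2 * t ^ 2 + (algebraMap K Ω p + algebraMap K Ω k))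
        - (2 * algebraMap K Ω k * t - algebraMap K Ω q)) *
        (u * (2 * t ^ 2 + (algebraMap K Ω p + algebraMap K Ω k))
        + (2 * algebraMap K Ω k * t - algebraMap K Ω q)) = 0 := by
      linear_combination (2 * t ^ 2 + (algebraMap K Ω p + algebraMap K Ω k)) ^ 2 * hu +
        4 * algebraMap K Ω k * h + hkΩ
    obtain ⟨v, hv, hvt⟩ : ∃ v : Ω, v ^ 2 = algebraMap K Ω k ∧
        v * (2 * t ^ 2 + (algebraMap K Ω p + algebraMap K Ω k))
        = (2 * algebraMap K Ω k * t - algebraMap K Ω q) := by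
      rcases mul_eq_zero.1 key with h | h
      · exact ⟨u, hu, by linear_combination h⟩
      · exact ⟨-u, by rw [neg_sq, hu], by linear_combination -h⟩
    have hne : 2 * t ^ 2 + (algebraMap K Ω p + algebraMap K Ω k) ≠ 0 := by
      intro h0
      have := indep4 hd (a := p + k) (b := 0) (c := 2) (d := 0) (by
        simp only [map_add, map_zero, map_ofNat]; linear_combination h0)
      simp at this
    have hvm : v ∈ K⟮t⟯ := by
      rw [← eq_div_iff hne] at hvt
      rw [hvt]
      have e2 : (2 : Ω) ∈ K⟮t⟯ := ofNat_mem _ 2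
      refine div_mem (sub_mem (mul_mem (mul_mem e2 (IntermediateField.algebraMap_mem _ _)) ht)
        (IntermediateField.algebraMap_mem _ _)) (add_mem (mul_mem e2 (pow_mem ht 2))
        (add_mem (IntermediateField.algebraMap_mem _ _) (IntermediateField.algebraMap_mem _ _)))
    obtain ⟨m, rfl⟩ := prim_quad hd hprim hvm (a := 0) (b := -k) (by
      simp only [map_neg, map_zero]; linear_combination hv)
    have := indep4 hd (a := m * (p + k) + q) (b := - (2 * k)) (c := 2 * m) (d := 0) (by
        simp only [map_add, map_mul, map_neg, map_zero, map_ofNat]; linear_combination hvt)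
    have h3 := this.2.1
    simp [hk0] at h3

lemma trans_exists [CharZero K] [IsAlgClosed Ω] {t : Ω} {p q r : K}
    (hd : Module.finrank K K⟮t⟯ = 4)
    (h : t ^ 4 + algebraMap K Ω p * t ^ 2 + algebraMap K Ω q * t + algebraMap K Ω r = 0)
    (hprim : ∀ F' : IntermediateField K Ω, F' ≤ K⟮t⟯ → F' = ⊥ ∨ F' = K⟮t⟯) :
    ∃ z : Ω, z ^ 3 + algebraMap K Ω (2 * p) * z ^ 2 + algebraMap K Ω (p ^ 2 - 4 * r) * z
        + algebraMap K Ω (- q ^ 2) = 0 ∧ Module.finrank K K⟮z⟯ = 3 ∧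
      ∀ s ∈ K⟮z⟯, s ≠ 0 → ∃ (x : Ω) (p' q' r' : K), K⟮x⟯ = K⟮t⟯ ∧
        x ^ 4 + algebraMap K Ω p' * x ^ 2 + algebraMap K Ω q' * x + algebraMap K Ω r' = 0 ∧
      (z * s ^ 2) ^ 3 + algebraMap K Ω (2 * p') * (z * s ^ 2) ^ 2
        + algebraMap K Ω (p' ^ 2 - 4 * r') * (z * s ^ 2) + algebraMap K Ω (- q' ^ 2) = 0 := by
  have hR := resolvent_noroot hd h hprim
  obtain ⟨t2, t3, t4, h1, h2, h3, h4⟩ := roots4 h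
  have hz := resolvent_root h1 h2 h3 h4
  have hz' : ((t + t2) ^ 2) ^ 3 + algebraMap K Ω (2 * p) * ((t + t2) ^ 2) ^ 2
      + algebraMap K Ω (p ^ 2 - 4 * r) * (t + t2) ^ 2 + algebraMap K Ω (- q ^ 2) = 0 := by
    simpa only [map_add, map_mul, map_pow, map_zero, map_neg, map_sub, map_ofNat] using hz
  have hz3 := cubic_deg hz' hR
  have hz0 : t + t2 ≠ 0 := by
    intro h0
    have := indep3 hz3 (a := 0) (b := 1) (c := 0) (by simp [h0])
    simp at this
  have hq : q ≠ 0 := by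
    intro h0
    apply hR 0
    rw [h0]; ring
  have hqΩ : algebraMap K Ω q ≠ 0 := by simpa using hq
  have : CharZero Ω := charZero_of_injective_algebraMap (algebraMap K Ω).injective
  have h20 : (2 : Ω) ≠ 0 := two_ne_zero
  refine ⟨(t + t2) ^ 2, hz', hz3, ?_⟩
  intro s hs hs0
  obtain ⟨a, b, c, habc⟩ := repr3 hz3 (mul_mem (self_mem ((t + t2) ^ 2)) hs)
  have root : ∀ y, y = t ∨ y = t2 ∨ y = t3 ∨ y = t4 →
      y ^ 4 + algebraMap K Ω p * y ^ 2 + algebraMap K Ω q * y + algebraMap K Ω r = 0 := by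
    intro y hy
    have : (y - t) * (y - t2) * (y - t3) * (y - t4) = 0 := by
      rcases hy with rfl | rfl | rfl | rfl <;> simp
    linear_combination this + y ^ 3 * h1 - y ^ 2 * h2 + y * h3 - h4
  obtain ⟨c2, hc2⟩ : ∃ c2 : K, q * c2 = -a := ⟨-a / q, by field_simp⟩
  obtain ⟨c3, hc3⟩ : ∃ c3 : K, c3 = -2 * c := ⟨_, rfl⟩
  obtain ⟨c1, hc1⟩ : ∃ c1 : K, c1 = b - 3 * p * c := ⟨_, rfl⟩
  obtain ⟨c0, hc0⟩ : ∃ c0 : K, 4 * c0 - 2 * p * c2 - 3 * q * c3 = 0 :=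
    ⟨(2 * p * c2 + 3 * q * c3) / 4, by field_simp; ring⟩
  obtain ⟨f, hf⟩ : ∃ f : Ω → Ω, ∀ y, f y = algebraMap K Ω c0 + algebraMap K Ω c1 * y
      + algebraMap K Ω c2 * y ^ 2 + algebraMap K Ω c3 * y ^ 3 := ⟨_, fun _ => rfl⟩
  obtain ⟨S1, S2⟩ := transform_sum h1 h2 h3 hf
  have hc0' := congrArg (algebraMap K Ω) hc0
  have hc1' := congrArg (algebraMap K Ω) hc1
  have hc2' := congrArg (algebraMap K Ω) hc2
  have hc3' := congrArg (algebraMap K Ω) hc3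
  simp only [map_add, map_mul, map_sub, map_neg, map_pow, map_zero, map_ofNat] at hc0' hc1' hc2' hc3'
  rw [hc0'] at S1 S2
  have S3 : (t + t2) * (f t + f t2) = (t + t2) ^ 2 * s := by
    refine mul_left_cancel₀ h20 ?_
    rw [habc]
    linear_combination S2 + 2 * (t + t2) ^ 2 * hc1' - 2 * hc2' -
      ((t + t2) ^ 2 * ((t + t2) ^ 2 + 3 * algebraMap K Ω p)) * hc3'
  have S4 : f t + f t2 = (t + t2) * s := by
    refine mul_left_cancel₀ hz0 ?_
    rw [S3]; ring
  have S5 : (t + t2) ^ 2 * s ^ 2 = (f t + f t2) ^ 2 := by rw [S4]; ring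
  let P : K[X] := C c0 + C c1 * X + C c2 * X ^ 2 + C c3 * X ^ 3
  have hP : ∀ y : Ω, aeval y P = f y := by
    intro y; rw [hf]; simp [P]
  have hxm : f t ∈ K⟮t⟯ := by
    rw [hf]
    have ht := self_mem (K := K) t
    exact add_mem (add_mem (add_mem (IntermediateField.algebraMap_mem _ _)
      (mul_mem (IntermediateField.algebraMap_mem _ _) ht))
      (mul_mem (IntermediateField.algebraMap_mem _ _) (pow_mem ht 2)))
      (mul_mem (IntermediateField.algebraMap_mem _ _) (pow_mem ht 3))
  rcases prim_elt hprim hxm with ⟨k, hk⟩ | heq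
  · exfalso
    have h0 : aeval t (P - C k) = 0 := by rw [map_sub, hP, hk]; simp
    have hall : ∀ y, y = t ∨ y = t2 ∨ y = t3 ∨ y = t4 → f y = algebraMap K Ω k := by
      intro y hy
      have := conj_poly hd h (root y hy) h0
      rw [map_sub, hP, aeval_C] at this
      linear_combination this
    have e1 := hall t (by simp)
    have e2 := hall t2 (by simp)
    have e3 := hall t3 (by simp)
    have e4 := hall t4 (by simp)
    rw [e1, e2, e3, e4] at S1
    have e0 : algebraMap K Ω k = 0 := by
      have : (4 : Ω) * algebraMap K Ω k = 0 := by linear_combination S1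
      simpa using this
    rw [e1, e2, e0] at S4
    have : (t + t2) * s = 0 := by rw [← S4]; simp
    rcases mul_eq_zero.1 this with h | h
    · exact hz0 h
    · exact hs0 h
  · have hxd : Module.finrank K K⟮f t⟯ = 4 := by rw [heq, hd]
    obtain ⟨d0, d1, d2, d3, hd4⟩ := repr4 hxd (pow_mem (self_mem (f t)) 4)
    have hx4 : (f t) ^ 4 + algebraMap K Ω (-d3) * (f t) ^ 3 + algebraMap K Ω (-d2) * (f t) ^ 2
      + algebraMap K Ω (-d1) * (f t) + algebraMap K Ω (-d0) = 0 := by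
      simp only [map_neg]
      linear_combination hd4
    obtain ⟨T1, T2⟩ := transform (r := r) hd h1 h2 h3 h4 hf rfl hxd hx4
    have hd3 : -d3 = 0 := by
      rw [S1] at T1
      have : algebraMap K Ω (-d3) = 0 := by linear_combination T1
      simpa using this
    have T3 := T2 hd3
    refine ⟨f t, -d2, -d1, -d0, heq, ?_, ?_⟩
    · rw [hd3] at hx4
      simpa using hx4
    · rw [S5]
      simpa only [map_add, map_mul, map_pow, map_zero, map_neg, map_sub, map_ofNat] using T3

lemma depressed [CharZero K] {F : IntermediateField K Ω} (hF : Module.finrank K F = 4)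
    (hprim : ∀ F' : IntermediateField K Ω, F' ≤ F → F' = ⊥ ∨ F' = F) :
    ∃ (t : Ω) (p q r : K), K⟮t⟯ = F ∧
      t ^ 4 + algebraMap K Ω p * t ^ 2 + algebraMap K Ω q * t + algebraMap K Ω r = 0 := by
  obtain ⟨x, hx⟩ : ∃ x, K⟮x⟯ = F := by
    by_contra hcon
    push Not at hcon
    have : F = ⊥ := by
      rw [eq_bot_iff]
      intro y hy
      rcases prim_elt hprim hy with ⟨k, hk⟩ | h
      · rw [mem_bot]; exact ⟨k, hk.symm⟩
      · exact absurd h (hcon y)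
    rw [this, IntermediateField.finrank_bot] at hF
    omega
  have hxd : Module.finrank K K⟮x⟯ = 4 := by rw [hx, hF]
  obtain ⟨d0, d1, d2, d3, hd4⟩ := repr4 hxd (pow_mem (self_mem x) 4)
  obtain ⟨m, rfl⟩ : ∃ m, d3 = 4 * m := ⟨d3 / 4, by field_simp⟩
  refine ⟨x - algebraMap K Ω m, -d2 - 6 * m ^ 2, -d1 - 2 * m * d2 - 8 * m ^ 3,
    -d0 - m * d1 - m ^ 2 * d2 - 3 * m ^ 4, ?_, ?_⟩
  · rw [← hx]
    apply le_antisymm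
    · exact adj_le (sub_mem (self_mem x) (IntermediateField.algebraMap_mem _ _))
    · apply adj_le
      have := add_mem (self_mem (K := K) (x - algebraMap K Ω m))
        (IntermediateField.algebraMap_mem _ m)
      simpa using this
  · simp only [map_add, map_mul, map_pow, map_neg, map_sub, map_ofNat] at hd4 ⊢
    linear_combination hd4

end generic3
end Q16


namespace Q16

/-- Multiplication of coordinate triples with respect to `1, T, T²`, where `T³ = A T + B`. -/
def mul3 {R : Type*} [CommRing R] (A B : R) (x y : R × R × R) : R × R × R :=
  (x.1 * y.1 + B * (x.2.1 * y.2.2 + x.2.2 * y.2.1),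
   x.1 * y.2.1 + x.2.1 * y.1 + A * (x.2.1 * y.2.2 + x.2.2 * y.2.1) + B * (x.2.2 * y.2.2),
   x.1 * y.2.2 + x.2.1 * y.2.1 + x.2.2 * y.1 + A * (x.2.2 * y.2.2))

abbrev Z3 := ℤ_[2] × ℤ_[2] × ℤ_[2]

section padic
variable {Ω : Type*} [Field Ω] [Algebra ℚ_[2] Ω] [Algebra.IsAlgebraic ℚ_[2] Ω]

/-- The embedding of the 2-adic integers. -/
noncomputable def io : ℤ_[2] →+* Ω := (algebraMap ℚ_[2] Ω).comp PadicInt.Coe.ringHom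

lemma io_def (a : ℤ_[2]) : (io a : Ω) = algebraMap ℚ_[2] Ω (a : ℚ_[2]) := rfl

noncomputable def ev (T : Ω) (x : Z3) : Ω := io x.1 + io x.2.1 * T + io x.2.2 * T ^ 2

lemma ev_mul {T : Ω} {A B : ℤ_[2]} (hT : T ^ 3 = io A * T + io B) (x y : Z3) :
    ev T (mul3 A B x y) = ev T x * ev T y := by
  simp only [ev, mul3, map_add, map_mul]
  linear_combination (-(io x.2.1 * io y.2.2 + io x.2.2 * io y.2.1) - T * io x.2.2 * io y.2.2) * hT

lemma ev_add (T : Ω) (x y : Z3) : ev T (x + y) = ev T x + ev T y := by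
  simp only [ev, Prod.fst_add, Prod.snd_add, map_add]; ring

lemma ev_sub (T : Ω) (x y : Z3) : ev T (x - y) = ev T x - ev T y := by
  simp only [ev, Prod.fst_sub, Prod.snd_sub, map_sub]; ring

lemma ev_smul (T : Ω) (k : ℤ_[2]) (x : Z3) : ev T (k • x) = io k * ev T x := by
  simp only [ev, Prod.smul_fst, Prod.smul_snd, smul_eq_mul, map_mul]; ring

lemma ev_const (T : Ω) (k : ℤ_[2]) : ev T (k, 0, 0) = io k := by
  simp [ev]

lemma ev_T (T : Ω) : ev T (0, 1, 0) = T := by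
  simp [ev]

lemma ev_zero (T : Ω) : ev T 0 = 0 := by
  simp [ev]

lemma ev_inj {T : Ω} (hd : Module.finrank ℚ_[2] ℚ_[2]⟮T⟯ = 3) {x y : Z3} (h : ev T x = ev T y) :
    x = y := by
  have h0 : ev T (x - y) = 0 := by rw [ev_sub, h, sub_self]
  obtain ⟨h1, h2, h3⟩ := indep3 hd h0
  obtain ⟨x1, x2, x3⟩ := x
  obtain ⟨y1, y2, y3⟩ := y
  have key : ∀ a b : ℤ_[2], PadicInt.Coe.ringHom (a - b) = 0 → a = b := by
    intro a b hab
    have hab' : ((a - b : ℤ_[2]) : ℚ_[2]) = ((0 : ℤ_[2]) : ℚ_[2]) := hab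
    exact sub_eq_zero.1 (Subtype.coe_injective hab')
  rw [key x1 y1 h1, key x2 y2 h2, key x3 y3 h3]

lemma ev_mem (T : Ω) (x : Z3) : ev T x ∈ ℚ_[2]⟮T⟯ :=
  add_mem (add_mem (IntermediateField.algebraMap_mem _ _)
    (mul_mem (IntermediateField.algebraMap_mem _ _) (self_mem T)))
    (mul_mem (IntermediateField.algebraMap_mem _ _) (pow_mem (self_mem T) 2))

/-- The order `ℤ₂[T]`. -/
def ord (T : Ω) {A B : ℤ_[2]} (hT : T ^ 3 = io A * T + io B) : Subring Ω where
  carrier := Set.range (ev T)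
  mul_mem' := by
    rintro _ _ ⟨x, rfl⟩ ⟨y, rfl⟩
    exact ⟨_, ev_mul hT x y⟩
  one_mem' := ⟨(1, 0, 0), by simp [ev]⟩
  add_mem' := by
    rintro _ _ ⟨x, rfl⟩ ⟨y, rfl⟩
    exact ⟨_, ev_add T x y⟩
  zero_mem' := ⟨0, ev_zero T⟩
  neg_mem' := by
    rintro _ ⟨x, rfl⟩
    exact ⟨0 - x, by rw [ev_sub, ev_zero]; ring⟩

lemma mem_ord {T : Ω} {A B : ℤ_[2]} (hT : T ^ 3 = io A * T + io B) {y : Ω} :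
    y ∈ ord T hT ↔ ∃ x, ev T x = y := Iff.rfl

lemma ev_mem_ord {T : Ω} {A B : ℤ_[2]} (hT : T ^ 3 = io A * T + io B) (x : Z3) :
    ev T x ∈ ord T hT := ⟨x, rfl⟩

lemma T_mem_ord {T : Ω} {A B : ℤ_[2]} (hT : T ^ 3 = io A * T + io B) :
    T ∈ ord T hT := ⟨(0, 1, 0), ev_T T⟩

lemma complete3 {T : Ω} (hd : Module.finrank ℚ_[2] ℚ_[2]⟮T⟯ = 3) {F : Z3 → Z3} (hF : Continuous F)
    (h : ∀ n : ℕ, 1 ≤ n → ∃ x e, ev T (F x) = 2 ^ n * ev T e) : ∃ x, ev T (F x) = 0 := by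
  have hc : IsClosed (Set.range F) := (isCompact_range hF).isClosed
  have h0 : (0 : Z3) ∈ closure (Set.range F) := by
    rw [Metric.mem_closure_iff]
    intro ε hε
    obtain ⟨n, hn⟩ := exists_pow_lt_of_lt_one hε (show (2 : ℝ)⁻¹ < 1 by norm_num)
    obtain ⟨x, e, hx⟩ := h (n + 1) (by omega)
    have hx' : F x = (2 ^ (n + 1) : ℤ_[2]) • e := by
      apply ev_inj hd
      rw [hx, ev_smul, map_pow, map_ofNat]
    refine ⟨F x, ⟨x, rfl⟩, ?_⟩
    rw [dist_zero_left, hx']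
    have hb : ∀ a : ℤ_[2], ‖(2 ^ (n + 1) : ℤ_[2]) * a‖ < ε := by
      intro a
      rw [norm_mul, norm_pow]
      have h2 : ‖(2 : ℤ_[2])‖ = (2 : ℝ)⁻¹ := by simpa using PadicInt.norm_p (p := 2)
      rw [h2]
      have h3 := PadicInt.norm_le_one a
      have h4 : (2 : ℝ)⁻¹ ^ (n + 1) ≤ (2 : ℝ)⁻¹ ^ n :=
        pow_le_pow_of_le_one (by norm_num) (by norm_num) (by omega)
      have h5 : (0 : ℝ) ≤ (2 : ℝ)⁻¹ ^ (n + 1) := by positivity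
      nlinarith
    rw [Prod.norm_def, Prod.norm_def]
    simp only [Prod.smul_fst, Prod.smul_snd, smul_eq_mul, sup_lt_iff]
    exact ⟨hb _, hb _, hb _⟩
  rw [hc.closure_eq] at h0
  obtain ⟨x, hx⟩ := h0
  exact ⟨x, by rw [hx, ev_zero]⟩

lemma mul3_cont (A B : ℤ_[2]) {f g : Z3 → Z3} (hf : Continuous f) (hg : Continuous g) :
    Continuous (fun x => mul3 A B (f x) (g x)) := by
  unfold mul3
  fun_prop

lemma sqrt_lift {T : Ω} (hd : Module.finrank ℚ_[2] ℚ_[2]⟮T⟯ = 3) {A B : ℤ_[2]}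
    (hT : T ^ 3 = io A * T + io B) (w : Z3) :
    ∃ y ∈ ℚ_[2]⟮T⟯, y ≠ 0 ∧ y ^ 2 = 1 + 8 * ev T w := by
  have key : ∃ x, ev T (mul3 A B x x + x - (2 : ℤ_[2]) • w) = 0 := by
    refine complete3 hd (F := fun x => mul3 A B x x + x - (2 : ℤ_[2]) • w) ?_ ?_
    · exact ((mul3_cont A B continuous_id continuous_id).add continuous_id).sub continuous_const
    · have claim : ∀ n : ℕ, ∃ x ∈ ord T hT, ∃ e ∈ ord T hT,
          x * x + x - 2 * ev T w = 2 ^ (n + 1) * e := by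
        intro n
        induction n with
        | zero => exact ⟨0, zero_mem _, -ev T w, neg_mem (ev_mem_ord hT w), by ring⟩
        | succ n ih =>
          obtain ⟨x, hx, e, he, h⟩ := ih
          refine ⟨x - 2 ^ (n + 1) * e, ?_, - (x * e) + 2 ^ n * (e * e), ?_, ?_⟩
          · exact sub_mem hx (mul_mem (pow_mem (ofNat_mem _ 2) _) he)
          · exact add_mem (neg_mem (mul_mem hx he)) (mul_mem (pow_mem (ofNat_mem _ 2) _) (mul_mem he he))
          · linear_combination h
      intro n hn
      obtain ⟨m, rfl⟩ : ∃ m, n = m + 1 := ⟨n - 1, by omega⟩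
      obtain ⟨_, ⟨x, rfl⟩, _, ⟨e, rfl⟩, h⟩ := claim m
      refine ⟨x, e, ?_⟩
      simp only [ev_sub, ev_add, ev_mul hT, ev_smul, map_ofNat]
      exact h
  obtain ⟨x, hx⟩ := key
  simp only [ev_sub, ev_add, ev_mul hT, ev_smul, map_ofNat] at hx
  refine ⟨1 + 2 * ev T x, add_mem (one_mem _) (mul_mem (ofNat_mem _ 2) (ev_mem T x)), ?_, ?_⟩
  · intro h0
    have h1 : ev T ((1, 0, 0) + (2 : ℤ_[2]) • x) = ev T 0 := by
      rw [ev_add, ev_smul, ev_const, ev_zero, map_one, map_ofNat]; exact h0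
    have h2 := congrArg Prod.fst (ev_inj hd h1)
    simp only [Prod.fst_add, Prod.smul_fst, Prod.fst_zero, smul_eq_mul] at h2
    have h3 := congrArg (PadicInt.toZMod (p := 2)) h2
    simp only [map_add, map_mul, map_one, map_ofNat, map_zero] at h3
    have : ∀ y : ZMod 2, 1 + 2 * y ≠ 0 := by decide
    exact this _ h3
  · linear_combination 4 * hx

lemma rho_lift {T : Ω} (hd : Module.finrank ℚ_[2] ℚ_[2]⟮T⟯ = 3) {t : ℤ_[2]}
    (hT : T ^ 3 = io 3 * T + io (1 + 2 * t)) :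
    ∃ y ∈ ℚ_[2]⟮T⟯, y ^ 3 - 3 * y + 1 = 0 := by
  have key : ∃ x, ev T (mul3 3 (1 + 2 * t) x (mul3 3 (1 + 2 * t) x x) - (3 : ℤ_[2]) • x + (1, 0, 0)) = 0 := by
    refine complete3 hd (F := fun x => mul3 3 (1 + 2 * t) x (mul3 3 (1 + 2 * t) x x)
      - (3 : ℤ_[2]) • x + (1, 0, 0)) ?_ ?_
    · exact ((mul3_cont _ _ continuous_id (mul3_cont _ _ continuous_id continuous_id)).sub
        (continuous_id.const_smul (3 : ℤ_[2]))).add continuous_const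
    · have htm : io t ∈ ord T hT := ⟨(t, 0, 0), ev_const T t⟩
      have hTm := T_mem_ord hT
      have h2m : (2 : Ω) ∈ ord T hT := ofNat_mem _ 2
      have h3m : (3 : Ω) ∈ ord T hT := ofNat_mem _ 3
      have hT' := hT
      simp only [map_add, map_mul, map_one, map_ofNat] at hT'
      have claim : ∀ n : ℕ, ∃ x ∈ ord T hT, ∃ e ∈ ord T hT, ∃ m ∈ ord T hT,
          x * (x * x) - 3 * x + 1 = 2 ^ (n + 1) * e ∧ x = T + 2 * m := by
        intro n
        induction n with
        | zero => exact ⟨T, hTm, 1 + io t, add_mem (one_mem _) htm, 0, zero_mem _,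
                    by linear_combination hT', by ring⟩
        | succ n ih =>
          obtain ⟨x, hx, e, he, m, hm, h, hxm⟩ := ih
          refine ⟨x - T * (2 ^ (n + 1) * e), ?_,
            -(1 + 3 * io t + 3 * T + 3 * (2 * T * m + 2 * (m * m)) * T) * e
              + 3 * x * T ^ 2 * (2 ^ n * (e * e))
              - T ^ 3 * (2 * 2 ^ n * (2 ^ n * (e * (e * e)))), ?_, m - T * (2 ^ n * e), ?_, ?_, ?_⟩
          · exact sub_mem hx (mul_mem hTm (mul_mem (pow_mem h2m _) he))
          · refine sub_mem (add_mem (mul_mem (neg_mem ?_) he) ?_) ?_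
            · exact add_mem (add_mem (add_mem (one_mem _) (mul_mem h3m htm)) (mul_mem h3m hTm))
                (mul_mem (mul_mem h3m (add_mem (mul_mem (mul_mem h2m hTm) hm) (mul_mem h2m (mul_mem hm hm)))) hTm)
            · exact mul_mem (mul_mem (mul_mem h3m hx) (pow_mem hTm 2)) (mul_mem (pow_mem h2m _) (mul_mem he he))
            · exact mul_mem (pow_mem hTm 3) (mul_mem (mul_mem h2m (pow_mem h2m _))
                (mul_mem (pow_mem h2m _) (mul_mem he (mul_mem he he))))
          · exact sub_mem hm (mul_mem hTm (mul_mem (pow_mem h2m _) he))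
          · subst hxm
            linear_combination h - 3 * 2 ^ (n + 1) * e * hT'
          · rw [hxm]; ring
      intro n hn
      obtain ⟨m, rfl⟩ : ∃ m, n = m + 1 := ⟨n - 1, by omega⟩
      obtain ⟨_, ⟨x, rfl⟩, _, ⟨e, rfl⟩, _, _, h, _⟩ := claim m
      refine ⟨x, e, ?_⟩
      simp only [ev_sub, ev_add, ev_mul hT, ev_smul, map_ofNat, ev_const, map_one]
      exact h
  obtain ⟨x, hx⟩ := key
  simp only [ev_sub, ev_add, ev_mul hT, ev_smul, map_ofNat, ev_const, map_one] at hx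
  exact ⟨ev T x, ev_mem T x, by linear_combination hx⟩

end padic
end Q16


namespace Q16

lemma even_or_odd2 (x : ℤ_[2]) : (∃ y, x = 2 * y) ∨ (∃ y, x = 1 + 2 * y) := by
  have h := PadicInt.appr_spec 1 x
  have hlt := PadicInt.appr_lt x 1
  rw [Ideal.mem_span_singleton] at h
  obtain ⟨y, hy⟩ := h
  have hx : x = (x.appr 1 : ℤ_[2]) + 2 * y := by
    have e : (((2 : ℕ) : ℤ_[2]) ^ 1) = 2 := by norm_num
    rw [e] at hy
    linear_combination hy
  interval_cases hn : x.appr 1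
  · left; exact ⟨y, by simpa using hx⟩
  · right; exact ⟨y, by simpa using hx⟩

lemma norm_two_mul (y : ℤ_[2]) : ‖2 * y‖ < 1 := by
  have := (PadicInt.norm_lt_one_iff_dvd (p := 2) (2 * y)).2 ⟨y, by norm_num⟩
  exact this

lemma isUnit_odd (y : ℤ_[2]) : IsUnit (1 + 2 * y) := by
  by_contra h
  rw [PadicInt.not_isUnit_iff] at h
  have h1 := (PadicInt.norm_lt_one_iff_dvd (p := 2) _).1 h
  obtain ⟨w, hw⟩ := h1
  have h3 := congrArg (PadicInt.toZMod (p := 2)) hw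
  simp only [map_add, map_mul, map_one, map_ofNat, map_natCast] at h3
  have key : ∀ a b : ZMod 2, 1 + 2 * a ≠ ((2 : ℕ) : ZMod 2) * b := by decide
  exact key _ _ h3

lemma norm_odd (y : ℤ_[2]) : ‖1 + 2 * y‖ = 1 := PadicInt.isUnit_iff.1 (isUnit_odd y)

lemma unit_odd {u : ℤ_[2]} (hu : ‖u‖ = 1) : ∃ y, u = 1 + 2 * y := by
  rcases even_or_odd2 u with ⟨y, rfl⟩ | h
  · have := norm_two_mul y; linarith
  · exact h

lemma cube_root {u : ℤ_[2]} (hu : ‖u‖ = 1) : ∃ v : ℤ_[2], v ^ 3 = u := by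
  obtain ⟨y, rfl⟩ := unit_odd hu
  obtain ⟨v, hv, -⟩ := hensels_lemma (p := 2) (F := (X ^ 3 - C (1 + 2 * y) : Polynomial ℤ_[2])) (a := 1) (by
    have h1 : ‖(2 : ℤ_[2]) * (-y)‖ < 1 := norm_two_mul _
    have h2 : ‖(1 + 2 * 1 : ℤ_[2])‖ = 1 := norm_odd 1
    have e1 : (aeval (1 : ℤ_[2])) (X ^ 3 - C (1 + 2 * y) : Polynomial ℤ_[2]) = 2 * (-y) := by
      simp
    have e2 : (aeval (1 : ℤ_[2])) (derivative (X ^ 3 - C (1 + 2 * y) : Polynomial ℤ_[2])) = 1 + 2 * 1 := by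
      simp [derivative_X_pow]; norm_num
    rw [e1, e2, h2]; simpa using h1)
  refine ⟨v, ?_⟩
  simp only [map_sub, map_pow, aeval_X, aeval_C] at hv
  simpa [sub_eq_zero] using hv

lemma even_root (t : ℤ_[2]) : ∃ v : ℤ_[2], v ^ 3 - 3 * v - 2 * t = 0 := by
  obtain ⟨v, hv, -⟩ := hensels_lemma (p := 2) (F := (X ^ 3 - 3 * X - C (2 * t) : Polynomial ℤ_[2])) (a := 0) (by
    have h1 : ‖(2 : ℤ_[2]) * (-t)‖ < 1 := norm_two_mul _
    have h2 : ‖(1 + 2 * (-2) : ℤ_[2])‖ = 1 := norm_odd (-2)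
    have e1 : (aeval (0 : ℤ_[2])) (X ^ 3 - 3 * X - C (2 * t) : Polynomial ℤ_[2]) = 2 * (-t) := by
      simp
    have e2 : (aeval (0 : ℤ_[2])) (derivative (X ^ 3 - 3 * X - C (2 * t) : Polynomial ℤ_[2])) = 1 + 2 * (-2) := by
      simp [derivative_X_pow]; norm_num
    rw [e1, e2, h2]; simpa using h1)
  refine ⟨v, ?_⟩
  simpa using hv

lemma quad_root (e : ℤ_[2]) (he : ‖e‖ < 1) : ∃ v : ℤ_[2], v ^ 2 - v + e = 0 := by
  obtain ⟨v, hv, -⟩ := hensels_lemma (p := 2) (F := (X ^ 2 - X + C e : Polynomial ℤ_[2])) (a := 1) (by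
    have e1 : (aeval (1 : ℤ_[2])) (X ^ 2 - X + C e : Polynomial ℤ_[2]) = e := by
      simp
    have e2 : (aeval (1 : ℤ_[2])) (derivative (X ^ 2 - X + C e : Polynomial ℤ_[2])) = 1 := by
      simp [derivative_X_pow, one_add_one_eq_two]; try norm_num
    rw [e1, e2]; simpa using he)
  refine ⟨v, ?_⟩
  simpa using hv

lemma two_norm_Q : ‖(2 : ℚ_[2])‖ = 2⁻¹ := by simpa using Padic.norm_p (p := 2)

lemma cz_coe (a : ℤ_[2]) : PadicInt.Coe.ringHom a = (a : ℚ_[2]) := rfl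

lemma unit_decomp {c : ℚ_[2]} (hc : c ≠ 0) : ∃ (n : ℤ) (u : ℤ_[2]), ‖u‖ = 1 ∧ c = 2 ^ n * u := by
  have h2 : (2 : ℚ_[2]) ≠ 0 := two_ne_zero
  have h : ‖c * 2 ^ (-c.valuation)‖ = 1 := by
    rw [norm_mul, norm_zpow, two_norm_Q, Padic.norm_eq_zpow_neg_valuation hc]
    simp only [Nat.cast_ofNat, zpow_neg, inv_zpow, inv_inv]
    exact inv_mul_cancel₀ (zpow_ne_zero _ two_ne_zero)
  refine ⟨c.valuation, ⟨c * 2 ^ (-c.valuation), h.le⟩, h, ?_⟩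
  simp only
  rw [mul_comm, mul_assoc, ← zpow_add₀ h2]
  simp

lemma clear_den (x : ℚ_[2]) : ∃ (m : ℕ) (a : ℤ_[2]), x * 2 ^ m = a := by
  by_cases hx : x = 0
  · exact ⟨0, 0, by simp [hx]⟩
  · obtain ⟨n, u, hu, h⟩ := unit_decomp hx
    have h2 : (2 : ℚ_[2]) ≠ 0 := two_ne_zero
    refine ⟨n.natAbs, 2 ^ (n + n.natAbs).toNat * u, ?_⟩
    have e : (n + n.natAbs) = ((n + n.natAbs).toNat : ℤ) := by omega
    have e2 : (2 : ℚ_[2]) ^ ((n + n.natAbs).toNat) = 2 ^ n * 2 ^ n.natAbs := by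
      rw [← zpow_natCast, ← e, zpow_add₀ h2, zpow_natCast]
    have e3 : ((2 ^ (n + n.natAbs).toNat * u : ℤ_[2]) : ℚ_[2]) = 2 ^ (n + n.natAbs).toNat * u := by
      rw [← cz_coe, ← cz_coe, map_mul, map_pow, map_ofNat]
    rw [e3, e2, h]
    ring

lemma cube_classes {c : ℚ_[2]} (hc : c ≠ 0) :
    ∃ k : ℚ_[2], k ≠ 0 ∧ (c = k ^ 3 ∨ c = 2 * k ^ 3 ∨ c = 4 * k ^ 3) := by
  obtain ⟨n, u, hu, h⟩ := unit_decomp hc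
  obtain ⟨v, rfl⟩ := cube_root hu
  have h2 : (2 : ℚ_[2]) ≠ 0 := two_ne_zero
  have hv : (v : ℚ_[2]) ≠ 0 := by
    intro h0
    rw [h] at hc
    push_cast at hc
    rw [h0] at hc
    simp at hc
  refine ⟨2 ^ (n / 3) * v, mul_ne_zero (zpow_ne_zero _ h2) hv, ?_⟩
  have e : ∀ i : ℕ, n = 3 * (n / 3) + i → (2 : ℚ_[2]) ^ n = 2 ^ i * (2 ^ (n / 3)) ^ 3 := by
    intro i hi
    conv_lhs => rw [hi]
    rw [zpow_add₀ h2, mul_comm 3, zpow_mul, zpow_natCast, mul_comm]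
    norm_cast
  push_cast at h
  have : n = 3 * (n / 3) + (0 : ℕ) ∨ n = 3 * (n / 3) + (1 : ℕ) ∨ n = 3 * (n / 3) + (2 : ℕ) := by omega
  rcases this with hi | hi | hi
  · left; rw [h, e 0 hi]; ring
  · right; left; rw [h, e 1 hi]; ring
  · right; right; rw [h, e 2 hi]; ring

section padic5
variable {Ω : Type*} [Field Ω] [Algebra ℚ_[2] Ω] [Algebra.IsAlgebraic ℚ_[2] Ω]

lemma pure_cubic {y : Ω} (hd : Module.finrank ℚ_[2] ℚ_[2]⟮y⟯ = 3) {c : ℚ_[2]}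
    (h : y ^ 3 = algebraMap ℚ_[2] Ω c) : ∃ w ∈ ℚ_[2]⟮y⟯, w ^ 3 = 2 := by
  have : CharZero Ω := charZero_of_injective_algebraMap (algebraMap ℚ_[2] Ω).injective
  have hc : c ≠ 0 := by
    rintro rfl
    rw [map_zero] at h
    have hy : y = 0 := pow_eq_zero_iff (three_ne_zero) |>.1 h
    have := indep3 hd (a := 0) (b := 1) (c := 0) (by simp [hy])
    simp at this
  obtain ⟨k, hk0, hk⟩ := cube_classes hc
  have hk' : algebraMap ℚ_[2] Ω k ≠ 0 := by simpa using hk0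
  have hm := IntermediateField.algebraMap_mem ℚ_[2]⟮y⟯ k
  rcases hk with rfl | rfl | rfl
  · exfalso
    refine cubic_noroot hd (a := 0) (b := 0) (c := - k ^ 3) ?_ k (by ring)
    rw [map_neg]; simp only [map_zero]; linear_combination h
  · refine ⟨y / algebraMap ℚ_[2] Ω k, div_mem (self_mem y) hm, ?_⟩
    rw [div_pow, h]
    simp only [map_mul, map_pow, map_ofNat]
    field_simp
  · refine ⟨y ^ 2 / (2 * algebraMap ℚ_[2] Ω k ^ 2), div_mem (pow_mem (self_mem y) 2)
      (mul_mem (ofNat_mem _ 2) (pow_mem hm 2)), ?_⟩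
    rw [div_pow, ← pow_mul, mul_comm 2 3, pow_mul, h]
    simp only [map_mul, map_pow, map_ofNat]
    field_simp
    norm_num

lemma cubic_class {z : Ω} (hd : Module.finrank ℚ_[2] ℚ_[2]⟮z⟯ = 3) :
    (∃ w ∈ ℚ_[2]⟮z⟯, w ^ 3 = 2) ∨ (∃ w ∈ ℚ_[2]⟮z⟯, w ^ 3 - 3 * w + 1 = 0) := by
  have : CharZero Ω := charZero_of_injective_algebraMap (algebraMap ℚ_[2] Ω).injective
  obtain ⟨a, b, c, h⟩ := repr3 hd (pow_mem (self_mem z) 3)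
  obtain ⟨m, rfl⟩ : ∃ m, c = 3 * m := ⟨c / 3, by field_simp⟩
  obtain ⟨y, hy⟩ : ∃ y, y = z - algebraMap ℚ_[2] Ω m := ⟨_, rfl⟩
  have hym : y ∈ ℚ_[2]⟮z⟯ := by
    rw [hy]; exact sub_mem (self_mem z) (IntermediateField.algebraMap_mem _ _)
  obtain ⟨P, hP⟩ : ∃ P, P = -b - 3 * m ^ 2 := ⟨_, rfl⟩
  obtain ⟨Q, hQ⟩ : ∃ Q, Q = -a - b * m - 2 * m ^ 3 := ⟨_, rfl⟩
  have hPQ : y ^ 3 + algebraMap ℚ_[2] Ω P * y + algebraMap ℚ_[2] Ω Q = 0 := by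
    rw [hy, hP, hQ]
    simp only [map_sub, map_neg, map_mul, map_pow, map_ofNat] at h ⊢
    linear_combination h
  have hyd : ℚ_[2]⟮y⟯ = ℚ_[2]⟮z⟯ ∧ Module.finrank ℚ_[2] ℚ_[2]⟮y⟯ = 3 := by
    rcases sub3 hd hym with ⟨k, hk⟩ | h
    · exfalso
      have := indep3 hd (a := - m - k) (b := 1) (c := 0) (by
        simp only [map_sub, map_neg, map_one, map_zero]
        linear_combination hk - hy)
      simp at this
    · exact h
  rw [← hyd.1]
  have hd' := hyd.2
  by_cases hP0 : P = 0
  · left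
    refine pure_cubic hd' (c := -Q) ?_
    rw [hP0, map_zero] at hPQ
    rw [map_neg]; linear_combination hPQ
  · obtain ⟨T, hT⟩ : ∃ T, T = algebraMap ℚ_[2] Ω (-3 / P) * y ^ 2 - 2 := ⟨_, rfl⟩
    obtain ⟨t, ht⟩ : ∃ t, t = -27 * Q ^ 2 / P ^ 3 - 2 := ⟨_, rfl⟩
    have hTt : T ^ 3 = 3 * T + algebraMap ℚ_[2] Ω t := by
      rw [hT, ht]
      have hP' : algebraMap ℚ_[2] Ω P ≠ 0 := by simpa using hP0
      have eQ : algebraMap ℚ_[2] Ω Q = -(y ^ 3 + algebraMap ℚ_[2] Ω P * y) := by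
        linear_combination hPQ
      simp only [map_sub, map_neg, map_mul, map_pow, map_ofNat, map_div₀, eQ]
      field_simp
      ring
    have hTm : T ∈ ℚ_[2]⟮y⟯ := by
      rw [hT]
      exact sub_mem (mul_mem (IntermediateField.algebraMap_mem _ _) (pow_mem (self_mem y) 2)) (ofNat_mem _ 2)
    have hTd : ℚ_[2]⟮T⟯ = ℚ_[2]⟮y⟯ ∧ Module.finrank ℚ_[2] ℚ_[2]⟮T⟯ = 3 := by
      rcases sub3 hd' hTm with ⟨k, hk⟩ | h
      · exfalso
        have := indep3 hd' (a := - 2 - k) (b := 0) (c := -3 / P) (by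
          rw [map_sub, map_neg, map_zero, map_ofNat]
          linear_combination hk - hT)
        simp [hP0] at this
      · exact h
    rw [← hTd.1]
    have hdT := hTd.2
    have hTcub : T ^ 3 + algebraMap ℚ_[2] Ω 0 * T ^ 2 + algebraMap ℚ_[2] Ω (-3) * T
        + algebraMap ℚ_[2] Ω (-t) = 0 := by
      simp only [map_zero, map_neg, map_ofNat]
      linear_combination hTt
    by_cases htn : ‖t‖ ≤ 1
    · obtain ⟨t', rfl⟩ : ∃ t' : ℤ_[2], t = t' := ⟨⟨t, htn⟩, rfl⟩
      rcases even_or_odd2 t' with ⟨e, rfl⟩ | ⟨e, rfl⟩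
      · exfalso
        obtain ⟨v, hv⟩ := even_root e
        refine cubic_noroot hdT hTcub (v : ℚ_[2]) ?_
        have hv' := congrArg PadicInt.Coe.ringHom hv
        rw [← cz_coe, ← cz_coe]
        simp only [map_sub, map_mul, map_pow, map_ofNat, map_zero] at hv' ⊢
        linear_combination hv'
      · right
        refine rho_lift hdT (t := e) ?_
        rw [hTt, map_ofNat]
        rfl
    · left
      push Not at htn
      have ht0 : t ≠ 0 := by rintro rfl; simp at htn; linarith
      have hn : ‖(t⁻¹) ^ 2‖ < 1 := by
        rw [norm_pow, norm_inv]
        exact pow_lt_one₀ (by positivity) (inv_lt_one_of_one_lt₀ htn) two_ne_zero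
      obtain ⟨v, hv⟩ := quad_root ⟨(t⁻¹) ^ 2, hn.le⟩ hn
      have hv' : (v : ℚ_[2]) ^ 2 - v + (t⁻¹) ^ 2 = 0 := by
        have := congrArg PadicInt.Coe.ringHom hv
        simp only [map_sub, map_add, map_pow, map_zero] at this
        exact this
      obtain ⟨l, hl⟩ : ∃ l : ℚ_[2], l ^ 2 - t * l + 1 = 0 := by
        refine ⟨t * v, ?_⟩
        have : (t * v) ^ 2 - t * (t * v) + 1 = t ^ 2 * ((v : ℚ_[2]) ^ 2 - v + (t⁻¹) ^ 2) := by
          field_simp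
        rw [this, hv', mul_zero]
      have hl' := congrArg (algebraMap ℚ_[2] Ω) hl
      simp only [map_sub, map_add, map_mul, map_pow, map_one, map_zero] at hl'
      have hne : T ^ 2 - 1 ≠ 0 := by
        intro h0
        have := indep3 hdT (a := -1) (b := 0) (c := 1) (by
          simp only [map_neg, map_one, map_zero]; linear_combination h0)
        simp at this
      obtain ⟨r, hr⟩ : ∃ r, r = (algebraMap ℚ_[2] Ω l + T) / (T ^ 2 - 1) := ⟨_, rfl⟩
      have hrm : r ∈ ℚ_[2]⟮T⟯ := by
        rw [hr]
        exact div_mem (add_mem (IntermediateField.algebraMap_mem _ _) (self_mem T))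
          (sub_mem (pow_mem (self_mem T) 2) (one_mem _))
      have hr3 : r ^ 3 = algebraMap ℚ_[2] Ω l := by
        rw [hr, div_pow, div_eq_iff (pow_ne_zero _ hne)]
        linear_combination (1 - algebraMap ℚ_[2] Ω l * (algebraMap ℚ_[2] Ω t + T ^ 3)) * hTt + (3 * T + algebraMap ℚ_[2] Ω t + algebraMap ℚ_[2] Ω l) * hl'
      rcases sub3 hdT hrm with ⟨k, hk⟩ | h
      · exfalso
        rw [hr, div_eq_iff hne] at hk
        have := indep3 hdT (a := l + k) (b := 1) (c := -k) (by
          simp only [map_add, map_neg, map_one]; linear_combination hk)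
        simp at this
      · rw [← h.1]
        exact pure_cubic h.2 hr3

end padic5
end Q16


namespace Q16

/-- Norm form of `ℤ[T]`, `T³ = A T + B`. -/
def nm {R : Type*} [CommRing R] (A B : R) (x : R × R × R) : R :=
  x.1 * ((x.1 + A * x.2.2) ^ 2 - x.2.1 * (A * x.2.1 + B * x.2.2))
    - x.2.1 * (B * x.2.2 * (x.1 + A * x.2.2) - B * x.2.1 ^ 2)
    + x.2.2 * (B * x.2.2 * (A * x.2.1 + B * x.2.2) - (x.1 + A * x.2.2) * (B * x.2.1))

/-- Coordinatewise image of a triple. -/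
def map3 {R S : Type*} [CommRing R] [CommRing S] (f : R →+* S) (x : R × R × R) : S × S × S :=
  (f x.1, f x.2.1, f x.2.2)

lemma map3_mul3 {R S : Type*} [CommRing R] [CommRing S] (f : R →+* S) (A B : R) (x y : R × R × R) :
    map3 f (mul3 A B x y) = mul3 (f A) (f B) (map3 f x) (map3 f y) := by
  simp [map3, mul3]

lemma map_nm {R S : Type*} [CommRing R] [CommRing S] (f : R →+* S) (A B : R) (x : R × R × R) :
    f (nm A B x) = nm (f A) (f B) (map3 f x) := by
  simp [map3, nm]

/-- Natural number casts of triples. -/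
def nc {R : Type*} [CommRing R] (x : ℕ × ℕ × ℕ) : R × R × R := (x.1, x.2.1, x.2.2)

def m8 (A B : ℕ) (x y : ℕ × ℕ × ℕ) : ℕ × ℕ × ℕ :=
  ((x.1 * y.1 + B * (x.2.1 * y.2.2 + x.2.2 * y.2.1)) % 8,
   (x.1 * y.2.1 + x.2.1 * y.1 + A * (x.2.1 * y.2.2 + x.2.2 * y.2.1) + B * (x.2.2 * y.2.2)) % 8,
   (x.1 * y.2.2 + x.2.1 * y.2.1 + x.2.2 * y.1 + A * (x.2.2 * y.2.2)) % 8)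

lemma nc_m8 (A B : ℕ) (x y : ℕ × ℕ × ℕ) :
    (nc (m8 A B x y) : ZMod (2 ^ 3) × ZMod (2 ^ 3) × ZMod (2 ^ 3)) = mul3 (A : ZMod (2 ^ 3)) B (nc x) (nc y) := by
  have h : ∀ n : ℕ, ((n % 8 : ℕ) : ZMod (2 ^ 3)) = n := fun n => ZMod.natCast_mod n 8
  simp only [nc, m8, mul3, h]
  push_cast
  rfl

def nm8 (A B : ℕ) (x : ℕ × ℕ × ℕ) : ℕ :=
  (x.1 * ((x.1 + A * x.2.2) ^ 2 + 7 * (x.2.1 * (A * x.2.1 + B * x.2.2)))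
    + 7 * (x.2.1 * (B * x.2.2 * (x.1 + A * x.2.2) + 7 * (B * x.2.1 ^ 2)))
    + x.2.2 * (B * x.2.2 * (A * x.2.1 + B * x.2.2) + 7 * ((x.1 + A * x.2.2) * (B * x.2.1)))) % 8

lemma nc_nm8 (A B : ℕ) (x : ℕ × ℕ × ℕ) :
    ((nm8 A B x : ℕ) : ZMod (2 ^ 3)) = nm (A : ZMod (2 ^ 3)) B (nc x) := by
  have h : ∀ n : ℕ, ((n % 8 : ℕ) : ZMod (2 ^ 3)) = n := fun n => ZMod.natCast_mod n 8
  have h7 : (7 : ZMod (2 ^ 3)) = -1 := by decide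
  simp only [nc, nm8, nm, h]
  push_cast
  rw [h7]
  ring

def anyT (A B : ℕ) (ts : List (ℕ × ℕ × ℕ)) (n r : ℕ × ℕ × ℕ) : Bool :=
  ts.any fun t => m8 A B (m8 A B n r) (m8 A B t t) == (1, 0, 0)

def ts1 : List (ℕ × ℕ × ℕ) :=
  (List.range 4).flatMap fun b => (List.range 4).map fun c => (1, b, c)

def ts2 : List (ℕ × ℕ × ℕ) :=
  (List.range 3).flatMap fun a => (List.range 4).flatMap fun b => (List.range 4).map fun c => (a, b, c)

lemma chk_pi : ((List.range 8).all fun a => (List.range 8).all fun b => (List.range 8).all fun c =>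
    !(nm8 0 2 (a, b, c) == 1) || (anyT 0 2 ts1 (a, b, c) (1, 0, 0) || anyT 0 2 ts1 (a, b, c) (7, 1, 0)
      || anyT 0 2 ts1 (a, b, c) (1, 2, 7) || anyT 0 2 ts1 (a, b, c) (3, 1, 2))) = true := by
  decide +kernel

lemma chk_rho : ((List.range 8).all fun a => (List.range 8).all fun b => (List.range 8).all fun c =>
    !(nm8 3 7 (a, b, c) == 1) || (anyT 3 7 ts2 (a, b, c) (1, 0, 0) || anyT 3 7 ts2 (a, b, c) (0, 7, 0)
      || anyT 3 7 ts2 (a, b, c) (2, 0, 7) || anyT 3 7 ts2 (a, b, c) (6, 1, 1))) = true := by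
  decide +kernel

end Q16


namespace Q16

/-- Reduction modulo 8. -/
noncomputable abbrev red8 : ℤ_[2] →+* ZMod (2 ^ 3) := PadicInt.toZModPow 3

lemma red8_two : red8 2 = (2 : ℕ) := by rw [map_ofNat]; rfl

lemma red8_three : red8 3 = (3 : ℕ) := by rw [map_ofNat]; rfl

lemma red8_zero {x : ℤ_[2]} (h : red8 x = 0) : ∃ y, x = 8 * y := by
  have h1 : x ∈ RingHom.ker (PadicInt.toZModPow (p := 2) 3) := h
  rw [PadicInt.ker_toZModPow, Ideal.mem_span_singleton] at h1
  obtain ⟨y, hy⟩ := h1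
  refine ⟨y, ?_⟩
  rw [hy]; norm_num

lemma red8_unit {d : ℤ_[2]} (hd : ‖d‖ = 1) : red8 (d ^ 2) = 1 := by
  have h1 := (PadicInt.isUnit_iff.2 hd).map red8
  rw [map_pow]
  generalize red8 d = e at *
  have : ∀ e f : ZMod (2 ^ 3), e * f = 1 → e ^ 2 = 1 := by decide
  obtain ⟨f, hf⟩ := h1.exists_right_inv
  exact this e f hf

lemma nc_val (v : Z3) : ∃ a < 8, ∃ b < 8, ∃ c < 8, map3 red8 v = nc (a, b, c) := by
  refine ⟨(red8 v.1).val, ZMod.val_lt _, (red8 v.2.1).val, ZMod.val_lt _, (red8 v.2.2).val,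
    ZMod.val_lt _, ?_⟩
  simp only [map3, nc, ZMod.natCast_zmod_val]

section padic7
variable {Ω : Type*} [Field Ω] [Algebra ℚ_[2] Ω] [Algebra.IsAlgebraic ℚ_[2] Ω]

lemma of_anyT {T : Ω} (hd : Module.finrank ℚ_[2] ℚ_[2]⟮T⟯ = 3) {A B : ℤ_[2]} {A' B' : ℕ}
    (hT : T ^ 3 = io A * T + io B) (hA : red8 A = A') (hB : red8 B = B')
    {ts : List (ℕ × ℕ × ℕ)} {v r : Z3} {n r' : ℕ × ℕ × ℕ} (hv : map3 red8 v = nc n)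
    (hr : map3 red8 r = nc r') (h : anyT A' B' ts n r' = true) :
    ∃ s ∈ ℚ_[2]⟮T⟯, s ≠ 0 ∧ ev T v * s ^ 2 = ev T r := by
  rw [anyT, List.any_eq_true] at h
  obtain ⟨t, -, ht⟩ := h
  have ht' : m8 A' B' (m8 A' B' n r') (m8 A' B' t t) = (1, 0, 0) := by simpa using ht
  have ht2 := congrArg (nc (R := ZMod (2 ^ 3))) ht'
  rw [nc_m8, nc_m8, nc_m8, ← hA, ← hB, ← hv, ← hr] at ht2
  have htt : (nc t : ZMod (2 ^ 3) × ZMod (2 ^ 3) × ZMod (2 ^ 3)) = map3 red8 (nc t) := by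
    simp only [nc, map3, map_natCast]
  rw [htt, ← map3_mul3, ← map3_mul3, ← map3_mul3] at ht2
  obtain ⟨x, hx⟩ : ∃ x, x = mul3 A B (mul3 A B v r) (mul3 A B (nc t) (nc t)) := ⟨_, rfl⟩
  rw [← hx] at ht2
  simp only [map3, nc, Prod.mk.injEq, Nat.cast_one, Nat.cast_zero] at ht2
  obtain ⟨h1, h2, h3⟩ := ht2
  obtain ⟨w1, hw1⟩ := red8_zero (x := x.1 - 1) (by rw [map_sub, h1, map_one, sub_self])
  obtain ⟨w2, hw2⟩ := red8_zero h2
  obtain ⟨w3, hw3⟩ := red8_zero h3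
  have hxw : ev T x = 1 + 8 * ev T (w1, w2, w3) := by
    have e1 : x.1 = 1 + 8 * w1 := by linear_combination hw1
    simp only [ev, e1, hw2, hw3, map_add, map_mul, map_one, map_ofNat]
    ring
  obtain ⟨y, hym, hy0, hy⟩ := sqrt_lift hd hT (w1, w2, w3)
  rw [← hxw, hx, ev_mul hT, ev_mul hT, ev_mul hT] at hy
  have hne : ev T v * ev T r * (ev T (nc t) * ev T (nc t)) ≠ 0 := by
    rw [← hy]; exact pow_ne_zero _ hy0
  have hne' := hne
  simp only [mul_ne_zero_iff] at hne'
  refine ⟨ev T (nc t) * ev T r / y, div_mem (mul_mem (ev_mem _ _) (ev_mem _ _)) hym,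
    div_ne_zero (mul_ne_zero hne'.2.1 hne'.1.2) hy0, ?_⟩
  rw [div_pow, hy]
  rw [mul_div_assoc', div_eq_iff hne]
  ring

/-- Cayley–Hamilton. -/
lemma ev_ch {T : Ω} {A B : ℤ_[2]} (hT : T ^ 3 = io A * T + io B) (v : Z3) :
    ∃ a b : ℤ_[2], ev T v ^ 3 + io a * ev T v ^ 2 + io b * ev T v - io (nm A B v) = 0 := by
  refine ⟨-(3 * v.1 + 2 * A * v.2.2), 2 * v.1 * (v.1 + A * v.2.2) + (v.1 + A * v.2.2) ^ 2
    - 3 * B * v.2.1 * v.2.2 - A * v.2.1 ^ 2, ?_⟩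
  have h : mul3 A B v (mul3 A B v v) + (-(3 * v.1 + 2 * A * v.2.2)) • mul3 A B v v
    + (2 * v.1 * (v.1 + A * v.2.2) + (v.1 + A * v.2.2) ^ 2
    - 3 * B * v.2.1 * v.2.2 - A * v.2.1 ^ 2) • v - (nm A B v, 0, 0) = 0 := by
    obtain ⟨a, b, c⟩ := v
    simp only [mul3, nm, Prod.smul_mk, Prod.mk_add_mk, Prod.mk_sub_mk, smul_eq_mul, Prod.mk_eq_zero]
    refine ⟨?_, ?_, ?_⟩ <;> ring
  have h2 := congrArg (ev T) h
  rw [ev_sub, ev_add, ev_add, ev_mul hT, ev_mul hT, ev_smul, ev_smul, ev_mul hT, ev_const, ev_zero] at h2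
  linear_combination h2

/-- The norm is the constant coefficient of any cubic equation. -/
lemma nm_eq {T : Ω} {A B : ℤ_[2]} (hT : T ^ 3 = io A * T + io B) (v : Z3)
    (hd : Module.finrank ℚ_[2] ℚ_[2]⟮ev T v⟯ = 3) {a b c : ℚ_[2]}
    (h : ev T v ^ 3 + algebraMap ℚ_[2] Ω a * ev T v ^ 2 + algebraMap ℚ_[2] Ω b * ev T v
      + algebraMap ℚ_[2] Ω c = 0) : ((nm A B v : ℤ_[2]) : ℚ_[2]) = -c := by
  obtain ⟨a', b', h'⟩ := ev_ch hT v
  simp only [io_def] at h'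
  have := indep3 hd (a := c + ((nm A B v : ℤ_[2]) : ℚ_[2])) (b := b - b') (c := a - a') (by
    rw [map_add, map_sub, map_sub]
    linear_combination h - h')
  linear_combination this.1

lemma even_of_pow {d : ℤ_[2]} {n : ℕ} {u : ℤ_[2]} (hu : ‖u‖ = 1) (hd : d = 2 ^ n * u) {e : ℤ_[2]}
    (h : d ^ 2 = 2 * e) : ∃ m d', n = m + 1 ∧ d = 2 * d' ∧ d' = 2 ^ m * u := by
  rcases n with _ | m
  · exfalso
    have h1 : ‖d ^ 2‖ = 1 := by rw [hd]; simp [hu]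
    rw [h] at h1
    have := norm_two_mul e
    linarith
  · exact ⟨m, 2 ^ m * u, rfl, by rw [hd]; ring, rfl⟩

lemma sq_pi {T : Ω} (hd : Module.finrank ℚ_[2] ℚ_[2]⟮T⟯ = 3) (hT : T ^ 3 = 2) (n : ℕ) :
    ∀ (v : Z3) (d u : ℤ_[2]), ‖u‖ = 1 → d = 2 ^ n * u → nm 0 2 v = d ^ 2 →
    ∃ s ∈ ℚ_[2]⟮T⟯, s ≠ 0 ∧ (ev T v * s ^ 2 = 1 ∨ ev T v * s ^ 2 = T - 1 ∨
      ev T v * s ^ 2 = 1 + 2 * T - T ^ 2 ∨ ev T v * s ^ 2 = 3 + T + 2 * T ^ 2) := by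
  have hT' : T ^ 3 = io 0 * T + io 2 := by rw [hT, map_zero, map_ofNat]; ring
  induction n with
  | zero =>
    intro v d u hu hdu hn
    have hd1 : ‖d‖ = 1 := by rw [hdu]; simp [hu]
    obtain ⟨a, ha, b, hb, c, hc, hv⟩ := nc_val v
    have h1 := red8_unit hd1
    rw [← hn, map_nm, hv] at h1
    have hA : red8 0 = (0 : ℕ) := by simp
    have hB : red8 2 = (2 : ℕ) := red8_two
    have h2 := chk_pi
    simp only [List.all_eq_true, List.mem_range] at h2
    have h3 := h2 a ha b hb c hc
    have h4 : nm8 0 2 (a, b, c) = 1 := by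
      have e := nc_nm8 0 2 (a, b, c)
      rw [← hA, ← hB, h1] at e
      have e2 : ((nm8 0 2 (a, b, c) : ℕ) : ZMod (2 ^ 3)) = ((1 : ℕ) : ZMod (2 ^ 3)) := by
        rw [e]; simp
      rw [ZMod.natCast_eq_natCast_iff] at e2
      have e3 : nm8 0 2 (a, b, c) < 8 := Nat.mod_lt _ (by norm_num)
      unfold Nat.ModEq at e2
      omega
    rw [h4] at h3
    simp only [BEq.rfl, Bool.not_true, Bool.false_or, Bool.or_eq_true] at h3
    have go : ∀ (r : Z3) (r' : ℕ × ℕ × ℕ), map3 red8 r = nc r' → anyT 0 2 ts1 (a, b, c) r' = true →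
        ∃ s ∈ ℚ_[2]⟮T⟯, s ≠ 0 ∧ ev T v * s ^ 2 = ev T r :=
      fun r r' hr h => of_anyT hd hT' hA hB hv hr h
    have m1 : red8 (-1) = ((7 : ℕ) : ZMod (2 ^ 3)) := by rw [map_neg, map_one]; decide
    rcases h3 with ((h3 | h3) | h3) | h3
    · obtain ⟨s, hs, hs0, h⟩ := go (1, 0, 0) _ (by simp [map3, nc]) h3
      exact ⟨s, hs, hs0, Or.inl (by rw [h]; simp [ev])⟩
    · obtain ⟨s, hs, hs0, h⟩ := go (-1, 1, 0) _ (by simp only [map3, nc, m1]; simp) h3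
      exact ⟨s, hs, hs0, Or.inr (Or.inl (by rw [h]; simp [ev]; ring))⟩
    · obtain ⟨s, hs, hs0, h⟩ := go (1, 2, -1) _ (by simp only [map3, nc, m1, red8_two]; simp) h3
      refine ⟨s, hs, hs0, Or.inr (Or.inr (Or.inl (?_)))⟩
      rw [h]; simp only [ev, map_neg, map_one, map_ofNat]; ring
    · obtain ⟨s, hs, hs0, h⟩ := go (3, 1, 2) _ (by simp only [map3, nc, red8_two, red8_three]; simp) h3
      refine ⟨s, hs, hs0, Or.inr (Or.inr (Or.inr (?_)))⟩
      rw [h]; simp only [ev, map_neg, map_one, map_ofNat]; ring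
  | succ n ih =>
    rintro ⟨a, b, c⟩ d u hu hdu hn
    have hn' : nm 0 2 (a, b, c) = a ^ 3 + 2 * b ^ 3 + 4 * c ^ 3 - 6 * a * b * c := by
      simp only [nm]; ring
    rw [hn'] at hn
    obtain ⟨d', hd'⟩ : ∃ d', d' = 2 ^ n * u := ⟨_, rfl⟩
    have hdd : d = 2 * d' := by rw [hdu, hd']; ring
    subst hdd
    rcases even_or_odd2 a with ⟨a, rfl⟩ | ⟨a, rfl⟩
    swap
    · exfalso
      have h1 := norm_odd (3 * a + 6 * a ^ 2 + 4 * a ^ 3 + b ^ 3 + 2 * c ^ 3 - 3 * (1 + 2 * a) * b * c)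
      have h2 := norm_two_mul (2 * d' ^ 2)
      have : 1 + 2 * (3 * a + 6 * a ^ 2 + 4 * a ^ 3 + b ^ 3 + 2 * c ^ 3 - 3 * (1 + 2 * a) * b * c)
        = 2 * (2 * d' ^ 2) := by linear_combination hn
      rw [this] at h1
      linarith
    rcases even_or_odd2 b with ⟨b, rfl⟩ | ⟨b, rfl⟩
    swap
    · exfalso
      have h1 := norm_odd (3 * b + 6 * b ^ 2 + 4 * b ^ 3)
      have h2 := norm_two_mul (d' ^ 2 - 2 * a ^ 3 - c ^ 3 + 3 * a * (1 + 2 * b) * c)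
      have : 1 + 2 * (3 * b + 6 * b ^ 2 + 4 * b ^ 3)
        = 2 * (d' ^ 2 - 2 * a ^ 3 - c ^ 3 + 3 * a * (1 + 2 * b) * c) := by
        refine mul_left_cancel₀ (two_ne_zero (α := ℤ_[2])) ?_
        linear_combination hn
      rw [this] at h1
      linarith
    obtain ⟨s, hs, hs0, h⟩ := ih (c, a, b) d' u hu hd' (by
      simp only [nm]
      refine mul_left_cancel₀ (show (4 : ℤ_[2]) ≠ 0 by norm_num) ?_
      linear_combination hn)
    have : CharZero Ω := charZero_of_injective_algebraMap (algebraMap ℚ_[2] Ω).injective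
    have hT0 : T ≠ 0 := by rintro rfl; norm_num at hT
    have e : ev T (2 * a, 2 * b, c) = T ^ 2 * ev T (c, a, b) := by
      simp only [ev, map_mul, map_ofNat]
      linear_combination (-io a - io b * T) * hT
    refine ⟨s / T, div_mem hs (self_mem T), div_ne_zero hs0 hT0, ?_⟩
    have e2 : ev T (2 * a, 2 * b, c) * (s / T) ^ 2 = ev T (c, a, b) * s ^ 2 := by
      rw [e]; field_simp
    rw [e2]
    exact h

lemma rho_even {v : Z3} {e : ℤ_[2]} (h : nm 3 (-1) v = 2 * e) : ∃ w, v = (2 : ℤ_[2]) • w := by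
  have h1 := congrArg (PadicInt.toZMod (p := 2)) h
  rw [map_nm] at h1
  have key : ∀ a b c : ZMod 2, nm 3 (-1) (a, b, c) = 0 → a = 0 ∧ b = 0 ∧ c = 0 := by
    unfold nm; decide
  have e2 : (2 : ZMod 2) = 0 := by decide
  rw [map_mul, map_ofNat, map_ofNat, map_neg, map_one, e2, zero_mul] at h1
  obtain ⟨h2, h3, h4⟩ := key _ _ _ h1
  have ev : ∀ x : ℤ_[2], PadicInt.toZMod x = 0 → ∃ y, x = 2 * y := by
    intro x hx
    rcases even_or_odd2 x with h | ⟨y, rfl⟩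
    · exact h
    · simp only [map_add, map_mul, map_one, map_ofNat, e2, zero_mul, add_zero] at hx
      exact absurd hx (by decide)
  obtain ⟨a, ha⟩ := ev _ h2
  obtain ⟨b, hb⟩ := ev _ h3
  obtain ⟨c, hc⟩ := ev _ h4
  refine ⟨(a, b, c), ?_⟩
  obtain ⟨x, y, z⟩ := v
  simp only at ha hb hc
  simp [ha, hb, hc]

lemma nm_smul (A B k : ℤ_[2]) (v : Z3) : nm A B (k • v) = k ^ 3 * nm A B v := by
  simp only [nm, Prod.smul_fst, Prod.smul_snd, smul_eq_mul]; ring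

lemma sq_rho {T : Ω} (hd : Module.finrank ℚ_[2] ℚ_[2]⟮T⟯ = 3) (hT : T ^ 3 - 3 * T + 1 = 0) (n : ℕ) :
    ∀ (v : Z3) (d u : ℤ_[2]), ‖u‖ = 1 → d = 2 ^ n * u → nm 3 (-1) v = d ^ 2 →
    ∃ s ∈ ℚ_[2]⟮T⟯, s ≠ 0 ∧ (ev T v * s ^ 2 = 1 ∨
      (ev T v * s ^ 2) ^ 3 - 3 * (ev T v * s ^ 2) - 1 = 0) := by
  have hT' : T ^ 3 = io 3 * T + io (-1) := by
    rw [map_neg, map_one, map_ofNat]; linear_combination hT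
  induction n using Nat.strong_induction_on with
  | _ n ih =>
  intro v d u hu hdu hn
  rcases Nat.eq_zero_or_pos n with rfl | hpos
  · have hd1 : ‖d‖ = 1 := by rw [hdu]; simp [hu]
    obtain ⟨a, ha, b, hb, c, hc, hv⟩ := nc_val v
    have h1 := red8_unit hd1
    rw [← hn, map_nm, hv] at h1
    have m1 : red8 (-1) = ((7 : ℕ) : ZMod (2 ^ 3)) := by rw [map_neg, map_one]; decide
    have m2 : red8 (-2) = ((6 : ℕ) : ZMod (2 ^ 3)) := by rw [map_neg, map_ofNat]; decide
    have hA : red8 3 = (3 : ℕ) := red8_three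
    have h2 := chk_rho
    simp only [List.all_eq_true, List.mem_range] at h2
    have h3 := h2 a ha b hb c hc
    have h4 : nm8 3 7 (a, b, c) = 1 := by
      have e := nc_nm8 3 7 (a, b, c)
      rw [← hA, ← m1, h1] at e
      have e2 : ((nm8 3 7 (a, b, c) : ℕ) : ZMod (2 ^ 3)) = ((1 : ℕ) : ZMod (2 ^ 3)) := by
        rw [e]; simp
      rw [ZMod.natCast_eq_natCast_iff] at e2
      have e3 : nm8 3 7 (a, b, c) < 8 := Nat.mod_lt _ (by norm_num)
      unfold Nat.ModEq at e2
      omega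
    rw [h4] at h3
    simp only [BEq.rfl, Bool.not_true, Bool.false_or, Bool.or_eq_true] at h3
    have go : ∀ (r : Z3) (r' : ℕ × ℕ × ℕ), map3 red8 r = nc r' → anyT 3 7 ts2 (a, b, c) r' = true →
        ∃ s ∈ ℚ_[2]⟮T⟯, s ≠ 0 ∧ ev T v * s ^ 2 = ev T r :=
      fun r r' hr h => of_anyT hd hT' hA m1 hv hr h
    rcases h3 with ((h3 | h3) | h3) | h3
    · obtain ⟨s, hs, hs0, h⟩ := go (1, 0, 0) _ (by simp [map3, nc]) h3
      exact ⟨s, hs, hs0, Or.inl (by rw [h]; simp [ev])⟩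
    · obtain ⟨s, hs, hs0, h⟩ := go (0, -1, 0) _ (by simp only [map3, nc, m1]; simp) h3
      refine ⟨s, hs, hs0, Or.inr ?_⟩
      rw [h]; simp only [ev, map_neg, map_one, map_ofNat, map_zero]
      linear_combination -hT
    · obtain ⟨s, hs, hs0, h⟩ := go (2, 0, -1) _ (by simp only [map3, nc, m1, red8_two]; simp) h3
      refine ⟨s, hs, hs0, Or.inr ?_⟩
      rw [h]; simp only [ev, map_neg, map_one, map_ofNat, map_zero]
      linear_combination ((1) * T ^ 0 + (3) * T ^ 1 + (0) * T ^ 2 + (-1) * T ^ 3) * hT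
    · obtain ⟨s, hs, hs0, h⟩ := go (-2, 1, 1) _ (by simp only [map3, nc, m2]; simp) h3
      refine ⟨s, hs, hs0, Or.inr ?_⟩
      rw [h]; simp only [ev, map_neg, map_one, map_ofNat, map_zero]
      linear_combination ((-3) * T ^ 0 + (0) * T ^ 1 + (3) * T ^ 2 + (1) * T ^ 3) * hT
  · have : CharZero Ω := charZero_of_injective_algebraMap (algebraMap ℚ_[2] Ω).injective
    have t2 : (2 : ℤ_[2]) ≠ 0 := two_ne_zero
    obtain ⟨m, rfl⟩ : ∃ m, n = m + 1 := ⟨n - 1, by omega⟩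
    obtain ⟨v1, rfl⟩ := rho_even (v := v) (e := 2 * (2 ^ m * u) ^ 2) (by rw [hn, hdu]; ring)
    rw [nm_smul] at hn
    obtain ⟨m, d2, rfl, hd1, hd2⟩ := even_of_pow (d := 2 ^ m * u) (n := m) hu rfl (e := nm 3 (-1) v1) (by
      refine mul_left_cancel₀ (mul_ne_zero t2 t2) ?_
      rw [hdu] at hn
      linear_combination -hn)
    obtain ⟨v2, rfl⟩ := rho_even (v := v1) (e := d2 ^ 2) (by
      refine mul_left_cancel₀ (mul_ne_zero t2 (mul_ne_zero t2 t2)) ?_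
      rw [hdu, pow_succ 2 (m + 1)] at hn
      linear_combination hn + (4 * (2 ^ (m + 1) * u) + 8 * d2) * hd1)
    rw [nm_smul] at hn
    obtain ⟨m, d3, rfl, hd4, hd3⟩ := even_of_pow (d := d2) (n := m) hu hd2 (e := 2 * nm 3 (-1) v2) (by
      refine mul_left_cancel₀ (mul_ne_zero (mul_ne_zero t2 t2) (mul_ne_zero t2 t2)) ?_
      have : d = 4 * d2 := by rw [hdu, hd2]; ring
      rw [this] at hn
      linear_combination -hn)
    obtain ⟨s, hs, hs0, h⟩ := ih m (by omega) v2 d3 u hu hd3 (by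
      have : d = 8 * d3 := by rw [hdu, hd3]; ring
      rw [this] at hn
      refine mul_left_cancel₀ (mul_ne_zero (pow_ne_zero 3 t2) (pow_ne_zero 3 t2)) ?_
      linear_combination hn)
    refine ⟨s / 2, div_mem hs (ofNat_mem _ 2), div_ne_zero hs0 two_ne_zero, ?_⟩
    have e2 : ev T ((2 : ℤ_[2]) • (2 : ℤ_[2]) • v2) * (s / 2) ^ 2 = ev T v2 * s ^ 2 := by
      rw [ev_smul, ev_smul, map_ofNat]; ring
    rw [e2]
    exact h

end padic7
end Q16


namespace Q16

/-- Rational roots of monic integral quartics are integral. -/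
lemma int_root {k : ℚ_[2]} (a b c d : ℤ) (h : k ^ 4 + a * k ^ 3 + b * k ^ 2 + c * k + d = 0) :
    ∃ x : ℤ_[2], k = x := by
  have hi : IsIntegral ℤ_[2] k := by
    refine ⟨X ^ 4 + C (a : ℤ_[2]) * X ^ 3 + C (b : ℤ_[2]) * X ^ 2 + C (c : ℤ_[2]) * X + C (d : ℤ_[2]), ?_, ?_⟩
    · monicity!
    · simp only [eval₂_add, eval₂_mul, eval₂_pow, eval₂_X, eval₂_C]
      simp only [map_intCast]
      exact h
  obtain ⟨x, hx⟩ := IsIntegrallyClosed.isIntegral_iff.1 hi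
  exact ⟨x, hx.symm⟩

lemma quartic_int_noroot (p q r : ℤ) (n : ℕ)
    (h : ∀ e : ZMod (2 ^ n), e ^ 4 + p * e ^ 2 + q * e + r ≠ 0) (k : ℚ_[2]) :
    k ^ 4 + p * k ^ 2 + q * k + r ≠ 0 := by
  intro hk
  obtain ⟨x, rfl⟩ := int_root (k := k) 0 p q r (by rw [← hk]; push_cast; ring)
  have : x ^ 4 + p * x ^ 2 + q * x + r = 0 := by
    apply PadicInt.ext
    exact_mod_cast hk
  have h2 := congrArg (PadicInt.toZModPow (p := 2) n) this
  simp only [map_add, map_mul, map_pow, map_intCast, map_zero] at h2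
  exact h _ h2

lemma cubic_int_noroot (p q r : ℤ) (n : ℕ)
    (h : ∀ e : ZMod (2 ^ n), e ^ 3 + p * e ^ 2 + q * e + r ≠ 0) (k : ℚ_[2]) :
    k ^ 3 + p * k ^ 2 + q * k + r ≠ 0 := by
  intro hk
  obtain ⟨x, rfl⟩ := int_root (k := k) p q r 0 (by push_cast; linear_combination k * hk)
  have : x ^ 3 + p * x ^ 2 + q * x + r = 0 := by
    apply PadicInt.ext
    exact_mod_cast hk
  have h2 := congrArg (PadicInt.toZModPow (p := 2) n) this
  simp only [map_add, map_mul, map_pow, map_intCast, map_zero] at h2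
  exact h _ h2

lemma quad_int_noroot (q r : ℤ) (n : ℕ)
    (h : ∀ e : ZMod (2 ^ n), e ^ 2 + q * e + r ≠ 0) (k : ℚ_[2]) :
    k ^ 2 + q * k + r ≠ 0 := by
  intro hk
  obtain ⟨x, rfl⟩ := int_root (k := k) q r 0 0 (by push_cast; linear_combination k ^ 2 * hk)
  have : x ^ 2 + q * x + r = 0 := by
    apply PadicInt.ext
    exact_mod_cast hk
  have h2 := congrArg (PadicInt.toZModPow (p := 2) n) this
  simp only [map_add, map_mul, map_pow, map_intCast, map_zero] at h2
  exact h _ h2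

lemma no_pi (k : ℚ_[2]) : k ^ 3 ≠ 2 := by
  have := cubic_int_noroot 0 0 (-2) 2 (by decide) k
  intro h
  apply this
  push_cast
  linear_combination h

lemma no_rho (k : ℚ_[2]) : k ^ 3 - 3 * k + 1 ≠ 0 := by
  have := cubic_int_noroot 0 (-3) 1 1 (by decide) k
  intro h
  apply this
  push_cast
  linear_combination h

lemma no_omega (k : ℚ_[2]) : k ^ 2 + k + 1 ≠ 0 := by
  have := quad_int_noroot 1 1 1 (by decide) k
  intro h
  apply this
  push_cast
  linear_combination h

section padic8
variable {Ω : Type*} [Field Ω] [Algebra ℚ_[2] Ω] [Algebra.IsAlgebraic ℚ_[2] Ω]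

lemma pi_gen {z T : Ω} (hz : Module.finrank ℚ_[2] ℚ_[2]⟮z⟯ = 3) (hm : T ∈ ℚ_[2]⟮z⟯) (hT : T ^ 3 = 2) :
    ℚ_[2]⟮T⟯ = ℚ_[2]⟮z⟯ ∧ Module.finrank ℚ_[2] ℚ_[2]⟮T⟯ = 3 := by
  rcases sub3 hz hm with ⟨k, rfl⟩ | h
  · exfalso
    apply no_pi k
    apply (algebraMap ℚ_[2] Ω).injective
    rw [map_pow, hT, map_ofNat]
  · exact h

lemma rho_gen {z T : Ω} (hz : Module.finrank ℚ_[2] ℚ_[2]⟮z⟯ = 3) (hm : T ∈ ℚ_[2]⟮z⟯)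
    (hT : T ^ 3 - 3 * T + 1 = 0) :
    ℚ_[2]⟮T⟯ = ℚ_[2]⟮z⟯ ∧ Module.finrank ℚ_[2] ℚ_[2]⟮T⟯ = 3 := by
  rcases sub3 hz hm with ⟨k, rfl⟩ | h
  · exfalso
    apply no_rho k
    apply (algebraMap ℚ_[2] Ω).injective
    rw [map_add, map_sub, map_mul, map_pow, map_ofNat, map_one, map_zero, hT]
  · exact h

/-- Clearing denominators. -/
lemma clear3 {T y : Ω} (hd : Module.finrank ℚ_[2] ℚ_[2]⟮T⟯ = 3) (hy : y ∈ ℚ_[2]⟮T⟯) :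
    ∃ (m : ℕ) (v : Z3), y * 2 ^ m = ev T v := by
  obtain ⟨a, b, c, rfl⟩ := repr3 hd hy
  obtain ⟨i, a', ha⟩ := clear_den a
  obtain ⟨j, b', hb⟩ := clear_den b
  obtain ⟨k, c', hc⟩ := clear_den c
  refine ⟨i + j + k, (a' * 2 ^ (j + k), b' * 2 ^ (i + k), c' * 2 ^ (i + j)), ?_⟩
  have ha' := congrArg (algebraMap ℚ_[2] Ω) ha
  have hb' := congrArg (algebraMap ℚ_[2] Ω) hb
  have hc' := congrArg (algebraMap ℚ_[2] Ω) hc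
  simp only [map_mul, map_pow, map_ofNat] at ha' hb' hc'
  simp only [ev, map_mul, map_pow, map_ofNat]
  simp only [io_def, ← ha', ← hb', ← hc']
  ring

lemma int_of_sq {d : ℚ_[2]} {a : ℤ_[2]} (h : (a : ℚ_[2]) = d ^ 2) : ∃ d' : ℤ_[2], d = d' := by
  have : ‖d‖ ≤ 1 := by
    have h1 : ‖d‖ ^ 2 ≤ 1 := by rw [← norm_pow, ← h]; exact a.2
    nlinarith [norm_nonneg d]
  exact ⟨⟨d, this⟩, rfl⟩

lemma pre_class {z T : Ω} (hz : Module.finrank ℚ_[2] ℚ_[2]⟮z⟯ = 3) {A B : ℤ_[2]}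
    (hT : T ^ 3 = io A * T + io B)
    (hTz : ℚ_[2]⟮T⟯ = ℚ_[2]⟮z⟯) (hd : Module.finrank ℚ_[2] ℚ_[2]⟮T⟯ = 3) {a b q : ℚ_[2]}
    (h : z ^ 3 + algebraMap ℚ_[2] Ω a * z ^ 2 + algebraMap ℚ_[2] Ω b * z
      + algebraMap ℚ_[2] Ω (-q ^ 2) = 0) :
    ∃ (m n : ℕ) (v : Z3) (d u : ℤ_[2]), z * (2 ^ m) ^ 2 = ev T v ∧ ‖u‖ = 1 ∧ d = 2 ^ n * u ∧
      nm A B v = d ^ 2 := by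
  have : CharZero Ω := charZero_of_injective_algebraMap (algebraMap ℚ_[2] Ω).injective
  obtain ⟨m, v, hv⟩ := clear3 hd (hTz ▸ self_mem z)
  have hw : z * (2 ^ m) ^ 2 = ev T ((2 ^ m : ℤ_[2]) • v) := by
    rw [ev_smul, ← hv, map_pow, map_ofNat]; ring
  have h2m : (2 ^ m : Ω) ≠ 0 := pow_ne_zero _ two_ne_zero
  obtain ⟨w, hww⟩ : ∃ w, w = (2 ^ m : ℤ_[2]) • v := ⟨_, rfl⟩
  rw [← hww] at hw
  have hwm : ev T w ∈ ℚ_[2]⟮z⟯ := hTz ▸ ev_mem T w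
  have hwd : Module.finrank ℚ_[2] ℚ_[2]⟮ev T w⟯ = 3 := by
    rcases sub3 hz hwm with ⟨k, hk⟩ | h1
    · exfalso
      have hzk : z = algebraMap ℚ_[2] Ω (k / (2 ^ m) ^ 2) := by
        rw [map_div₀, ← hk, map_pow, map_pow, map_ofNat, ← hw]; field_simp
      have : Module.finrank ℚ_[2] ℚ_[2]⟮z⟯ = 1 := by
        rw [finrank_adjoin_simple_eq_one_iff, hzk]
        exact _root_.algebraMap_mem _ _
      omega
    · exact h1.2
  have hn := nm_eq hT w hwd (a := a * (2 ^ m) ^ 2) (b := b * (2 ^ m) ^ 4) (c := -(q * (2 ^ m) ^ 3) ^ 2) (by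
    rw [← hw]
    simp only [map_mul, map_pow, map_neg, map_ofNat] at h ⊢
    linear_combination (2 ^ m) ^ 6 * h)
  rw [neg_neg] at hn
  obtain ⟨d, hd'⟩ := int_of_sq hn
  have hq : q ≠ 0 := by
    rintro rfl
    exact cubic_noroot hz h 0 (by simp)
  have hd0 : d ≠ 0 := by
    rintro rfl
    simp at hd'
    exact hq hd'
  refine ⟨m, d.valuation, w, d, PadicInt.unitCoeff hd0, hw, PadicInt.norm_units _, ?_, ?_⟩
  · have := PadicInt.unitCoeff_spec hd0
    rw [mul_comm]
    exact_mod_cast this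
  · rw [hd'] at hn
    apply PadicInt.ext
    rw [hn]; exact (PadicInt.coe_pow d 2).symm

/-- Square classes of resolvent roots. -/
lemma sq_class {z : Ω} (hz : Module.finrank ℚ_[2] ℚ_[2]⟮z⟯ = 3) {a b q : ℚ_[2]}
    (h : z ^ 3 + algebraMap ℚ_[2] Ω a * z ^ 2 + algebraMap ℚ_[2] Ω b * z
      + algebraMap ℚ_[2] Ω (-q ^ 2) = 0) :
    ∃ s ∈ ℚ_[2]⟮z⟯, s ≠ 0 ∧ (z * s ^ 2 = 4 ∨ (∃ T, T ^ 3 = 2 ∧ (z * s ^ 2 = 4 * (T - 1) ∨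
      z * s ^ 2 = 4 * (1 + 2 * T - T ^ 2) ∨ z * s ^ 2 = 4 * (3 + T + 2 * T ^ 2))) ∨
      (∃ y, y ^ 3 - 3 * y - 1 = 0 ∧ z * s ^ 2 = 4 * y)) := by
  have : CharZero Ω := charZero_of_injective_algebraMap (algebraMap ℚ_[2] Ω).injective
  rcases cubic_class hz with ⟨T, hTm, hT⟩ | ⟨T, hTm, hT⟩
  · obtain ⟨h1, h2⟩ := pi_gen hz hTm hT
    have hT' : T ^ 3 = io 0 * T + io 2 := by rw [hT, map_zero, map_ofNat]; ring
    obtain ⟨m, n, v, d, u, hv, hu, hd, hn⟩ := pre_class hz hT' h1 h2 h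
    obtain ⟨s, hs, hs0, hc⟩ := sq_pi h2 hT n v d u hu hd hn
    rw [h1] at hs
    have e : z * (2 * 2 ^ m * s) ^ 2 = 4 * (ev T v * s ^ 2) := by rw [← hv]; ring
    refine ⟨2 * 2 ^ m * s, mul_mem (mul_mem (ofNat_mem _ 2) (pow_mem (ofNat_mem _ 2) _)) hs,
      mul_ne_zero (mul_ne_zero two_ne_zero (pow_ne_zero _ two_ne_zero)) hs0, ?_⟩
    rw [e]
    rcases hc with hc | hc | hc | hc
    · left; rw [hc]; ring
    · right; left; exact ⟨T, hT, Or.inl (by rw [hc])⟩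
    · right; left; exact ⟨T, hT, Or.inr (Or.inl (by rw [hc]))⟩
    · right; left; exact ⟨T, hT, Or.inr (Or.inr (by rw [hc]))⟩
  · obtain ⟨h1, h2⟩ := rho_gen hz hTm hT
    have hT' : T ^ 3 = io 3 * T + io (-1) := by
      rw [map_neg, map_one, map_ofNat]; linear_combination hT
    obtain ⟨m, n, v, d, u, hv, hu, hd, hn⟩ := pre_class hz hT' h1 h2 h
    obtain ⟨s, hs, hs0, hc⟩ := sq_rho h2 hT n v d u hu hd hn
    rw [h1] at hs
    have e : z * (2 * 2 ^ m * s) ^ 2 = 4 * (ev T v * s ^ 2) := by rw [← hv]; ring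
    refine ⟨2 * 2 ^ m * s, mul_mem (mul_mem (ofNat_mem _ 2) (pow_mem (ofNat_mem _ 2) _)) hs,
      mul_ne_zero (mul_ne_zero two_ne_zero (pow_ne_zero _ two_ne_zero)) hs0, ?_⟩
    rw [e]
    rcases hc with hc | hc
    · left; rw [hc]; ring
    · right; right; exact ⟨_, hc, rfl⟩

end padic8
end Q16


namespace Q16

/-- Coefficients of the four quartics `x⁴ + P x² + Q x + R`. -/
def cP : Fin 4 → ℤ := ![0, 6, -6, -18]
def cQ : Fin 4 → ℤ := ![8, 8, 40, 40]
def cR : Fin 4 → ℤ := ![12, -3, -51, 21]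

lemma good_noroot (i : Fin 4) (k : ℚ_[2]) : k ^ 4 + (cP i : ℚ_[2]) * k ^ 2 + (cQ i : ℚ_[2]) * k + (cR i : ℚ_[2]) ≠ 0 := by
  refine quartic_int_noroot _ _ _ 6 ?_ k
  revert i
  decide +kernel

lemma good_res (i : Fin 4) (k : ℚ_[2]) : k ^ 3 + (2 * (cP i : ℚ_[2])) * k ^ 2
    + ((cP i : ℚ_[2]) ^ 2 - 4 * (cR i : ℚ_[2])) * k + (-(cQ i : ℚ_[2]) ^ 2) ≠ 0 := by
  intro h
  have key : ∀ a b c : ℤ, (∀ e : ZMod (2 ^ 3), e ^ 3 + a * e ^ 2 + b * e + c ≠ 0) →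
      k ^ 3 + 4 * a * k ^ 2 + 16 * b * k + 64 * c ≠ 0 := by
    intro a b c h h2
    apply cubic_int_noroot a b c 3 h (k / 4)
    linear_combination h2 / 64
  fin_cases i
  · apply key 0 (-3) (-1) (by decide)
    rw [← h]; simp [cP, cQ, cR]; ring
  · apply key 3 3 (-1) (by decide)
    rw [← h]; simp [cP, cQ, cR]; ring
  · apply key (-3) 15 (-25) (by decide)
    rw [← h]; simp [cP, cQ, cR]; ring
  · apply key (-9) 15 (-25) (by decide)
    rw [← h]; simp [cP, cQ, cR]; ring

section padic9
variable {Ω : Type*} [Field Ω] [Algebra ℚ_[2] Ω] [Algebra.IsAlgebraic ℚ_[2] Ω]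

lemma good_deg {i : Fin 4} {t : Ω} (h : t ^ 4 + algebraMap ℚ_[2] Ω (cP i) * t ^ 2
    + algebraMap ℚ_[2] Ω (cQ i) * t + algebraMap ℚ_[2] Ω (cR i) = 0) :
    Module.finrank ℚ_[2] ℚ_[2]⟮t⟯ = 4 :=
  quartic_deg h (good_noroot i) (good_res i)

lemma good_prim {i : Fin 4} {t : Ω} (h : t ^ 4 + algebraMap ℚ_[2] Ω (cP i) * t ^ 2
    + algebraMap ℚ_[2] Ω (cQ i) * t + algebraMap ℚ_[2] Ω (cR i) = 0)
    (F : IntermediateField ℚ_[2] Ω) (hF : F ≤ ℚ_[2]⟮t⟯) : F = ⊥ ∨ F = ℚ_[2]⟮t⟯ :=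
  primitive_of_resolvent (good_deg h) h (good_res i) F hF

lemma iso_of_quartic {x t : Ω} {p q r : ℚ_[2]} (hx : Module.finrank ℚ_[2] ℚ_[2]⟮x⟯ = 4)
    (ht : Module.finrank ℚ_[2] ℚ_[2]⟮t⟯ = 4)
    (h : x ^ 4 + algebraMap ℚ_[2] Ω p * x ^ 2 + algebraMap ℚ_[2] Ω q * x + algebraMap ℚ_[2] Ω r = 0)
    (h' : t ^ 4 + algebraMap ℚ_[2] Ω p * t ^ 2 + algebraMap ℚ_[2] Ω q * t + algebraMap ℚ_[2] Ω r = 0) :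
    Nonempty (ℚ_[2]⟮x⟯ ≃ₐ[ℚ_[2]] ℚ_[2]⟮t⟯) := by
  have h1 := minpoly_quartic hx h
  have h2 := minpoly_quartic ht h'
  have i1 : IsIntegral ℚ_[2] x := Algebra.IsIntegral.isIntegral x
  have i2 : IsIntegral ℚ_[2] t := Algebra.IsIntegral.isIntegral t
  refine ⟨(adjoin.powerBasis i1).equivOfMinpoly (adjoin.powerBasis i2) ?_⟩
  rw [adjoin.powerBasis_gen, adjoin.powerBasis_gen, minpoly_gen, minpoly_gen, h1, h2]

lemma neg_adj (x : Ω) : ℚ_[2]⟮-x⟯ = ℚ_[2]⟮x⟯ := by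
  apply le_antisymm
  · exact adj_le (neg_mem (self_mem x))
  · apply adj_le
    have := neg_mem (self_mem (K := ℚ_[2]) (-x))
    rwa [neg_neg] at this

lemma match_res {x t w : Ω} {p q r p' q' r' : ℚ_[2]} (hx : Module.finrank ℚ_[2] ℚ_[2]⟮x⟯ = 4)
    (ht : Module.finrank ℚ_[2] ℚ_[2]⟮t⟯ = 4)
    (h : x ^ 4 + algebraMap ℚ_[2] Ω p' * x ^ 2 + algebraMap ℚ_[2] Ω q' * x + algebraMap ℚ_[2] Ω r' = 0)
    (h' : t ^ 4 + algebraMap ℚ_[2] Ω p * t ^ 2 + algebraMap ℚ_[2] Ω q * t + algebraMap ℚ_[2] Ω r = 0)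
    (hw : Module.finrank ℚ_[2] ℚ_[2]⟮w⟯ = 3)
    (h1 : w ^ 3 + algebraMap ℚ_[2] Ω (2 * p') * w ^ 2
        + algebraMap ℚ_[2] Ω (p' ^ 2 - 4 * r') * w + algebraMap ℚ_[2] Ω (- q' ^ 2) = 0)
    (h2 : w ^ 3 + algebraMap ℚ_[2] Ω (2 * p) * w ^ 2
        + algebraMap ℚ_[2] Ω (p ^ 2 - 4 * r) * w + algebraMap ℚ_[2] Ω (- q ^ 2) = 0) :
    Nonempty (ℚ_[2]⟮x⟯ ≃ₐ[ℚ_[2]] ℚ_[2]⟮t⟯) := by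
  obtain ⟨e1, e2, e3⟩ := indep3 hw (a := -q' ^ 2 - -q ^ 2) (b := (p' ^ 2 - 4 * r') - (p ^ 2 - 4 * r))
    (c := 2 * p' - 2 * p) (by
      simp only [map_sub _ (- q' ^ 2), map_sub _ (p' ^ 2 - 4 * r'), map_sub _ (2 * p')]
      linear_combination h1 - h2)
  obtain rfl : p' = p := by linear_combination e3 / 2
  obtain rfl : r' = r := by linear_combination -e2 / 4
  have : (q' - q) * (q' + q) = 0 := by linear_combination -e1
  rcases mul_eq_zero.1 this with h3 | h3
  · obtain rfl : q' = q := by linear_combination h3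
    exact iso_of_quartic hx ht h h'
  · obtain rfl : q = -q' := by linear_combination h3
    rw [← neg_adj x] at hx ⊢
    refine iso_of_quartic hx ht ?_ h'
    rw [map_neg]
    linear_combination h

variable [IsAlgClosed Ω]

/-- Every primitive quartic field is one of the four. -/
lemma classify {t : Fin 4 → Ω} (ht : ∀ i, t i ^ 4 + algebraMap ℚ_[2] Ω (cP i) * t i ^ 2
    + algebraMap ℚ_[2] Ω (cQ i) * t i + algebraMap ℚ_[2] Ω (cR i) = 0)
    (F : IntermediateField ℚ_[2] Ω) (hF : Module.finrank ℚ_[2] F = 4)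
    (hprim : ∀ F' : IntermediateField ℚ_[2] Ω, F' ≤ F → F' = ⊥ ∨ F' = F) :
    ∃ i, Nonempty (F ≃ₐ[ℚ_[2]] ℚ_[2]⟮t i⟯) := by
  obtain ⟨u, p, q, r, rfl, hu⟩ := depressed hF hprim
  obtain ⟨z, hz, hz3, htr⟩ := trans_exists hF hu hprim
  obtain ⟨s, hs, hs0, hc⟩ := sq_class hz3 hz
  obtain ⟨x, p', q', r', hx, hxq, hxr⟩ := htr s hs hs0
  rw [← hx] at hF hprim ⊢
  have hno := resolvent_noroot hF hxq hprim
  obtain ⟨w, hw⟩ : ∃ w, w = z * s ^ 2 := ⟨_, rfl⟩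
  rw [← hw] at hc hxr
  have hwm : w ∈ ℚ_[2]⟮z⟯ := by rw [hw]; exact mul_mem (self_mem z) (pow_mem hs 2)
  rcases sub3 hz3 hwm with ⟨k, rfl⟩ | ⟨-, hw3⟩
  · exfalso
    apply hno k
    apply (algebraMap ℚ_[2] Ω).injective
    rw [map_zero, ← hxr]
    simp only [map_add, map_mul, map_pow]
  have go : ∀ i, w ^ 3 + algebraMap ℚ_[2] Ω (2 * cP i) * w ^ 2
        + algebraMap ℚ_[2] Ω (cP i ^ 2 - 4 * cR i) * w + algebraMap ℚ_[2] Ω (- cQ i ^ 2) = 0 →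
      ∃ i, Nonempty (ℚ_[2]⟮x⟯ ≃ₐ[ℚ_[2]] ℚ_[2]⟮t i⟯) := fun i h =>
    ⟨i, match_res hF (good_deg (ht i)) hxq (ht i) hw3 hxr h⟩
  have go' : ∀ i, w ^ 3 + 2 * (cP i) * w ^ 2
        + (cP i ^ 2 - 4 * cR i) * w + (- cQ i ^ 2) = 0 →
      ∃ i, Nonempty (ℚ_[2]⟮x⟯ ≃ₐ[ℚ_[2]] ℚ_[2]⟮t i⟯) := fun i h => by
    apply go i
    simp only [map_add, map_sub, map_mul, map_pow, map_neg, map_intCast, map_ofNat]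
    exact h
  rcases hc with hc | ⟨T, hT, hc | hc | hc⟩ | ⟨y, hy, hc⟩
  · exfalso
    have h4 : algebraMap ℚ_[2] Ω 4 = 4 := map_ofNat _ 4
    apply hno 4
    apply (algebraMap ℚ_[2] Ω).injective
    rw [map_zero, ← hxr, hc]
    simp only [map_add, map_mul, map_pow, h4]
  · apply go' 1
    simp [cP, cQ, cR]
    rw [hc]
    linear_combination 64 * hT
  · apply go' 2
    simp [cP, cQ, cR]
    rw [hc]
    linear_combination 64 * (6 - 12 * T + 6 * T ^ 2 - T ^ 3) * hT
  · apply go' 3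
    simp [cP, cQ, cR]
    rw [hc]
    linear_combination 64 * (17 + 6 * T + 12 * T ^ 2 + 8 * T ^ 3) * hT
  · apply go' 0
    simp [cP, cQ, cR]
    rw [hc]
    linear_combination 64 * hy

end padic9
end Q16


namespace Q16

def sqs (g : ℕ × ℕ × ℕ) : Bool :=
  (List.range 8).all fun a => (List.range 8).all fun b => (List.range 8).all fun c =>
    !(m8 0 2 (a, b, c) (a, b, c) == g)

lemma sq_mod4 : ∀ a b c : ZMod (2 ^ 2), mul3 0 2 (a, b, c) (a, b, c) = (0, 0, 0) →
    2 * a = 0 ∧ 2 * b = 0 ∧ 2 * c = 0 := by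
  unfold mul3; decide

lemma cube_mod2 : ∀ a b c : ZMod (2 ^ 1), mul3 3 (-1) (a, b, c) (mul3 3 (-1) (a, b, c) (a, b, c)) = (0, 0, 0) →
    a = 0 ∧ b = 0 ∧ c = 0 := by
  unfold mul3; decide

lemma even_of_mod4 {x : ℤ_[2]} (h : 2 * PadicInt.toZModPow (p := 2) 2 x = 0) : ∃ y, x = 2 * y := by
  rcases even_or_odd2 x with h1 | ⟨y, rfl⟩
  · exact h1
  · exfalso
    rw [map_add, map_mul, map_one, map_ofNat] at h
    generalize PadicInt.toZModPow (p := 2) 2 y = e at h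
    revert e
    decide

lemma even_of_mod2 {x : ℤ_[2]} (h : PadicInt.toZModPow (p := 2) 1 x = 0) : ∃ y, x = 2 * y := by
  rcases even_or_odd2 x with h1 | ⟨y, rfl⟩
  · exact h1
  · exfalso
    rw [map_add, map_mul, map_one, map_ofNat] at h
    generalize PadicInt.toZModPow (p := 2) 1 y = e at h
    revert e
    decide

/-- The representatives of the three nontrivial square classes. -/
def rep : Fin 3 → ℤ × ℤ × ℤ := ![(-1, 1, 0), (1, 2, -1), (3, 1, 2)]
def rep' : Fin 3 → ℕ × ℕ × ℕ := ![(7, 1, 0), (1, 2, 7), (3, 1, 2)]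

/-- Integer triples as 2-adic triples. -/
noncomputable def ic (x : ℤ × ℤ × ℤ) : Z3 := (x.1, x.2.1, x.2.2)

lemma rep_red (i : Fin 3) : map3 red8 (ic (rep i)) = nc (rep' i) := by
  simp only [map3, ic, nc, map_intCast]
  revert i
  decide

lemma rep_chk : ∀ i j : Fin 3, i ≠ j → sqs (m8 0 2 (rep' i) (rep' j)) = true := by
  decide +kernel

lemma m8_lt (A B : ℕ) (x y : ℕ × ℕ × ℕ) :
    (m8 A B x y).1 < 8 ∧ (m8 A B x y).2.1 < 8 ∧ (m8 A B x y).2.2 < 8 :=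
  ⟨Nat.mod_lt _ (by norm_num), Nat.mod_lt _ (by norm_num), Nat.mod_lt _ (by norm_num)⟩

lemma nc_inj {x y : ℕ × ℕ × ℕ} (hx : x.1 < 8 ∧ x.2.1 < 8 ∧ x.2.2 < 8)
    (hy : y.1 < 8 ∧ y.2.1 < 8 ∧ y.2.2 < 8) (h : (nc x : ZMod (2 ^ 3) × ZMod (2 ^ 3) × ZMod (2 ^ 3)) = nc y) :
    x = y := by
  obtain ⟨a, b, c⟩ := x
  obtain ⟨a', b', c'⟩ := y
  simp only [nc, Prod.mk.injEq, ZMod.natCast_eq_natCast_iff] at *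
  unfold Nat.ModEq at h
  omega

section padic10
variable {Ω : Type*} [Field Ω] [Algebra ℚ_[2] Ω] [Algebra.IsAlgebraic ℚ_[2] Ω]

lemma nonsq {T : Ω} (hd : Module.finrank ℚ_[2] ℚ_[2]⟮T⟯ = 3) (hT : T ^ 3 = 2) {i j : Fin 3} (hij : i ≠ j)
    (m : ℕ) : ∀ (v : Z3) (y : Ω), y ^ 2 = ev T (ic (rep i)) * ev T (ic (rep j)) → y * 2 ^ m = ev T v → False := by
  have : CharZero Ω := charZero_of_injective_algebraMap (algebraMap ℚ_[2] Ω).injective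
  have hT' : T ^ 3 = io 0 * T + io 2 := by rw [hT, map_zero, map_ofNat]; ring
  induction m with
  | zero =>
    intro v y hy hv
    rw [pow_zero, mul_one] at hv
    rw [hv, ← ev_mul hT', pow_two, ← ev_mul hT'] at hy
    have h := congrArg (map3 red8) (ev_inj hd hy)
    rw [map3_mul3, map3_mul3, rep_red, rep_red] at h
    obtain ⟨a, ha, b, hb, c, hc, hv⟩ := nc_val v
    have h0 : red8 0 = ((0 : ℕ) : ZMod (2 ^ 3)) := by simp
    rw [hv, h0, red8_two, ← nc_m8, ← nc_m8] at h
    have h1 := nc_inj (m8_lt _ _ _ _) (m8_lt _ _ _ _) h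
    have h2 := rep_chk i j hij
    simp only [sqs, List.all_eq_true, List.mem_range] at h2
    have h3 := h2 a ha b hb c hc
    rw [h1] at h3
    simp at h3
  | succ m ih =>
    intro v y hy hv
    have h1 : mul3 0 2 v v = (4 : ℤ_[2]) • ((4 ^ m : ℤ_[2]) • mul3 0 2 (ic (rep i)) (ic (rep j))) := by
      apply ev_inj hd
      rw [ev_mul hT', ev_smul, ev_smul, ev_mul hT', ← hy, ← hv, map_pow, map_ofNat,
        show (4 : Ω) = 2 ^ 2 by norm_num, ← pow_mul]
      ring
    have h2 := congrArg (map3 (PadicInt.toZModPow (p := 2) 2)) h1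
    rw [map3_mul3, map_zero, map_ofNat] at h2
    have h3 : ∀ x : Z3, map3 (PadicInt.toZModPow (p := 2) 2) ((4 : ℤ_[2]) • x) = (0, 0, 0) := by
      intro x
      have : (4 : ZMod (2 ^ 2)) = 0 := by decide
      simp only [map3, Prod.smul_fst, Prod.smul_snd, smul_eq_mul, map_mul, map_ofNat, this, zero_mul]
    rw [h3] at h2
    obtain ⟨a, b, c⟩ := v
    obtain ⟨e1, e2, e3⟩ := sq_mod4 _ _ _ h2
    obtain ⟨a, rfl⟩ := even_of_mod4 e1
    obtain ⟨b, rfl⟩ := even_of_mod4 e2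
    obtain ⟨c, rfl⟩ := even_of_mod4 e3
    refine ih (a, b, c) y hy ?_
    refine mul_left_cancel₀ (two_ne_zero (α := Ω)) ?_
    have : 2 * ev T (a, b, c) = ev T (2 * a, 2 * b, 2 * c) := by
      simp only [ev, map_mul, map_ofNat]; ring
    rw [this, ← hv]; ring

lemma no_pi_in_rho {ρ T : Ω} (hd : Module.finrank ℚ_[2] ℚ_[2]⟮ρ⟯ = 3) (hρ : ρ ^ 3 - 3 * ρ + 1 = 0)
    (hT : T ^ 3 = 2) (m : ℕ) : ∀ v : Z3, T * 2 ^ m = ev ρ v → False := by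
  have : CharZero Ω := charZero_of_injective_algebraMap (algebraMap ℚ_[2] Ω).injective
  have hρ' : ρ ^ 3 = io 3 * ρ + io (-1) := by
    rw [map_neg, map_one, map_ofNat]; linear_combination hρ
  have key : ∀ (m : ℕ) (v : Z3), T * 2 ^ m = ev ρ v → ∃ w : Z3, ev ρ v = 2 * ev ρ w := by
    intro m v hv
    have h1 : mul3 3 (-1) v (mul3 3 (-1) v v) = (2 * 8 ^ m, 0, 0) := by
      apply ev_inj hd
      rw [ev_mul hρ', ev_mul hρ', ev_const, ← hv, map_mul, map_pow, map_ofNat, map_ofNat,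
        show (8 : Ω) = 2 ^ 3 by norm_num, ← pow_mul, ← hT]
      ring
    have h2 := congrArg (map3 (PadicInt.toZModPow (p := 2) 1)) h1
    have t2 : (2 : ZMod (2 ^ 1)) = 0 := by decide
    rw [map3_mul3, map3_mul3, map_neg, map_one, map_ofNat] at h2
    have h3 : map3 (PadicInt.toZModPow (p := 2) 1) (2 * 8 ^ m, 0, 0) = (0, 0, 0) := by
      simp only [map3, map_mul, map_ofNat, map_zero, t2, zero_mul]
    rw [h3] at h2
    obtain ⟨a, b, c⟩ := v
    obtain ⟨e1, e2, e3⟩ := cube_mod2 _ _ _ h2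
    obtain ⟨a, rfl⟩ := even_of_mod2 e1
    obtain ⟨b, rfl⟩ := even_of_mod2 e2
    obtain ⟨c, rfl⟩ := even_of_mod2 e3
    refine ⟨(a, b, c), ?_⟩
    simp only [ev, map_mul, map_ofNat]; ring
  induction m with
  | zero =>
    intro v hv
    obtain ⟨w, hw⟩ := key 0 v hv
    have h1 : (4 : ℤ_[2]) • mul3 3 (-1) w (mul3 3 (-1) w w) = (1, 0, 0) := by
      apply ev_inj hd
      rw [ev_smul, ev_mul hρ', ev_mul hρ', ev_const, map_one, map_ofNat]
      rw [pow_zero, mul_one] at hv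
      rw [hv, hw] at hT
      linear_combination hT / 2
    have h2 := congrArg Prod.fst h1
    simp only [Prod.smul_fst, smul_eq_mul] at h2
    have h3 := norm_two_mul (2 * (mul3 3 (-1) w (mul3 3 (-1) w w)).1)
    rw [← mul_assoc, show (2 * 2 : ℤ_[2]) = 4 by norm_num, h2] at h3
    simp at h3
  | succ m ih =>
    intro v hv
    obtain ⟨w, hw⟩ := key _ v hv
    refine ih w ?_
    refine mul_left_cancel₀ (two_ne_zero (α := Ω)) ?_
    rw [← hw, ← hv]; ring

lemma ev_rep (T : Ω) : ev T (ic (rep 0)) = T - 1 ∧ ev T (ic (rep 1)) = 1 + 2 * T - T ^ 2 ∧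
    ev T (ic (rep 2)) = 3 + T + 2 * T ^ 2 := by
  have h2 : (io 2 : Ω) = 2 := map_ofNat _ 2
  have h3 : (io 3 : Ω) = 3 := map_ofNat _ 3
  refine ⟨?_, ?_, ?_⟩ <;> simp [ev, ic, rep, h2, h3]
  · ring
  · ring

/-- Recover the cube root of 2 from a resolvent root. -/
lemma recover {z : Ω} (j : Fin 3) (h : z ^ 3 + algebraMap ℚ_[2] Ω (2 * cP j.succ) * z ^ 2
    + algebraMap ℚ_[2] Ω (cP j.succ ^ 2 - 4 * cR j.succ) * z
    + algebraMap ℚ_[2] Ω (- cQ j.succ ^ 2) = 0) :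
    ∃ T ∈ ℚ_[2]⟮z⟯, T ^ 3 = 2 ∧ z = 4 * ev T (ic (rep j)) := by
  have : CharZero Ω := charZero_of_injective_algebraMap (algebraMap ℚ_[2] Ω).injective
  simp only [map_add, map_sub, map_mul, map_pow, map_neg, map_intCast, map_ofNat] at h
  obtain ⟨r0, r1, r2⟩ := ev_rep (Ω := Ω) (z / 4)
  obtain ⟨a, ha⟩ : ∃ a, a = z / 4 := ⟨_, rfl⟩
  have hz : z = 4 * a := by rw [ha]; field_simp
  have ham : a ∈ ℚ_[2]⟮z⟯ := by rw [ha]; exact div_mem (self_mem z) (ofNat_mem _ 4)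
  have e2 : (2 : Ω) ∈ ℚ_[2]⟮z⟯ := ofNat_mem _ 2
  have e5 : (5 : Ω) ∈ ℚ_[2]⟮z⟯ := ofNat_mem _ 5
  fin_cases j
  · simp [cP, cQ, cR] at h
    rw [hz] at h
    refine ⟨a + 1, add_mem ham (one_mem _), ?_, ?_⟩
    · linear_combination h / 64
    · have := (ev_rep (a + 1)).1
      simp only [Fin.zero_eta]
      rw [this, hz]; ring
  · simp [cP, cQ, cR] at h
    rw [hz] at h
    refine ⟨(a ^ 2 + 2 * a + 5) / 10, div_mem (add_mem (add_mem (pow_mem ham 2) (mul_mem e2 ham)) e5)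
      (ofNat_mem _ 10), ?_, ?_⟩
    · linear_combination (3 / 40 + 39 / 1000 * a + 9 / 1000 * a ^ 2 + 1 / 1000 * a ^ 3) * h / 64
    · have := (ev_rep ((a ^ 2 + 2 * a + 5) / 10)).2.1
      simp only [Fin.mk_one]
      rw [this, hz]
      linear_combination -4 * (-7 / 100 - 1 / 100 * a) * h / 64
  · simp [cP, cQ, cR] at h
    rw [hz] at h
    refine ⟨(2 * a ^ 2 - 13 * a + 5) / 15, div_mem (add_mem (sub_mem (mul_mem e2 (pow_mem ham 2))
      (mul_mem (ofNat_mem _ 13) ham)) e5) (ofNat_mem _ 15), ?_, ?_⟩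
    · linear_combination (53 / 675 + 22 / 375 * a - 28 / 1125 * a ^ 2 + 8 / 3375 * a ^ 3) * h / 64
    · have := (ev_rep ((2 * a ^ 2 - 13 * a + 5) / 15)).2.2
      simp only [Fin.reduceFinMk]
      rw [this, hz]
      linear_combination -4 * (-32 / 225 + 8 / 225 * a) * h / 64

lemma pi_unique {z T T' : Ω} (hz : Module.finrank ℚ_[2] ℚ_[2]⟮z⟯ = 3) (h : T ∈ ℚ_[2]⟮z⟯)
    (h' : T' ∈ ℚ_[2]⟮z⟯) (hT : T ^ 3 = 2) (hT' : T' ^ 3 = 2) : T' = T := by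
  have : CharZero Ω := charZero_of_injective_algebraMap (algebraMap ℚ_[2] Ω).injective
  have hT0 : T ≠ 0 := by rintro rfl; norm_num at hT
  by_contra hne
  obtain ⟨o, ho⟩ : ∃ o, o = T' / T := ⟨_, rfl⟩
  have hom : o ∈ ℚ_[2]⟮z⟯ := by rw [ho]; exact div_mem h' h
  have ho3 : o ^ 3 = 1 := by rw [ho, div_pow, hT, hT']; norm_num
  have ho1 : o - 1 ≠ 0 := by
    intro h1
    apply hne
    have : T' / T = 1 := by rw [← ho]; linear_combination h1
    rwa [div_eq_one_iff_eq hT0] at this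
  have ho2 : o ^ 2 + o + 1 = 0 := by
    apply mul_left_cancel₀ ho1
    linear_combination ho3
  rcases sub3 hz hom with ⟨k, hk⟩ | ⟨-, h3⟩
  · apply no_omega k
    apply (algebraMap ℚ_[2] Ω).injective
    rw [map_add, map_add, map_pow, map_one, map_zero, ← hk, ho2]
  · have := finrank_le_two (K := ℚ_[2]) (x := o) (a := 1) (b := 1) (by
      rw [map_one]; linear_combination ho2)
    omega

variable [IsAlgClosed Ω]

/-- No root of a later quartic lies in the field of an earlier one. -/
lemma no_root_in {i j : Fin 4} (hij : i < j) {t x : Ω}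
    (ht : t ^ 4 + algebraMap ℚ_[2] Ω (cP i) * t ^ 2
      + algebraMap ℚ_[2] Ω (cQ i) * t + algebraMap ℚ_[2] Ω (cR i) = 0)
    (hx : x ^ 4 + algebraMap ℚ_[2] Ω (cP j) * x ^ 2
      + algebraMap ℚ_[2] Ω (cQ j) * x + algebraMap ℚ_[2] Ω (cR j) = 0) (hxm : x ∈ ℚ_[2]⟮t⟯) : False := by
  have : CharZero Ω := charZero_of_injective_algebraMap (algebraMap ℚ_[2] Ω).injective
  obtain ⟨z, s, hz, hz3, hs, hw⟩ := trans_nec (good_deg ht) ht (good_res i) (good_deg hx) hxm hx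
  obtain ⟨j, rfl⟩ := Fin.exists_succ_eq.2 (show j ≠ 0 by rintro rfl; simp at hij)
  obtain ⟨T', hTm', hT', hw'⟩ := recover j hw
  have hwz : z * s ^ 2 ∈ ℚ_[2]⟮z⟯ := mul_mem (self_mem z) (pow_mem hs 2)
  have hTz' := adj_le hwz hTm'
  by_cases hi : i = 0
  · subst hi
    simp only [map_add, map_sub, map_mul, map_pow, map_neg, map_intCast, map_ofNat] at hz
    simp [cP, cQ, cR] at hz
    have hρ : (-(z / 4)) ^ 3 - 3 * (-(z / 4)) + 1 = 0 := by linear_combination -hz / 64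
    obtain ⟨g1, g2⟩ := rho_gen hz3 (T := -(z / 4)) (neg_mem (div_mem (self_mem z) (ofNat_mem _ 4))) hρ
    rw [← g1] at hTz'
    obtain ⟨m, v, hv⟩ := clear3 g2 hTz'
    exact no_pi_in_rho g2 hρ hT' m v hv
  · obtain ⟨i, rfl⟩ := Fin.exists_succ_eq.2 hi
    obtain ⟨T, hTm, hT, hzT⟩ := recover i hz
    obtain rfl := pi_unique hz3 hTm hTz' hT hT'
    obtain ⟨g1, g2⟩ := pi_gen hz3 hTm hT
    have hne : i ≠ j := by rintro rfl; simp at hij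
    have hym : ev T' (ic (rep i)) * s ∈ ℚ_[2]⟮T'⟯ := by
      refine mul_mem (ev_mem _ _) ?_
      rw [g1]; exact hs
    obtain ⟨m, v, hv⟩ := clear3 g2 hym
    refine nonsq g2 hT hne m v _ ?_ hv
    have : ev T' (ic (rep j)) = ev T' (ic (rep i)) * s ^ 2 := by
      rw [hzT] at hw'
      linear_combination -hw' / 4
    rw [this]; ring

lemma not_iso {i j : Fin 4} (hij : i < j) {t x : Ω}
    (ht : t ^ 4 + algebraMap ℚ_[2] Ω (cP i) * t ^ 2
      + algebraMap ℚ_[2] Ω (cQ i) * t + algebraMap ℚ_[2] Ω (cR i) = 0)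
    (hx : x ^ 4 + algebraMap ℚ_[2] Ω (cP j) * x ^ 2
      + algebraMap ℚ_[2] Ω (cQ j) * x + algebraMap ℚ_[2] Ω (cR j) = 0)
    (e : ℚ_[2]⟮x⟯ ≃ₐ[ℚ_[2]] ℚ_[2]⟮t⟯) : False := by
  let f : ℚ_[2]⟮x⟯ →ₐ[ℚ_[2]] Ω := (ℚ_[2]⟮t⟯).val.comp e.toAlgHom
  have hg : (AdjoinSimple.gen ℚ_[2] x) ^ 4 + algebraMap ℚ_[2] _ (cP j : ℚ_[2]) * (AdjoinSimple.gen ℚ_[2] x) ^ 2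
      + algebraMap ℚ_[2] _ (cQ j : ℚ_[2]) * (AdjoinSimple.gen ℚ_[2] x) + algebraMap ℚ_[2] _ (cR j : ℚ_[2]) = 0 := by
    apply Subtype.ext
    exact hx
  have h := congrArg f hg
  simp only [map_add, map_mul, map_pow, AlgHom.commutes, map_zero] at h
  exact no_root_in hij ht h (e (AdjoinSimple.gen ℚ_[2] x)).2

end padic10
end Q16

end Q16sec

/-- The set of `ℚ_2`-isomorphism classes of primitive quartic extensions of `ℚ_2` inside
a fixed algebraic closure `Ω` has exactly four elements: there are four pairwise
non-isomorphic primitive quartic extensions such that every primitive quartic extension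
is isomorphic (as a `ℚ_2`-algebra) to one of them. -/
theorem stmt_16 (Ω : Type) [Field Ω] [Algebra ℚ_[2] Ω] [IsAlgClosure ℚ_[2] Ω] :
    ∃ E : Fin 4 → IntermediateField ℚ_[2] Ω,
      (∀ i, Module.finrank ℚ_[2] ↥(E i) = 4 ∧
        ∀ F : IntermediateField ℚ_[2] Ω, F ≤ E i → F = ⊥ ∨ F = E i) ∧
      (∀ i j, i ≠ j → IsEmpty (↥(E i) ≃ₐ[ℚ_[2]] ↥(E j))) ∧
      (∀ F : IntermediateField ℚ_[2] Ω, Module.finrank ℚ_[2] ↥F = 4 →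
        (∀ F' : IntermediateField ℚ_[2] Ω, F' ≤ F → F' = ⊥ ∨ F' = F) →
        ∃ i, Nonempty (↥F ≃ₐ[ℚ_[2]] ↥(E i))) := by
  have hac : IsAlgClosed Ω := IsAlgClosure.isAlgClosed ℚ_[2]
  have hal : Algebra.IsAlgebraic ℚ_[2] Ω := IsAlgClosure.isAlgebraic
  have hex : ∀ i : Fin 4, ∃ t : Ω, t ^ 4 + algebraMap ℚ_[2] Ω (Q16.cP i) * t ^ 2
      + algebraMap ℚ_[2] Ω (Q16.cQ i) * t + algebraMap ℚ_[2] Ω (Q16.cR i) = 0 :=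
    fun i => Q16.exists_quartic_root _ _ _
  choose t ht using hex
  refine ⟨fun i => IntermediateField.adjoin ℚ_[2] {t i},
    fun i => ⟨Q16.good_deg (ht i), fun F hF => Q16.good_prim (ht i) F hF⟩, ?_, ?_⟩
  · intro i j hij
    refine ⟨fun e => ?_⟩
    rcases lt_or_gt_of_ne hij with h | h
    · exact Q16.not_iso h (ht i) (ht j) e.symm
    · exact Q16.not_iso h (ht j) (ht i) e
  · intro F hF hprim
    exact Q16.classify ht F hF hprim
end

section
/- Fix a prime p and an integer n ≥ 1, set e_n = p^n − 1, and fix an algebraic closure Ω of ℚ_p. Let K ⊆ Ω be a finite extension of ℚ_p, let K_n = K(ζ) where ζ ∈ Ω is a primitive e_n-th root of unity, and let L_n ⊆ Ω be the field generated over K_n by all x ∈ Ω with x^{e_n} ∈ K_n. Let V be an F_p-vector space of dimension n and ρ : Gal(Ω / K) → GL(V) a group homomorphism that is continuous for the Krull topology on Gal(Ω / K) and the discrete topology on GL(V), and such that V has no ρ-stable subspaces other than 0 and V. Then the subgroup Gal(Ω / L_n) is contained in the kernel of ρ; that is, ρ factors through Gal(L_n / K). -/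
open scoped IsMulCommutative in
/-- On a minimal stable subspace for a commuting family, the operators have order dividing `|U|-1`. -/
theorem aux_simple (p : ℕ) [Fact p.Prime] (V : Type) [AddCommGroup V] [Module (ZMod p) V] [Finite V]
    (S : Set (Module.End (ZMod p) V)) (hS : ∀ a ∈ S, ∀ b ∈ S, a * b = b * a)
    (hinj : ∀ a ∈ S, Function.Injective a)
    (U : Submodule (ZMod p) V) (hU0 : U ≠ ⊥) (hUs : ∀ a ∈ S, ∀ x ∈ U, a x ∈ U)
    (hmin : ∀ W : Submodule (ZMod p) V, W ≤ U → (∀ a ∈ S, ∀ x ∈ W, a x ∈ W) → W = ⊥ ∨ W = U)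
    (h : Module.End (ZMod p) V) (hh : h ∈ S) (x : V) (hx : x ∈ U) :
    (h ^ (p ^ Module.finrank (ZMod p) U - 1)) x = x := by
  classical
  obtain ⟨u, huU, hu0⟩ := U.ne_bot_iff.1 hU0
  have : IsMulCommutative (Algebra.adjoin (ZMod p) S) := Algebra.isMulCommutative_adjoin _ hS
  set A := Algebra.adjoin (ZMod p) S with hA
  have hAU : ∀ a : A, ∀ x ∈ U, (a : Module.End (ZMod p) V) x ∈ U := by
    rintro ⟨a, ha⟩
    induction ha using Algebra.adjoin_induction with
    | mem a ha => exact hUs a ha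
    | algebraMap r => intro x hx; simpa using U.smul_mem r hx
    | add a b _ _ ha hb => intro x hx; exact U.add_mem (ha x hx) (hb x hx)
    | mul a b _ _ ha hb => intro x hx; exact ha _ (hb x hx)
  have hcomm : ∀ a b : A, ∀ x : V, (a : Module.End (ZMod p) V) ((b : Module.End (ZMod p) V) x)
      = (b : Module.End (ZMod p) V) ((a : Module.End (ZMod p) V) x) := by
    intro a b x
    have := congrArg (fun c : A => (c : Module.End (ZMod p) V) x) (mul_comm a b)
    simpa using this
  have hker : ∀ a : A, ∀ x ∈ U, x ≠ 0 → (a : Module.End (ZMod p) V) x = 0 →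
      ∀ y ∈ U, (a : Module.End (ZMod p) V) y = 0 := by
    intro a x hx hx0 hax
    have hst : ∀ b ∈ S, ∀ y ∈ (U ⊓ LinearMap.ker (a : Module.End (ZMod p) V)),
        b y ∈ (U ⊓ LinearMap.ker (a : Module.End (ZMod p) V)) := by
      intro b hb y hy
      refine ⟨hUs b hb y hy.1, ?_⟩
      have := hcomm a ⟨b, Algebra.subset_adjoin hb⟩ y
      have h2 : (a : Module.End (ZMod p) V) y = 0 := hy.2
      rw [h2] at this
      simpa using this
    rcases hmin (U ⊓ LinearMap.ker (a : Module.End (ZMod p) V)) inf_le_left hst with h1 | h1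
    · exact absurd ((Submodule.eq_bot_iff _).1 h1 x ⟨hx, hax⟩) hx0
    · intro y hy
      rw [← h1] at hy
      exact hy.2
  let ev : A →ₗ[ZMod p] V := (LinearMap.applyₗ u).comp A.val.toLinearMap
  have hev : ∀ a : A, ev a = (a : Module.End (ZMod p) V) u := fun a => rfl
  have hrange : LinearMap.range ev = U := by
    have hl : LinearMap.range ev ≤ U := by
      rintro _ ⟨a, rfl⟩; exact hAU a u huU
    have hst : ∀ b ∈ S, ∀ y ∈ LinearMap.range ev, b y ∈ LinearMap.range ev := by
      rintro b hb _ ⟨a, rfl⟩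
      exact ⟨⟨b, Algebra.subset_adjoin hb⟩ * a, rfl⟩
    rcases hmin (LinearMap.range ev) hl hst with h1 | h1
    · exact absurd ((Submodule.eq_bot_iff _).1 h1 u ⟨1, by simp [hev]⟩) hu0
    · exact h1
  let m : Ideal A :=
    { carrier := {a | ev a = 0}
      add_mem' := by intro a b ha hb; simp only [Set.mem_ofPred_eq, map_add] at *; simp [ha, hb]
      zero_mem' := by simp
      smul_mem' := by
        intro a b hb
        simp only [Set.mem_ofPred_eq, hev] at *
        change (a : Module.End (ZMod p) V) ((b : Module.End (ZMod p) V) u) = 0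
        rw [hb, map_zero] }
  have hm : ∀ a : A, a ∈ m ↔ (a : Module.End (ZMod p) V) u = 0 := fun a => Iff.rfl
  have hprime : m.IsPrime := by
    refine ⟨?_, ?_⟩
    · intro h1
      have : (1 : A) ∈ m := h1 ▸ trivial
      rw [hm] at this
      exact hu0 (by simpa using this)
    · intro a b hab
      by_cases hb : b ∈ m
      · exact Or.inr hb
      · left
        rw [hm] at *
        exact hker a _ (hAU b u huU) hb hab u huU
  have : Finite (Module.End (ZMod p) V) := Finite.of_injective (fun f => (f : V → V)) DFunLike.coe_injective
  have : Finite (A ⧸ m) := Finite.of_surjective _ Ideal.Quotient.mk_surjective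
  have : IsDomain (A ⧸ m) := Ideal.Quotient.isDomain m
  have hcard : Nat.card (A ⧸ m) = p ^ Module.finrank (ZMod p) U := by
    have e1 : Nat.card (A ⧸ m) = Nat.card (A ⧸ LinearMap.ker ev) := by
      refine Nat.card_congr (Quotient.congr (Equiv.refl _) ?_)
      intro a b
      rw [Submodule.quotientRel_def, Submodule.quotientRel_def]
      rfl
    rw [e1, Nat.card_congr (ev.quotKerEquivRange).toEquiv, hrange,
      Module.natCard_eq_pow_finrank (K := ZMod p)]
    simp
  let : Fintype (A ⧸ m) := Fintype.ofFinite _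
  let : Field (A ⧸ m) := Fintype.fieldOfDomain _
  let h' : A := ⟨h, Algebra.subset_adjoin hh⟩
  have hne : (Ideal.Quotient.mk m h') ≠ 0 := by
    intro h0
    rw [Ideal.Quotient.eq_zero_iff_mem, hm] at h0
    exact hu0 (hinj h hh (by rw [map_zero]; exact h0))
  have := FiniteField.pow_card_sub_one_eq_one _ hne
  rw [← Nat.card_eq_fintype_card, hcard] at this
  have h3 : h' ^ (p ^ Module.finrank (ZMod p) U - 1) - 1 ∈ m := by
    rw [← Ideal.Quotient.eq_zero_iff_mem, map_sub, map_pow, map_one, sub_eq_zero]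
    exact this
  have h4 := hker _ u huU hu0 ((hm _).1 h3) x hx
  have h5 : ((h ^ (p ^ Module.finrank (ZMod p) U - 1) - 1 : Module.End (ZMod p) V)) x = 0 := h4
  rwa [LinearMap.sub_apply, Module.End.one_apply, sub_eq_zero] at h5

theorem aux_expo (p : ℕ) [Fact p.Prime] (V : Type) [AddCommGroup V] [Module (ZMod p) V] [Finite V]
    (G : Type) [Group G] [Finite G] (ρ : G →* LinearMap.GeneralLinearGroup (ZMod p) V)
    (hirr : ∀ W : Submodule (ZMod p) V,
      (∀ σ : G, ∀ x ∈ W, (ρ σ : V →ₗ[ZMod p] V) x ∈ W) → W = ⊥ ∨ W = ⊤)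
    (N : Subgroup G) [hN : N.Normal] (hcomm : ∀ a ∈ N, ∀ b ∈ N, ρ a * ρ b = ρ b * ρ a)
    (h : G) (hh : h ∈ N) : ρ h ^ (p ^ Module.finrank (ZMod p) V - 1) = 1 := by
  classical
  rcases subsingleton_or_nontrivial V with hV | hV
  · apply Units.ext
    apply LinearMap.ext
    intro x
    exact Subsingleton.elim _ _
  -- action calculus
  have hmul : ∀ a b : G, ∀ x : V, (ρ (a * b) : V →ₗ[ZMod p] V) x =
      (ρ a : V →ₗ[ZMod p] V) ((ρ b : V →ₗ[ZMod p] V) x) := by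
    intro a b x; rw [map_mul]; rfl
  have hone : ∀ x : V, (ρ 1 : V →ₗ[ZMod p] V) x = x := by
    intro x; rw [map_one]; rfl
  have hinv : ∀ a : G, ∀ x : V, (ρ a : V →ₗ[ZMod p] V) ((ρ a⁻¹ : V →ₗ[ZMod p] V) x) = x := by
    intro a x; rw [← hmul, mul_inv_cancel, hone]
  have hinv' : ∀ a : G, ∀ x : V, (ρ a⁻¹ : V →ₗ[ZMod p] V) ((ρ a : V →ₗ[ZMod p] V) x) = x := by
    intro a x; rw [← hmul, inv_mul_cancel, hone]
  have hinj : ∀ a : G, Function.Injective (ρ a : V →ₗ[ZMod p] V) := fun a =>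
    Function.LeftInverse.injective (hinv' a)
  have hbot : ∀ (a : G) (W : Submodule (ZMod p) V), W.map (ρ a : V →ₗ[ZMod p] V) = ⊥ → W = ⊥ := by
    intro a W hW
    rw [Submodule.eq_bot_iff]
    intro x hx
    have : (ρ a : V →ₗ[ZMod p] V) x ∈ W.map (ρ a : V →ₗ[ZMod p] V) := ⟨x, hx, rfl⟩
    rw [hW, Submodule.mem_bot] at this
    exact hinj a (by rw [this, map_zero])
  let st : Submodule (ZMod p) V → Prop := fun W => ∀ a ∈ N, ∀ x ∈ W, (ρ a : V →ₗ[ZMod p] V) x ∈ W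
  obtain ⟨U, ⟨hU0, hUs⟩, hUmin⟩ := (wellFounded_lt (α := Submodule (ZMod p) V)).has_min
    {W | W ≠ ⊥ ∧ st W} ⟨⊤, by simp, by intro a _ x _; trivial⟩
  have hUmin' : ∀ W : Submodule (ZMod p) V, W ≤ U → st W → W = ⊥ ∨ W = U := by
    intro W hW hs
    by_contra hcon
    push Not at hcon
    exact hUmin W ⟨hcon.1, hs⟩ (lt_of_le_of_ne hW hcon.2)
  have hmap_st : ∀ g : G, ∀ W, st W → st (W.map (ρ g : V →ₗ[ZMod p] V)) := by
    rintro g W hW a ha _ ⟨x, hx, rfl⟩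
    refine ⟨(ρ (g⁻¹ * a * g) : V →ₗ[ZMod p] V) x, hW _ ?_ x hx, ?_⟩
    · simpa using hN.conj_mem a ha g⁻¹
    · rw [← hmul, ← hmul]; congr 3; group
  -- exponent on U
  have hUexp : ∀ a ∈ N, ∀ x ∈ U,
      (((ρ a : Module.End (ZMod p) V)) ^ (p ^ Module.finrank (ZMod p) U - 1)) x = x := by
    intro a ha x hx
    refine aux_simple p V {f | ∃ a ∈ N, f = (ρ a : V →ₗ[ZMod p] V)} ?_ ?_ U hU0 ?_ ?_ _
      ⟨a, ha, rfl⟩ x hx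
    · rintro _ ⟨a, ha, rfl⟩ _ ⟨b, hb, rfl⟩
      exact congrArg Units.val (hcomm a ha b hb)
    · rintro _ ⟨a, ha, rfl⟩; exact hinj a
    · rintro _ ⟨a, ha, rfl⟩; exact hUs a ha
    · intro W hW hs
      exact hUmin' W hW (fun a ha => hs _ ⟨a, ha, rfl⟩)
  -- translates
  have hdiv : ∀ s : Finset G, st (s.sup fun g => U.map (ρ g : V →ₗ[ZMod p] V)) ∧
      Module.finrank (ZMod p) U ∣
      Module.finrank (ZMod p) (s.sup fun g => U.map (ρ g : V →ₗ[ZMod p] V) : Submodule (ZMod p) V) := by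
    intro s
    induction s using Finset.induction_on with
    | empty =>
      constructor
      · intro a _ x hx
        have hx' : x = 0 := by simpa using hx
        rw [hx', map_zero]
        exact Submodule.zero_mem _
      · rw [Finset.sup_empty, finrank_bot]
        exact dvd_zero _
    | insert g s _ ih =>
      rw [Finset.sup_insert]
      set W := s.sup fun g => U.map (ρ g : V →ₗ[ZMod p] V) with hW
      set gU := U.map (ρ g : V →ₗ[ZMod p] V) with hgU
      have hgUs : st gU := hmap_st g U hUs
      have hgr : Module.finrank (ZMod p) gU = Module.finrank (ZMod p) U :=
        (LinearEquiv.finrank_eq (Submodule.equivMapOfInjective _ (hinj g) U)).symm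
      constructor
      · intro a ha x hx
        obtain ⟨y, hy, z, hz, rfl⟩ := Submodule.mem_sup.1 hx
        rw [map_add]
        exact Submodule.add_mem_sup (hgUs a ha y hy) (ih.1 a ha z hz)
      · have hinf_st : st (gU ⊓ W) := fun a ha x hx => ⟨hgUs a ha x hx.1, ih.1 a ha x hx.2⟩
        have hle : (gU ⊓ W).map (ρ g⁻¹ : V →ₗ[ZMod p] V) ≤ U := by
          rintro _ ⟨_, ⟨⟨x, hx, rfl⟩, _⟩, rfl⟩
          rw [hinv']; exact hx
        have key := Submodule.finrank_sup_add_finrank_inf_eq gU W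
        rcases hUmin' _ hle (hmap_st _ _ hinf_st) with h1 | h1
        · replace h1 := hbot _ _ h1
          rw [h1, finrank_bot, add_zero, hgr] at key
          rw [key]
          exact dvd_add dvd_rfl ih.2
        · have : gU ⊔ W = W := by
            rw [sup_eq_right]
            rintro _ ⟨x, hx, rfl⟩
            have hx' : x ∈ (gU ⊓ W).map (ρ g⁻¹ : V →ₗ[ZMod p] V) := h1 ▸ hx
            obtain ⟨y, hy, rfl⟩ := hx'
            rw [hinv]; exact hy.2
          rw [this]; exact ih.2
  let _ : Fintype G := Fintype.ofFinite G
  have htop : (Finset.univ.sup fun g => U.map (ρ g : V →ₗ[ZMod p] V) : Submodule (ZMod p) V) = ⊤ := by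
    rcases hirr (Finset.univ.sup fun g => U.map (ρ g : V →ₗ[ZMod p] V)) (fun σ x hx => by
      have : (Finset.univ.sup fun g => U.map (ρ g : V →ₗ[ZMod p] V) : Submodule (ZMod p) V) ≤
        (Finset.univ.sup fun g => U.map (ρ g : V →ₗ[ZMod p] V) : Submodule (ZMod p) V).comap
          (ρ σ : V →ₗ[ZMod p] V) := by
        apply Finset.sup_le
        rintro g _ _ ⟨x, hx, rfl⟩
        rw [Submodule.mem_comap, ← hmul]
        exact Finset.le_sup (f := fun g => U.map (ρ g : V →ₗ[ZMod p] V)) (Finset.mem_univ (σ * g))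
          ⟨x, hx, rfl⟩
      exact this hx) with h1 | h1
    · exfalso
      have h2 : U.map (ρ (1 : G) : V →ₗ[ZMod p] V) ≤ ⊥ := h1 ▸
        Finset.le_sup (f := fun g => U.map (ρ g : V →ₗ[ZMod p] V)) (Finset.mem_univ (1 : G))
      exact hU0 (hbot _ _ (le_bot_iff.1 h2))
    · exact h1
  have hd := (hdiv Finset.univ).2
  rw [htop, finrank_top] at hd
  have hexp : ρ h ^ (p ^ Module.finrank (ZMod p) U - 1) = 1 := by
    apply Units.ext
    apply LinearMap.ext
    intro x
    have hle : (⊤ : Submodule (ZMod p) V) ≤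
        LinearMap.eqLocus ((ρ h ^ (p ^ Module.finrank (ZMod p) U - 1) :
          LinearMap.GeneralLinearGroup (ZMod p) V) : V →ₗ[ZMod p] V) LinearMap.id := by
      rw [← htop]
      apply Finset.sup_le
      rintro g _ _ ⟨x, hx, rfl⟩
      rw [LinearMap.mem_eqLocus, LinearMap.id_apply, ← map_pow, ← hmul]
      have h3 : h ^ (p ^ Module.finrank (ZMod p) U - 1) * g =
          g * (g⁻¹ * h * g) ^ (p ^ Module.finrank (ZMod p) U - 1) := by
        have := conj_pow (i := p ^ Module.finrank (ZMod p) U - 1) (a := g⁻¹) (b := h)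
        rw [inv_inv] at this
        rw [this]; group
      rw [h3, hmul]
      congr 1
      have := hUexp (g⁻¹ * h * g) (by simpa using hN.conj_mem h hh g⁻¹) x hx
      rw [map_pow]
      exact this
    exact hle trivial
  obtain ⟨k, hk⟩ : p ^ Module.finrank (ZMod p) U - 1 ∣ p ^ Module.finrank (ZMod p) V - 1 := by
    obtain ⟨c, hc⟩ := hd
    rw [hc, pow_mul]
    simpa using Nat.sub_dvd_pow_sub_pow (p ^ Module.finrank (ZMod p) U) 1 c
  rw [hk, pow_mul, hexp, one_pow]

/-- normal p-subgroups act trivially -/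
theorem aux_wild (p : ℕ) [Fact p.Prime] (V : Type) [AddCommGroup V] [Module (ZMod p) V] [Finite V]
    (G : Type) [Group G] (ρ : G →* LinearMap.GeneralLinearGroup (ZMod p) V)
    (hirr : ∀ W : Submodule (ZMod p) V,
      (∀ σ : G, ∀ x ∈ W, (ρ σ : V →ₗ[ZMod p] V) x ∈ W) → W = ⊥ ∨ W = ⊤)
    (P : Subgroup G) [hP : P.Normal] (hpP : IsPGroup p P) (h : G) (hh : h ∈ P) : ρ h = 1 := by
  classical
  rcases subsingleton_or_nontrivial V with hV | hV
  · apply Units.ext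
    apply LinearMap.ext
    intro x
    exact Subsingleton.elim _ _
  let W : Submodule (ZMod p) V :=
    { carrier := {x | ∀ a ∈ P, (ρ a : V →ₗ[ZMod p] V) x = x}
      add_mem' := by intro x y hx hy a ha; rw [map_add, hx a ha, hy a ha]
      zero_mem' := by intro a _; simp
      smul_mem' := by intro c x hx a ha; rw [map_smul, hx a ha] }
  have hmul : ∀ a b : G, ∀ x : V, (ρ (a * b) : V →ₗ[ZMod p] V) x =
      (ρ a : V →ₗ[ZMod p] V) ((ρ b : V →ₗ[ZMod p] V) x) := by
    intro a b x; rw [map_mul]; rfl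
  rcases hirr W (by
    intro σ x hx a ha
    have : a * σ = σ * (σ⁻¹ * a * σ) := by group
    rw [← hmul, this, hmul]
    congr 1
    exact hx _ (by simpa using hP.conj_mem a ha σ⁻¹)) with h1 | h1
  · exfalso
    let _ : MulAction P V :=
      { smul := fun a x => (ρ a : V →ₗ[ZMod p] V) x
        one_smul := by intro x; change (ρ ((1 : P) : G) : V →ₗ[ZMod p] V) x = x; simp
        mul_smul := by intro a b x; exact hmul a b x }
    have hdvd : p ∣ Nat.card V := by
      rw [Module.natCard_eq_pow_finrank (K := ZMod p)]
      simp only [Nat.card_zmod]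
      exact dvd_pow_self _ Module.finrank_pos.ne'
    obtain ⟨y, hy, hy0⟩ := hpP.exists_fixed_point_of_prime_dvd_card_of_fixed_point V hdvd
      (a := (0 : V)) (by intro a; exact map_zero (ρ a : V →ₗ[ZMod p] V))
    have : y ∈ W := fun a ha => hy ⟨a, ha⟩
    rw [h1] at this
    exact hy0 ((Submodule.mem_bot _).1 this).symm
  · apply Units.ext
    apply LinearMap.ext
    intro x
    have : x ∈ W := h1 ▸ trivial
    exact this h hh

/-- The residue field with its group action. -/
theorem aux_res (M : Type) [NormedField M] [IsUltrametricDist M] [ProperSpace M]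
    (G : Type) [Group G] [MulSemiringAction G M] (hiso : ∀ (g : G) (x : M), ‖g • x‖ = ‖x‖) :
    ∃ (k : Type) (_ : Field k) (_ : Finite k) (res : M → k) (r : G →* RingAut k),
      (∀ n : ℕ, res (n : M) = n) ∧
      (∀ x y : M, ‖x‖ ≤ 1 → ‖y‖ ≤ 1 → res (x * y) = res x * res y) ∧
      (∀ x y : M, ‖x‖ ≤ 1 → ‖y‖ ≤ 1 → (res x = res y ↔ ‖x - y‖ < 1)) ∧
      (∀ a : k, ∃ x : M, ‖x‖ ≤ 1 ∧ res x = a) ∧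
      (∀ (g : G) (x : M), ‖x‖ ≤ 1 → r g (res x) = res (g • x)) := by
  classical
  let A : ValuationSubring M := (NormedField.valuation (K := M)).valuationSubring
  have hA : ∀ x : M, x ∈ A ↔ ‖x‖ ≤ 1 := by
    intro x
    rw [Valuation.mem_valuationSubring_iff, NormedField.valuation_apply, ← NNReal.coe_le_coe]
    simp
  have hm : ∀ x : A, x ∈ IsLocalRing.maximalIdeal A ↔ ‖(x : M)‖ < 1 := by
    intro x
    rw [Valuation.mem_maximalIdeal_iff, NormedField.valuation_apply, ← NNReal.coe_lt_coe]
    simp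
  let _ : MulSemiringAction G A :=
    { smul := fun g x => ⟨g • (x : M), by rw [hA, hiso, ← hA]; exact x.2⟩
      one_smul := fun x => Subtype.ext (one_smul G (x : M))
      mul_smul := fun g h x => Subtype.ext (mul_smul g h (x : M))
      smul_zero := fun g => Subtype.ext (smul_zero g)
      smul_add := fun g x y => Subtype.ext (smul_add g (x : M) y)
      smul_one := fun g => Subtype.ext (smul_one g)
      smul_mul := fun g x y => Subtype.ext (smul_mul' g (x : M) y) }
  let k := IsLocalRing.ResidueField A
  let res : M → k := fun x => if h : x ∈ A then IsLocalRing.residue A ⟨x, h⟩ else 0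
  have hres : ∀ x : M, ∀ h : x ∈ A, res x = IsLocalRing.residue A ⟨x, h⟩ := fun x h => dif_pos h
  have hsub : ∀ x y : M, ‖x‖ ≤ 1 → ‖y‖ ≤ 1 → (res x = res y ↔ ‖x - y‖ < 1) := by
    intro x y hx hy
    rw [hres x ((hA x).2 hx), hres y ((hA y).2 hy), ← sub_eq_zero, ← map_sub,
      IsLocalRing.residue_eq_zero_iff, hm]
    rfl
  have hsurj : ∀ a : k, ∃ x : M, ‖x‖ ≤ 1 ∧ res x = a := by
    intro a
    obtain ⟨x, rfl⟩ := IsLocalRing.residue_surjective a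
    exact ⟨x, (hA _).1 x.2, hres _ x.2⟩
  have hfin : Finite k := by
    obtain ⟨t, ht, htf, hcov⟩ := (isCompact_closedBall (0 : M) 1).finite_cover_balls
      (zero_lt_one (α := ℝ))
    apply Set.finite_univ_iff.1
    refine (htf.image res).subset ?_
    intro a _
    obtain ⟨x, hx, rfl⟩ := hsurj a
    have := hcov (by simpa using hx : x ∈ Metric.closedBall (0 : M) 1)
    simp only [Set.mem_iUnion, Metric.mem_ball, exists_prop] at this
    obtain ⟨y, hy, hxy⟩ := this
    refine ⟨y, hy, ?_⟩
    rw [hsub y x (by simpa using ht hy) hx, ← dist_eq_norm, dist_comm]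
    exact hxy
  refine ⟨k, inferInstance, hfin, res, MulSemiringAction.toRingAut G k, ?_, ?_, hsub, hsurj, ?_⟩
  · intro n
    have h : (n : M) ∈ A := natCast_mem A n
    rw [hres _ h, ← map_natCast (IsLocalRing.residue A) n]
    rfl
  · intro x y hx hy
    rw [hres x ((hA x).2 hx), hres y ((hA y).2 hy), ← map_mul,
      hres _ (A.mul_mem _ _ ((hA x).2 hx) ((hA y).2 hy))]
    rfl
  · intro g x hx
    rw [hres x ((hA x).2 hx), hres (g • x) ((hA _).2 (by rwa [hiso]))]
    rfl

/-- Ring automorphisms of a finite field of characteristic `p` are powers of one another. -/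
theorem aux_frob (p : ℕ) [Fact p.Prime] (k : Type) [Field k] [Finite k] (hp : (p : k) = 0) :
    IsCyclic (RingAut k) ∧ ∀ f : RingAut k, ∃ a : ℕ, ∀ x : k, f x = x ^ (p ^ a) := by
  have : CharP k p := (CharP.charP_iff_prime_eq_zero Fact.out).2 hp
  let _ : Algebra (ZMod p) k := ZMod.algebra k p
  let T : RingAut k →* (k ≃ₐ[ZMod p] k) :=
    { toFun := fun f => AlgEquiv.ofRingEquiv (f := f) (fun x => by
        exact congrArg (fun g : ZMod p →+* k => g x)
          (Subsingleton.elim ((f : k →+* k).comp (algebraMap (ZMod p) k)) (algebraMap (ZMod p) k)))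
      map_one' := by ext; rfl
      map_mul' := by intro f g; ext; rfl }
  have hT : Function.Injective T := by
    intro f g h
    ext x
    exact DFunLike.congr_fun h x
  constructor
  · exact isCyclic_of_injective T hT
  · intro f
    obtain ⟨a, ha⟩ := (FiniteField.bijective_frobeniusAlgEquivOfAlgebraic_pow (ZMod p) k).2 (T f)
    refine ⟨a, fun x => ?_⟩
    have h1 : T f x = f x := rfl
    rw [← h1, ← ha]
    simp only [AlgEquiv.coe_pow, FiniteField.coe_frobeniusAlgEquivOfAlgebraic_iterate, ZMod.card]

/-- prime-to-p elements of wild inertia are trivial -/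
theorem aux_trivial (M : Type) [NormedField M] [IsUltrametricDist M]
    (σ : M →+ M) (hσ : ∀ x, x ≠ 0 → ‖σ x - x‖ < ‖x‖) (m : ℕ) (hm : ‖(m : M)‖ = 1)
    (h1 : ∀ x, σ^[m] x = x) (x : M) : σ x = x := by
  by_contra hne
  set d := σ x - x with hd
  have hd0 : d ≠ 0 := sub_ne_zero.2 hne
  have hle : ∀ y, ‖σ y - y‖ ≤ ‖y‖ := by
    intro y
    by_cases hy : y = 0
    · simp [hy]
    · exact (hσ y hy).le
  have hnorm : ∀ y, ‖σ y‖ ≤ ‖y‖ := by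
    intro y
    have : σ y = (σ y - y) + y := by abel
    rw [this]
    exact (IsUltrametricDist.norm_add_le_max _ _).trans (max_le (hle y) le_rfl)
  have hit : ∀ i : ℕ, ‖σ^[i] d - d‖ < ‖d‖ := by
    intro i
    induction i with
    | zero => simpa using hd0
    | succ i ih =>
      rw [Function.iterate_succ_apply']
      have : σ (σ^[i] d) - d = σ (σ^[i] d - d) + (σ d - d) := by rw [map_sub]; abel
      rw [this]
      exact (IsUltrametricDist.norm_add_le_max _ _).trans_lt
        (max_lt ((hnorm _).trans_lt ih) (hσ d hd0))
  -- telescoping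
  have htel : ∀ j : ℕ, (σ^[j] x - x = (∑ i ∈ Finset.range j, (σ^[i] d - d)) + (j : M) * d) := by
    intro j
    induction j with
    | zero => simp
    | succ j ih =>
      rw [Finset.sum_range_succ]
      have h2 : σ^[j + 1] x - x = σ^[j] d + (σ^[j] x - x) := by
        rw [Function.iterate_succ_apply, hd, iterate_map_sub]; abel
      rw [h2, ih]; push_cast; ring
  have h3 := htel m
  rw [h1, sub_self] at h3
  have h4 : (m : M) * d = - ∑ i ∈ Finset.range m, (σ^[i] d - d) := by
    rw [eq_neg_iff_add_eq_zero, add_comm]; exact h3.symm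
  have h5 : ‖(m : M) * d‖ < ‖d‖ := by
    rw [h4, norm_neg]
    rcases Finset.eq_empty_or_nonempty (Finset.range m) with h | h
    · rw [h]; simpa using hd0
    · obtain ⟨i, _, hi⟩ := IsUltrametricDist.exists_norm_finsetSum_le (Finset.range m)
        (fun i => σ^[i] d - d)
      exact hi.trans_lt (hit i)
  rw [norm_mul, hm, one_mul] at h5
  exact lt_irrefl _ h5

theorem aux_local (p : ℕ) [hpp : Fact p.Prime] (M : Type) [NormedField M] [IsUltrametricDist M]
    [ProperSpace M] (hpM : ‖(p : M)‖ < 1)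
    (G : Type) [Group G] [Finite G] [MulSemiringAction G M] [FaithfulSMul G M]
    (hiso : ∀ (g : G) (x : M), ‖g • x‖ = ‖x‖)
    (e : ℕ) (he0 : e ≠ 0) (hpe : ¬ p ∣ e) (ζ : M) (hζ : IsPrimitiveRoot ζ e) :
    ∃ (P I : Subgroup G), P.Normal ∧ I.Normal ∧ IsPGroup p P ∧
      (∀ a ∈ I, ∀ b ∈ I, ∃ c ∈ P, a * b = b * a * c) ∧
      (∀ g : G, g • ζ = ζ → ∀ σ ∈ I, ∃ k : ℕ, ∃ c ∈ P, g * σ * g⁻¹ = σ ^ (e * k + 1) * c) ∧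
      ∃ (C : Type) (_ : Group C) (_ : IsCyclic C) (r : G →* C), r.ker = I := by
  classical
  obtain ⟨k, _, _, res, r, hnat, hmul, hsub, hsurj, hr⟩ := aux_res M G hiso
  have hle1 : ∀ n : ℕ, ‖(n : M)‖ ≤ 1 := fun n => IsUltrametricDist.norm_natCast_le_one M n
  have hp0 : (p : k) = 0 := by
    have := (hsub p 0 (hle1 p) (by simp)).2 (by simpa using hpM)
    have h0 := hnat 0
    rw [hnat] at this
    rw [this]; simpa using h0
  have hres0 : res 0 = 0 := by simpa using hnat 0
  have hres1 : res 1 = 1 := by simpa using hnat 1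
  have : CharP k p := (CharP.charP_iff_prime_eq_zero hpp.out).2 hp0
  have hcop : ∀ m : ℕ, ¬ p ∣ m → ‖(m : M)‖ = 1 := by
    intro m hm
    refine le_antisymm (hle1 m) ?_
    by_contra hlt
    push Not at hlt
    have := (hsub m 0 (hle1 m) (by simp)).2 (by simpa using hlt)
    rw [hnat, hres0] at this
    exact hm ((CharP.cast_eq_zero_iff k p m).1 this)
  obtain ⟨hcyc, hfrob⟩ := aux_frob p k hp0
  -- the tame characters
  have hn1 : ∀ (g : G) (x : M), x ≠ 0 → ‖(g • x) / x‖ = 1 := by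
    intro g x hx
    rw [norm_div, hiso, div_self (norm_ne_zero_iff.2 hx)]
  have hs0 : ∀ (g : G) (x : M), x ≠ 0 → g • x ≠ 0 := by
    intro g x hx h
    exact hx ((smul_eq_zero_iff_eq g).1 h)
  have hI : ∀ σ ∈ r.ker, ∀ u : M, ‖u‖ = 1 → res (σ • u) = res u := by
    intro σ hσ u hu
    rw [← hr σ u hu.le, (MonoidHom.mem_ker).1 hσ]
    rfl
  have hunit : ∀ u : M, ‖u‖ = 1 → res u ≠ 0 := by
    intro u hu h
    rw [← hres0, hsub u 0 hu.le (by simp)] at h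
    simp [hu] at h
  let t : G → M → k := fun σ x => res ((σ • x) / x)
  -- independence of the element up to units
  have ht_unit : ∀ σ ∈ r.ker, ∀ x u : M, x ≠ 0 → ‖u‖ = 1 → t σ (u * x) = t σ x := by
    intro σ hσ x u hx hu
    have hu0 : u ≠ 0 := by intro h; simp [h] at hu
    have h1 : (σ • (u * x)) / (u * x) = ((σ • u) / u) * ((σ • x) / x) := by
      rw [smul_mul']; field_simp
    have h2 : res ((σ • u) / u) = 1 := by
      have h3 : res (((σ • u) / u) * u) = res ((σ • u) / u) * res u :=
        hmul _ _ (hn1 σ u hu0).le hu.le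
      rw [div_mul_cancel₀ _ hu0, hI σ hσ u hu] at h3
      have := hunit u hu
      field_simp at h3
      exact h3.symm
    change res _ = res _
    rw [h1, hmul _ _ (hn1 σ u hu0).le (hn1 σ x hx).le, h2, one_mul]
  have ht_g : ∀ σ ∈ r.ker, ∀ (g : G) (x : M), x ≠ 0 → t σ (g • x) = t σ x := by
    intro σ hσ g x hx
    have := ht_unit σ hσ x _ hx (hn1 g x hx)
    rwa [div_mul_cancel₀ _ hx] at this
  have ht_mul : ∀ σ ∈ r.ker, ∀ (τ : G) (x : M), x ≠ 0 → t (σ * τ) x = t σ x * t τ x := by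
    intro σ hσ τ x hx
    rw [← ht_g σ hσ τ x hx]
    change res _ = res _ * res _
    rw [← hmul _ _ (hn1 σ _ (hs0 τ x hx)).le (hn1 τ x hx).le, mul_smul,
      div_mul_div_cancel₀ (hs0 τ x hx)]
  have ht_conj : ∀ σ ∈ r.ker, ∀ (g : G) (x : M), x ≠ 0 → t (g * σ * g⁻¹) x = r g (t σ x) := by
    intro σ hσ g x hx
    rw [← ht_g σ hσ g⁻¹ x hx]
    change res _ = r g (res _)
    rw [hr g _ (hn1 σ _ (hs0 g⁻¹ x hx)).le, smul_div₀', smul_inv_smul, mul_smul, mul_smul]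
  let θ : r.ker →* ({x : M // x ≠ 0} → k) :=
    { toFun := fun σ x => t σ x
      map_one' := by
        funext x
        change res _ = 1
        rw [OneMemClass.coe_one, one_smul, div_self x.2, hres1]
      map_mul' := fun σ τ => funext fun x => ht_mul σ σ.2 τ x x.2 }
  let P : Subgroup G := θ.ker.map r.ker.subtype
  have hPmem : ∀ g : G, g ∈ P ↔ g ∈ r.ker ∧ ∀ x : M, x ≠ 0 → t g x = 1 := by
    intro g
    constructor
    · rintro ⟨σ, hσ, rfl⟩
      refine ⟨σ.2, fun x hx => ?_⟩
      exact congrFun (MonoidHom.mem_ker.1 hσ) ⟨x, hx⟩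
    · rintro ⟨h1, h2⟩
      exact ⟨⟨g, h1⟩, MonoidHom.mem_ker.2 (funext fun x => h2 x x.2), rfl⟩
  have hker_conj : ∀ σ ∈ r.ker, ∀ g : G, g * σ * g⁻¹ ∈ r.ker := fun σ hσ g =>
    (inferInstance : r.ker.Normal).conj_mem σ hσ g
  have hθ : ∀ a b : r.ker, θ a = θ b → ∃ c ∈ P, (a : G) = b * c := by
    intro a b hab
    refine ⟨((b⁻¹ * a : r.ker) : G), ⟨b⁻¹ * a, ?_, rfl⟩, by simp⟩
    rw [SetLike.mem_coe, MonoidHom.mem_ker, map_mul, hab, ← map_mul, inv_mul_cancel, map_one]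
  have hwild : ∀ g ∈ P, ∀ x : M, x ≠ 0 → ‖g • x - x‖ < ‖x‖ := by
    intro g hg x hx
    have h1 := ((hPmem g).1 hg).2 x hx
    change res _ = 1 at h1
    rw [← hres1, hsub _ _ (hn1 g x hx).le (by simp), div_sub_one hx, norm_div,
      div_lt_one (norm_pos_iff.2 hx)] at h1
    exact h1
  refine ⟨P, r.ker, ⟨?_⟩, inferInstance, ?_, ?_, ?_, RingAut k, inferInstance, hcyc, r, rfl⟩
  · intro σ hσ g
    rw [hPmem] at hσ ⊢
    refine ⟨hker_conj σ hσ.1 g, fun x hx => ?_⟩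
    rw [ht_conj σ hσ.1 g x hx, hσ.2 x hx, map_one]
  · rintro ⟨g, hg⟩
    obtain ⟨a, m, hm, hgm⟩ := Nat.exists_eq_pow_mul_and_not_dvd (orderOf_pos g).ne' p
      hpp.out.ne_one
    refine ⟨a, Subtype.ext ?_⟩
    change g ^ p ^ a = 1
    have hgp : g ^ p ^ a ∈ P := P.pow_mem hg _
    apply FaithfulSMul.eq_of_smul_eq_smul (α := M)
    intro x
    rw [one_smul]
    refine aux_trivial M (DistribSMul.toAddMonoidHom M (g ^ p ^ a)) (hwild _ hgp) m (hcop m hm) ?_ x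
    intro y
    have : ∀ i : ℕ, (DistribSMul.toAddMonoidHom M (g ^ p ^ a))^[i] y = (g ^ p ^ a) ^ i • y := by
      intro i
      induction i with
      | zero => simp
      | succ i ih => rw [Function.iterate_succ_apply', ih, pow_succ' _ i, mul_smul]; rfl
    rw [this, ← pow_mul, ← hgm, pow_orderOf_eq_one, one_smul]
  · intro a ha b hb
    exact hθ (⟨a, ha⟩ * ⟨b, hb⟩) (⟨b, hb⟩ * ⟨a, ha⟩) (by rw [map_mul, map_mul, mul_comm])
  · intro g hgζ σ hσ
    obtain ⟨a, ha⟩ := hfrob (r g)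
    have hζn : ‖ζ‖ = 1 := by
      have := congrArg norm hζ.pow_eq_one
      rw [norm_pow, norm_one] at this
      exact (pow_eq_one_iff_of_nonneg (norm_nonneg _) he0).1 this
    have hζpow : ∀ i, ‖ζ ^ i‖ = 1 := fun i => by rw [norm_pow, hζn, one_pow]
    have hrpow : ∀ i, res (ζ ^ i) = res ζ ^ i := by
      intro i
      induction i with
      | zero => simpa using hres1
      | succ i ih => rw [pow_succ, hmul _ _ (hζpow i).le hζn.le, ih, pow_succ]
    have hprim : ∀ i, res ζ ^ i = 1 → e ∣ i := by
      intro i hi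
      rw [← hrpow, ← hres1, hsub _ _ (hζpow i).le (by simp)] at hi
      rw [← hζ.pow_eq_one_iff_dvd]
      have hη := aux_trivial M (AddMonoidHom.mulLeft (ζ ^ i)) (by
        intro x hx
        have : AddMonoidHom.mulLeft (ζ ^ i) x - x = (ζ ^ i - 1) * x := by
          simp only [AddMonoidHom.coe_mulLeft]; ring
        rw [this, norm_mul]
        exact mul_lt_of_lt_one_left (norm_pos_iff.2 hx) hi) e (hcop e hpe) (by
        intro x
        have : ∀ j : ℕ, (AddMonoidHom.mulLeft (ζ ^ i))^[j] x = (ζ ^ i) ^ j * x := by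
          intro j
          induction j with
          | zero => simp
          | succ j ih => rw [Function.iterate_succ_apply', ih, AddMonoidHom.coe_mulLeft]; ring
        rw [this, ← pow_mul, mul_comm i e, pow_mul, hζ.pow_eq_one, one_pow, one_mul]) 1
      simpa using hη
    have h1 := hr g ζ hζn.le
    rw [hgζ, ha] at h1
    have h2 : e ∣ p ^ a - 1 := by
      apply hprim
      have h3 : p ^ a = (p ^ a - 1) + 1 := (Nat.sub_add_cancel (Nat.one_le_pow _ _ hpp.out.pos)).symm
      rw [h3, pow_succ] at h1
      exact mul_right_cancel₀ (hunit ζ hζn) (by rw [h1, one_mul])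
    obtain ⟨j, hj⟩ := h2
    refine ⟨j, ?_⟩
    rw [← hj, Nat.sub_add_cancel (Nat.one_le_pow _ _ hpp.out.pos)]
    refine hθ ⟨g * σ * g⁻¹, hker_conj σ hσ g⟩ (⟨σ, hσ⟩ ^ (p ^ a)) ?_
    rw [map_pow]
    funext x
    change t (g * σ * g⁻¹) x = t σ x ^ p ^ a
    rw [ht_conj σ hσ g x x.2, ha]

theorem aux_rep (p : ℕ) [Fact p.Prime] (V : Type) [AddCommGroup V] [Module (ZMod p) V] [Finite V]
    (G : Type) [Group G] [Finite G] (ρ : G →* LinearMap.GeneralLinearGroup (ZMod p) V)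
    (hirr : ∀ W : Submodule (ZMod p) V,
      (∀ σ : G, ∀ x ∈ W, (ρ σ : V →ₗ[ZMod p] V) x ∈ W) → W = ⊥ ∨ W = ⊤)
    (e : ℕ) (he : e = p ^ Module.finrank (ZMod p) V - 1)
    (N P I : Subgroup G) (hN : N.Normal) (hP : P.Normal) (hI : I.Normal) (hPp : IsPGroup p P)
    (h1 : ∀ a ∈ I, ∀ b ∈ I, ∃ c ∈ P, a * b = b * a * c)
    (h2 : ∀ g ∈ N, ∀ σ ∈ I, ∃ k : ℕ, ∃ c ∈ P, g * σ * g⁻¹ = σ ^ (e * k + 1) * c)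
    (h3 : ∃ (C : Type) (_ : Group C) (_ : IsCyclic C) (r : G →* C), r.ker = I) :
    (∀ a ∈ N, ∀ b ∈ N, ρ a * ρ b = ρ b * ρ a) ∧ ∀ a ∈ N, ρ a ^ e = 1 := by
  have hPt := aux_wild p V G ρ hirr P hPp
  have hIc : ∀ a ∈ I, ∀ b ∈ I, ρ a * ρ b = ρ b * ρ a := by
    intro a ha b hb
    obtain ⟨c, hc, h⟩ := h1 a ha b hb
    rw [← map_mul, h, map_mul, hPt c hc, mul_one, map_mul]
  have hIe : ∀ a ∈ I, ρ a ^ e = 1 := by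
    intro a ha
    rw [he]
    exact aux_expo p V G ρ hirr I hIc a ha
  have hNI : ∀ g ∈ N, ∀ σ ∈ I, Commute (ρ g) (ρ σ) := by
    intro g hg σ hσ
    obtain ⟨k, c, hc, h⟩ := h2 g hg σ hσ
    have h4 := congrArg ρ h
    rw [map_mul, map_mul, map_mul, map_pow, map_inv, hPt c hc, mul_one, pow_succ, pow_mul,
      hIe σ hσ, one_pow, one_mul] at h4
    exact mul_inv_eq_iff_eq_mul.1 h4
  have hNc : ∀ a ∈ N, ∀ b ∈ N, ρ a * ρ b = ρ b * ρ a := by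
    obtain ⟨C, _, _, r, hr⟩ := h3
    obtain ⟨⟨_, φ, hφ, rfl⟩, hgen⟩ := IsCyclic.exists_zpow_surjective (G := N.map r)
    have hdec : ∀ a ∈ N, ∃ j : ℤ, ∃ σ ∈ I, a = φ ^ j * σ := by
      intro a ha
      obtain ⟨j, hj⟩ := hgen ⟨r a, a, ha, rfl⟩
      refine ⟨j, (φ ^ j)⁻¹ * a, ?_, by group⟩
      have hj' : (r φ) ^ j = r a := congrArg Subtype.val hj
      rw [← hr, MonoidHom.mem_ker, map_mul, map_inv, map_zpow, hj', inv_mul_cancel]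
    intro a ha b hb
    obtain ⟨i, σ, hσ, rfl⟩ := hdec a ha
    obtain ⟨j, τ, hτ, rfl⟩ := hdec b hb
    have c1 : Commute (ρ φ) (ρ σ) := hNI φ hφ σ hσ
    have c2 : Commute (ρ φ) (ρ τ) := hNI φ hφ τ hτ
    have c3 : Commute (ρ σ) (ρ τ) := hIc σ hσ τ hτ
    rw [map_mul, map_mul, map_zpow, map_zpow]
    exact Commute.mul_left
      (Commute.mul_right ((Commute.refl (ρ φ)).zpow_zpow i j) (c2.zpow_left i))
      (Commute.mul_right (c1.symm.zpow_right j) c3)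
  refine ⟨hNc, fun a ha => ?_⟩
  rw [he]
  exact aux_expo p V G ρ hirr N hNc a ha

theorem aux_kummer (K M : Type) [Field K] [Field M] [Algebra K M] [FiniteDimensional K M]
    (Γ : Type) [Group Γ] (ρ : (M ≃ₐ[K] M) →* Γ) (e : ℕ) (he : e ≠ 0) (ζ : M)
    (hζ : IsPrimitiveRoot ζ e) (N : Subgroup (M ≃ₐ[K] M)) (hN : ∀ g ∈ N, g ζ = ζ)
    (hc : ∀ a ∈ N, ∀ b ∈ N, ρ a * ρ b = ρ b * ρ a) (hexp : ∀ a ∈ N, ρ a ^ e = 1)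
    (σ : M ≃ₐ[K] M) (hσ : σ ∈ N) (hσ1 : ρ σ ≠ 1) :
    ∃ y : M, (∀ g ∈ N, g (y ^ e) = y ^ e) ∧ σ y ≠ y := by
  classical
  have hne : NeZero e := ⟨he⟩
  let H := N.map ρ
  let _ : CommGroup H :=
    { (inferInstance : Group H) with
      mul_comm := by
        rintro ⟨_, a, ha, rfl⟩ ⟨_, b, hb, rfl⟩
        exact Subtype.ext (hc a ha b hb) }
  have hHe : ∀ x : H, x ^ e = 1 := by
    rintro ⟨_, a, ha, rfl⟩
    exact Subtype.ext (hexp a ha)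
  have : Finite H := by
    have : Finite N := inferInstance
    exact Finite.of_surjective (fun a : N => (⟨ρ a, a, a.2, rfl⟩ : H)) (by
      rintro ⟨_, a, ha, rfl⟩; exact ⟨⟨a, ha⟩, rfl⟩)
  have hroots : HasEnoughRootsOfUnity M e :=
    { prim := ⟨ζ, hζ⟩
      cyc := inferInstance }
  have hroots' : HasEnoughRootsOfUnity M (Monoid.exponent H) :=
    HasEnoughRootsOfUnity.of_dvd M (Monoid.exponent_dvd_of_forall_pow_eq_one hHe)
  obtain ⟨χ, hχ⟩ := CommGroup.exists_apply_ne_one_of_hasEnoughRootsOfUnity H M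
    (a := ⟨ρ σ, σ, hσ, rfl⟩) (fun h => hσ1 (congrArg Subtype.val h))
  let q : N →* H :=
    { toFun := fun a => ⟨ρ a, a, a.2, rfl⟩
      map_one' := Subtype.ext (map_one ρ)
      map_mul' := fun a b => Subtype.ext (map_mul ρ (a : M ≃ₐ[K] M) b) }
  let c : N →* Mˣ := χ.comp q
  have hcσ : c ⟨σ, hσ⟩ ≠ 1 := hχ
  have hce : ∀ g, c g ^ e = 1 := by
    intro g
    change χ (q g) ^ e = 1
    rw [← map_pow, hHe, map_one]
  have hfix : ∀ g ∈ N, ∀ h : N, g (c h : M) = c h := by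
    intro g hg h
    have h1 : (c h : M) ^ e = 1 := by
      rw [← Units.val_pow_eq_pow_val, hce, Units.val_one]
    obtain ⟨i, _, hi⟩ := hζ.eq_pow_of_pow_eq_one h1
    rw [← hi, map_pow, hN g hg]
  let _ : Fintype N := Fintype.ofFinite N
  let R : M → M := fun x => ∑ g : N, (((c g)⁻¹ : Mˣ) : M) * (g : M ≃ₐ[K] M) x
  obtain ⟨x, hx⟩ : ∃ x, R x ≠ 0 := by
    by_contra hcon
    push Not at hcon
    have hli := (linearIndependent_monoidHom M M).comp
      (fun g : N => (((g : M ≃ₐ[K] M) : M →ₐ[K] M) : M →* M)) (by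
        intro g h hgh
        apply Subtype.ext
        ext x
        exact DFunLike.congr_fun hgh x)
    have := Fintype.linearIndependent_iff.1 hli (fun g => (((c g)⁻¹ : Mˣ) : M)) (by
      funext x
      simpa [R, Finset.sum_apply] using hcon x) 1
    exact Units.ne_zero _ this
  have htr : ∀ h : N, (h : M ≃ₐ[K] M) (R x) = (c h : M) * R x := by
    intro h
    simp only [R, map_sum, map_mul, Finset.mul_sum]
    refine Fintype.sum_equiv (Equiv.mulLeft h) _ _ ?_
    intro g
    have h1 : (h : M ≃ₐ[K] M) (((c g)⁻¹ : Mˣ) : M) = (((c g)⁻¹ : Mˣ) : M) := by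
      rw [← map_inv]; exact hfix h h.2 _
    rw [h1, Equiv.coe_mulLeft, map_mul, mul_inv, Units.val_mul, ← mul_assoc, ← mul_assoc]
    simp
  refine ⟨R x, ?_, ?_⟩
  · intro g hg
    have h1 := htr ⟨g, hg⟩
    rw [map_pow]
    change (g (R x)) ^ e = _
    have h1' : g (R x) = _ := h1
    rw [h1', mul_pow, ← Units.val_pow_eq_pow_val, hce, Units.val_one, one_mul]
  · intro h
    have h1 : σ (R x) = _ := htr ⟨σ, hσ⟩
    rw [h] at h1
    apply hcσ
    apply Units.ext
    exact mul_right_cancel₀ hx (by rw [← h1, Units.val_one, one_mul])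

theorem aux_padic (p : ℕ) [hpp : Fact p.Prime] (K M : Type) [Field K] [Field M] [Algebra K M]
    [Algebra ℚ_[p] K] [Algebra ℚ_[p] M] [IsScalarTower ℚ_[p] K M] [FiniteDimensional ℚ_[p] M]
    [FiniteDimensional K M]
    (e : ℕ) (he0 : e ≠ 0) (hpe : ¬ p ∣ e) (ζ : M) (hζ : IsPrimitiveRoot ζ e) :
    ∃ (P I : Subgroup (M ≃ₐ[K] M)), P.Normal ∧ I.Normal ∧ IsPGroup p P ∧
      (∀ a ∈ I, ∀ b ∈ I, ∃ c ∈ P, a * b = b * a * c) ∧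
      (∀ g : (M ≃ₐ[K] M), g • ζ = ζ → ∀ σ ∈ I, ∃ k : ℕ, ∃ c ∈ P,
        g * σ * g⁻¹ = σ ^ (e * k + 1) * c) ∧
      ∃ (C : Type) (_ : Group C) (_ : IsCyclic C) (r : (M ≃ₐ[K] M) →* C), r.ker = I := by
  let _ : NormedField M := spectralNorm.normedField ℚ_[p] M
  have hnorm : ∀ x : M, ‖x‖ = spectralNorm ℚ_[p] M x := fun x => rfl
  let _ : NormedSpace ℚ_[p] M := spectralNorm.normedSpace ℚ_[p] M
  have : IsUltrametricDist M := IsUltrametricDist.isUltrametricDist_of_isNonarchimedean_norm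
    (isNonarchimedean_spectralNorm (K := ℚ_[p]) (L := M))
  have : ProperSpace M := FiniteDimensional.proper ℚ_[p] M
  refine aux_local p M ?_ (M ≃ₐ[K] M) ?_ e he0 hpe ζ hζ
  · rw [hnorm, ← map_natCast (algebraMap ℚ_[p] M) p, spectralNorm_extends]
    exact Padic.norm_p_lt_one
  · intro g x
    rw [hnorm, hnorm, spectralNorm_eq_of_equiv (g.restrictScalars ℚ_[p]) x]
    rfl

/-- Every continuous (for the Krull topology on `Gal(Ω / K)` and the discrete topology on
`GL(V)`) irreducible `n`-dimensional `𝔽_p`-representation of the absolute Galois group of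
a finite extension `K` of `ℚ_p` factors through `Gal(L_n / K)`, i.e. `Gal(Ω / L_n)` lies
in its kernel. -/
theorem stmt_17 (p : ℕ) [hp : Fact p.Prime] (n : ℕ) (hn : 1 ≤ n)
    (Ω : Type) [Field Ω] [Algebra ℚ_[p] Ω] [IsAlgClosure ℚ_[p] Ω]
    (K : IntermediateField ℚ_[p] Ω) [FiniteDimensional ℚ_[p] ↥K]
    (ζ : Ω) (hζ : IsPrimitiveRoot ζ (p ^ n - 1))
    (Kn : IntermediateField ↥K Ω) (hKn : Kn = IntermediateField.adjoin ↥K {ζ})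
    (Ln : IntermediateField ↥K Ω)
    (hLn : Ln = Kn ⊔ IntermediateField.adjoin ↥K {x : Ω | x ^ (p ^ n - 1) ∈ Kn})
    (V : Type) [AddCommGroup V] [Module (ZMod p) V]
    (hdim : Module.finrank (ZMod p) V = n)
    (ρ : (Ω ≃ₐ[↥K] Ω) →* LinearMap.GeneralLinearGroup (ZMod p) V)
    (hcont : @Continuous (Ω ≃ₐ[↥K] Ω) (LinearMap.GeneralLinearGroup (ZMod p) V)
      inferInstance ⊥ ρ)
    (hirr : ∀ W : Submodule (ZMod p) V,
      (∀ σ : Ω ≃ₐ[↥K] Ω, ∀ x ∈ W, (ρ σ : V →ₗ[ZMod p] V) x ∈ W) → W = ⊥ ∨ W = ⊤) :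
    Ln.fixingSubgroup ≤ ρ.ker := by
  classical
  have hVf : Module.Finite (ZMod p) V := Module.finite_of_finrank_pos (by omega)
  have hVfin : Finite V := Module.finite_of_finite (ZMod p)
  have halg : Algebra.IsAlgebraic ℚ_[p] Ω := IsAlgClosure.isAlgebraic
  have halgK : Algebra.IsAlgebraic K Ω := Algebra.IsAlgebraic.tower_top (K := ℚ_[p]) K
  have hac : IsAlgClosed Ω := IsAlgClosure.isAlgClosed ℚ_[p]
  have hch : CharZero K := charZero_of_injective_algebraMap (algebraMap ℚ_[p] K).injective
  have hnormal : Normal K Ω := normal_iff.2 fun x =>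
    ⟨(Algebra.IsAlgebraic.isAlgebraic x).isIntegral, IsAlgClosed.splits _⟩
  have hgal : IsGalois K Ω := ⟨⟩
  have hpn : 1 < p ^ n := Nat.one_lt_pow (by omega) hp.out.one_lt
  set e := p ^ n - 1 with he
  have he0 : e ≠ 0 := by omega
  have hpe : ¬ p ∣ e := by
    intro h
    have h1 : p ∣ p ^ n := dvd_pow_self p (by omega)
    have h2 : p ∣ 1 := by
      have := Nat.dvd_sub h1 h
      rwa [show p ^ n - e = 1 by omega] at this
    exact hp.out.one_lt.ne' (Nat.dvd_one.1 h2)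
  have hζKn : ζ ∈ Kn := by
    rw [hKn]; exact IntermediateField.mem_adjoin_simple_self _ ζ
  have hKnfin : FiniteDimensional K Kn := by
    rw [hKn]
    exact IntermediateField.adjoin.finiteDimensional (Algebra.IsAlgebraic.isAlgebraic ζ).isIntegral
  -- a finite Galois layer
  have hopen : ((ρ.ker ⊓ Kn.fixingSubgroup : Subgroup (Ω ≃ₐ[↥K] Ω)) : Set (Ω ≃ₐ[↥K] Ω)) ∈
      nhds (1 : Ω ≃ₐ[↥K] Ω) := by
    rw [Subgroup.coe_inf]
    refine Filter.inter_mem ?_ ?_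
    · let _ : TopologicalSpace (LinearMap.GeneralLinearGroup (ZMod p) V) := ⊥
      have : DiscreteTopology (LinearMap.GeneralLinearGroup (ZMod p) V) := ⟨rfl⟩
      have hcont' : Continuous ρ := hcont
      have := (isOpen_discrete ({1} : Set (LinearMap.GeneralLinearGroup (ZMod p) V))).preimage hcont'
      exact this.mem_nhds (by simp)
    · exact (IntermediateField.fixingSubgroup_isOpen Kn).mem_nhds (one_mem _)
  rw [krullTopology_mem_nhds_one_iff_of_normal] at hopen
  obtain ⟨M, hMfin, hMnorm, hM⟩ := hopen
  have hMker : ∀ τ ∈ M.fixingSubgroup, ρ τ = 1 := fun τ hτ => (hM hτ).1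
  have hKnM : Kn ≤ M := by
    have h1 : M.fixingSubgroup ≤ Kn.fixingSubgroup := fun τ hτ => (hM hτ).2
    rw [← InfiniteGalois.fixedField_fixingSubgroup M,
      ← InfiniteGalois.fixedField_fixingSubgroup Kn]
    intro x hx τ
    exact hx ⟨τ, h1 τ.2⟩
  let res : (Ω ≃ₐ[K] Ω) →* (M ≃ₐ[K] M) := AlgEquiv.restrictNormalHom M
  have hres : ∀ (τ : Ω ≃ₐ[K] Ω) (x : M), ((res τ x : M) : Ω) = τ x := fun τ x =>
    AlgEquiv.restrictNormal_commutes τ M x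
  have hsurj : Function.Surjective res := AlgEquiv.restrictNormalHom_surjective Ω
  have hresker : res.ker ≤ ρ.ker := by
    intro τ hτ
    apply hMker
    intro x
    have := hres τ x
    rw [MonoidHom.mem_ker.1 hτ] at this
    exact this.symm
  let ρ' : (M ≃ₐ[K] M) →* LinearMap.GeneralLinearGroup (ZMod p) V :=
    MonoidHom.liftOfSurjective res hsurj ⟨ρ, hresker⟩
  have hρ' : ∀ τ, ρ' (res τ) = ρ τ := fun τ =>
    MonoidHom.liftOfRightInverse_comp_apply _ _ (Function.rightInverse_surjInv hsurj) ⟨ρ, hresker⟩ τ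
  let ζM : M := ⟨ζ, hKnM hζKn⟩
  have hζM : IsPrimitiveRoot ζM e := IsPrimitiveRoot.of_map_of_injective
    (f := algebraMap M Ω) hζ (algebraMap M Ω).injective
  have hfinQ : FiniteDimensional ℚ_[p] M := FiniteDimensional.trans ℚ_[p] K M
  obtain ⟨P, I, hP, hI, hPp, h1, h2, h3⟩ := aux_padic p K M e he0 hpe ζM hζM
  let N : Subgroup (M ≃ₐ[K] M) := MulAction.stabilizer (M ≃ₐ[K] M) ζM
  have hNmem : ∀ g, g ∈ N ↔ g ζM = ζM := fun g => Iff.rfl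
  have hNnorm : N.Normal := by
    constructor
    intro a ha g
    rw [hNmem] at ha ⊢
    have h4 : (g⁻¹ ζM) ^ e = 1 := by rw [← map_pow, hζM.pow_eq_one, map_one]
    have : NeZero e := ⟨he0⟩
    obtain ⟨i, _, hi⟩ := hζM.eq_pow_of_pow_eq_one h4
    change g (a (g⁻¹ ζM)) = ζM
    rw [← hi, map_pow, ha, hi]
    exact AlgEquiv.apply_symm_apply g ζM
  have hirr' : ∀ W : Submodule (ZMod p) V,
      (∀ σ : M ≃ₐ[K] M, ∀ x ∈ W, (ρ' σ : V →ₗ[ZMod p] V) x ∈ W) → W = ⊥ ∨ W = ⊤ := by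
    intro W hW
    apply hirr W
    intro σ x hx
    rw [← hρ']
    exact hW _ x hx
  obtain ⟨hc, hexp⟩ := aux_rep p V (M ≃ₐ[K] M) ρ' hirr' e (by rw [hdim]) N P I hNnorm hP hI hPp h1
    h2 h3
  intro σ hσ
  rw [MonoidHom.mem_ker]
  by_contra hσ1
  have hσL : ∀ x ∈ Ln, σ x = x := fun x hx => hσ ⟨x, hx⟩
  have hσN : res σ ∈ N := by
    rw [hNmem]
    apply Subtype.ext
    rw [hres]
    exact hσL ζ (by rw [hLn]; exact (le_sup_left : Kn ≤ _) hζKn)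
  obtain ⟨y, hy1, hy2⟩ := aux_kummer K M _ ρ' e he0 ζM hζM N (fun g hg => hg) hc hexp (res σ) hσN
    (by rwa [hρ'])
  apply hy2
  apply Subtype.ext
  rw [hres]
  apply hσL
  rw [hLn]
  refine (le_sup_right : _ ≤ Kn ⊔ _) (IntermediateField.subset_adjoin _ _ ?_)
  change (y : Ω) ^ e ∈ Kn
  rw [← InfiniteGalois.fixedField_fixingSubgroup Kn]
  rintro ⟨τ, hτ⟩
  change τ ((y : Ω) ^ e) = (y : Ω) ^ e
  have h5 : res τ ∈ N := by
    rw [hNmem]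
    apply Subtype.ext
    rw [hres]
    exact hτ ⟨ζ, hζKn⟩
  have h6 := congrArg Subtype.val (hy1 _ h5)
  rw [hres] at h6
  exact h6
end
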